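/- arXiv:2303.13061 — 7 statements merged into one kernel-verified Lean document; each statement's English description precedes it below -/
import Mathlib

section
/- Let P and Q be disjoint finite posets and let P ⊕ Q be their ordinal sum. Then the Hibi ring 𝕜[P ⊕ Q] is isomorphic as a 𝕜-algebra to the tensor product 𝕜[P] ⊗_𝕜 𝕜[Q]; in particular 𝕜[P ⊕ Q] ≅ 𝕜[Q ⊕ P]. -/
/-!
STATEMENT 1: For disjoint finite posets `P`, `Q`, the Hibi ring of the ordinal
sum `P ⊕ Q` (poset on `P ⊔ {z} ⊔ Q` with everything of `P` below `z` below
everything of `Q`) is isomorphic to `𝕜[P] ⊗_𝕜 𝕜[Q]`; in particular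
`𝕜[P ⊕ Q] ≅ 𝕜[Q ⊕ P]`.  The ordinal sum is modelled by the lexicographic sum
`α ⊕ₗ PUnit ⊕ₗ β`.
-/

open scoped NNReal TensorProduct

noncomputable section

def latticeA {α : Type*} (L : Set (α → ℤ)) : Set ((α → ℤ) × ℤ) :=
  (fun v => (v, (1 : ℤ))) '' L

/-- The toric ring `𝕜[P]` of an integral polytope with lattice point set `L`. -/
abbrev toricRing (𝕜 : Type*) [Field 𝕜] {α : Type*} (L : Set (α → ℤ)) : Type _ :=
  AddMonoidAlgebra 𝕜 (AddSubmonoid.closure (latticeA L))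

/-- The order polytope `O_Π ⊆ ℝ^Π` of a poset `Π`. -/
def orderPolytope (α : Type*) [PartialOrder α] : Set (α → ℝ) :=
  {x | (∀ i j : α, i ≤ j → x j ≤ x i) ∧ ∀ i, 0 ≤ x i ∧ x i ≤ 1}

/-- The lattice points of the order polytope, as integer vectors. -/
def orderLatticePts (α : Type*) [PartialOrder α] : Set (α → ℤ) :=
  {v | (fun i => (v i : ℝ)) ∈ orderPolytope α}

/-- The Hibi ring `𝕜[Π]`: the toric ring of the order polytope of `Π`. -/
abbrev hibiRing (𝕜 : Type*) [Field 𝕜] (α : Type*) [PartialOrder α] : Type _ :=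
  toricRing 𝕜 (orderLatticePts α)

/-!
A lattice point of `O_{P ⊕ Q}` is the indicator vector of an ideal of `P ⊕ Q`. Such an ideal either
avoids `z`, and is then an ideal of `P`, or contains `z`, hence all of `P`, and is determined by an
ideal of `Q`. So the generators of the monoid of `P ⊕ Q` are the `(x, 0, 0; 1)` and `(1, 1, y; 1)`
with `x` and `y` lattice points of `O_P` and `O_Q`, and the unimodular map
`((x, a), (y, b)) ↦ (x + b, b, y; a + b)` carries the product of the monoids of `P` and `Q` onto it.
The monoid algebra of a product is the tensor product of the monoid algebras.
-/

open AddSubmonoid (closure)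

section MonoidAlgebra

variable (R M N : Type*) [CommSemiring R] [AddMonoid M] [AddMonoid N]

/-- The algebra map `R[M × N] → R[M] ⊗ R[N]` determined by `(m, n) ↦ m ⊗ n` on monomials. -/
def addMonoidAlgebraProdToTensor :
    AddMonoidAlgebra R (M × N) →ₐ[R] AddMonoidAlgebra R M ⊗[R] AddMonoidAlgebra R N :=
  AddMonoidAlgebra.lift R _ (M × N)
    { toFun := fun p => .single p.toAdd.1 1 ⊗ₜ .single p.toAdd.2 1
      map_one' := rfl
      map_mul' := by simp [AddMonoidAlgebra.single_mul_single] }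

theorem toLinearMap_addMonoidAlgebraProdToTensor :
    (addMonoidAlgebraProdToTensor R M N).toLinearMap =
      (AddMonoidAlgebra.tensorEquiv R).symm.toLinearMap := by
  ext p
  simp [addMonoidAlgebraProdToTensor, LinearEquiv.eq_symm_apply]

/-- The monoid algebra of a product monoid is the tensor product of the monoid algebras, as an
algebra: the multiplicative refinement of `AddMonoidAlgebra.tensorEquiv`. -/
def addMonoidAlgebraProdAlgEquiv :
    AddMonoidAlgebra R (M × N) ≃ₐ[R] AddMonoidAlgebra R M ⊗[R] AddMonoidAlgebra R N :=
  .ofBijective (addMonoidAlgebraProdToTensor R M N) <| by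
    have h := congrArg DFunLike.coe (toLinearMap_addMonoidAlgebraProdToTensor R M N)
    exact h ▸ (AddMonoidAlgebra.tensorEquiv R).symm.bijective

end MonoidAlgebra

section Submonoid

variable {M N K : Type*} [AddMonoid M] [AddMonoid N] [AddMonoid K]

theorem closure_prod_zero_union_zero_prod (s : Set M) (t : Set N) :
    closure (s ×ˢ {0} ∪ {0} ×ˢ t) = (closure s).prod (closure t) := by
  rw [AddSubmonoid.closure_union, AddSubmonoid.closure_prod_zero, AddSubmonoid.closure_zero_prod,
    AddSubmonoid.prod_bot_sup_bot_prod]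

/-- An additive equivalence `M × N ≃+ K` carrying the generators `s × 0 ∪ 0 × t` to `u` restricts to
the submonoids they generate. -/
def closureProdAddEquiv (e : M × N ≃+ K) {s : Set M} {t : Set N} {u : Set K}
    (h : e '' (s ×ˢ {0} ∪ {0} ×ˢ t) = u) : closure s × closure t ≃+ closure u :=
  (AddSubmonoid.prodEquiv _ _).symm.trans <| (e.addSubmonoidMap _).trans <|
    AddEquiv.addSubmonoidCongr <| by
      rw [← closure_prod_zero_union_zero_prod, ← h]
      exact AddMonoidHom.map_mclosure e _

end Submonoid

/-- The decomposition of the toric ring of `L` as a tensor product induced by a unimodular map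
carrying `L₁` and `L₂`, placed at height one in complementary sublattices, onto `L` at height one.
-/
def toricRingTensorAlgEquiv (𝕜 : Type*) [Field 𝕜] {α β γ : Type*} {L₁ : Set (α → ℤ)}
    {L₂ : Set (β → ℤ)} {L : Set (γ → ℤ)} (e : ((α → ℤ) × ℤ) × ((β → ℤ) × ℤ) ≃+ (γ → ℤ) × ℤ)
    (h : e '' (latticeA L₁ ×ˢ {0} ∪ {0} ×ˢ latticeA L₂) = latticeA L) :
    toricRing 𝕜 L ≃ₐ[𝕜] toricRing 𝕜 L₁ ⊗[𝕜] toricRing 𝕜 L₂ :=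
  (AddMonoidAlgebra.domCongr 𝕜 𝕜 (closureProdAddEquiv e h).symm).trans
    (addMonoidAlgebraProdAlgEquiv 𝕜 _ _)

section OrdinalSum

variable {α β γ : Type*}

theorem antitone_sumLex_iff [Preorder α] [Preorder β] [Preorder γ] {f : α ⊕ₗ β → γ} :
    Antitone f ↔ Antitone (fun a => f (Sum.inlₗ a)) ∧ Antitone (fun b => f (Sum.inrₗ b)) ∧
      ∀ a b, f (Sum.inrₗ b) ≤ f (Sum.inlₗ a) := by
  constructor
  · intro hf
    exact ⟨hf.comp_monotone Sum.Lex.inl_mono, hf.comp_monotone Sum.Lex.inr_mono,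
      fun a b => hf (Sum.Lex.inl_le_inr a b)⟩
  · rintro ⟨hl, hr, hlr⟩ (a | b) (a' | b') h
    · exact hl (Sum.Lex.inl_le_inl_iff.1 h)
    · exact hlr a b'
    · exact absurd h Sum.Lex.not_inr_le_inl
    · exact hr (Sum.Lex.inr_le_inr_iff.1 h)

/-- The function on the ordinal sum equal to `x` on `α`, to `z` at the middle element and to `y` on
`β`. -/
def ordinalSumElim (x : α → γ) (z : γ) (y : β → γ) : α ⊕ₗ PUnit ⊕ₗ β → γ :=
  Sum.elim x (Sum.elim (fun _ => z) y ∘ ofLex) ∘ ofLex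

@[simp]
theorem ordinalSumElim_inl (x : α → γ) (z : γ) (y : β → γ) (a : α) :
    ordinalSumElim x z y (Sum.inlₗ a) = x a :=
  rfl

@[simp]
theorem ordinalSumElim_mid (x : α → γ) (z : γ) (y : β → γ) (u : PUnit) :
    ordinalSumElim x z y (Sum.inrₗ (Sum.inlₗ u)) = z :=
  rfl

@[simp]
theorem ordinalSumElim_inr (x : α → γ) (z : γ) (y : β → γ) (b : β) :
    ordinalSumElim x z y (Sum.inrₗ (Sum.inrₗ b)) = y b :=
  rfl

theorem ordinalSumElim_eta (f : α ⊕ₗ PUnit ⊕ₗ β → γ) :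
    ordinalSumElim (fun a => f (Sum.inlₗ a)) (f (Sum.inrₗ (Sum.inlₗ PUnit.unit)))
      (fun b => f (Sum.inrₗ (Sum.inrₗ b))) = f := by
  ext (_ | _ | _) <;> rfl

theorem antitone_ordinalSumElim_iff [Preorder α] [Preorder β] [Preorder γ] {x : α → γ} {z : γ}
    {y : β → γ} : Antitone (ordinalSumElim x z y) ↔
      Antitone x ∧ Antitone y ∧ (∀ a, z ≤ x a) ∧ ∀ b, y b ≤ z := by
  simp only [antitone_sumLex_iff, ordinalSumElim_inl, ordinalSumElim_mid, ordinalSumElim_inr]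
  constructor
  · rintro ⟨hx, ⟨-, hy, hyz⟩, hxz⟩
    exact ⟨hx, hy, fun a => hxz a (Sum.inlₗ PUnit.unit), hyz PUnit.unit⟩
  · rintro ⟨hx, hy, hzx, hyz⟩
    refine ⟨hx, ⟨antitone_const, hy, fun _ => hyz⟩, ?_⟩
    rintro a (_ | b)
    · exact hzx a
    · exact (hyz b).trans (hzx a)

/-- The unimodular map `((x, a), (y, b)) ↦ (x + b, b, y; a + b)` between the ambient lattices of the
Hibi monoids, with coefficients in an arbitrary group `A`. The last coordinates are the degrees;
the entry at the middle element is the degree in the second factor. -/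
def ordinalSumAddEquiv (α β A : Type*) [AddCommGroup A] :
    ((α → A) × A) × ((β → A) × A) ≃+ (α ⊕ₗ PUnit ⊕ₗ β → A) × A where
  toFun p := (ordinalSumElim (p.1.1 + Function.const α p.2.2) p.2.2 p.2.1, p.1.2 + p.2.2)
  invFun q :=
    letI z := q.1 (Sum.inrₗ (Sum.inlₗ PUnit.unit))
    ((fun a => q.1 (Sum.inlₗ a) - z, q.2 - z), (fun b => q.1 (Sum.inrₗ (Sum.inrₗ b)), z))
  left_inv p := by ext <;> simp
  right_inv q := Prod.ext (funext <| by simp) (by simp)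
  map_add' p q := Prod.ext (funext <| by simp [add_add_add_comm]) (by simp [add_add_add_comm])

theorem ordinalSumAddEquiv_mk_zero {A : Type*} [AddCommGroup A] (x : α → A) (a : A) :
    ordinalSumAddEquiv α β A ((x, a), 0) = (ordinalSumElim x 0 0, a) := by
  simp [ordinalSumAddEquiv]

theorem ordinalSumAddEquiv_zero_mk {A : Type*} [AddCommGroup A] (y : β → A) (b : A) :
    ordinalSumAddEquiv α β A (0, (y, b)) = (ordinalSumElim (Function.const α b) b y, b) := by
  simp [ordinalSumAddEquiv]

end OrdinalSum

section OrderPolytope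

variable {α β : Type*} [PartialOrder α] [PartialOrder β]

theorem mem_orderLatticePts {v : α → ℤ} :
    v ∈ orderLatticePts α ↔ Antitone v ∧ ∀ i, 0 ≤ v i ∧ v i ≤ 1 := by
  simp only [orderLatticePts, orderPolytope, Set.mem_ofPred_eq, Antitone]
  norm_cast

theorem ordinalSumElim_mem_orderLatticePts_iff {x : α → ℤ} {z : ℤ} {y : β → ℤ} :
    ordinalSumElim x z y ∈ orderLatticePts (α ⊕ₗ PUnit ⊕ₗ β) ↔
      (x ∈ orderLatticePts α ∧ z = 0 ∧ y = 0) ∨ (x = 1 ∧ z = 1 ∧ y ∈ orderLatticePts β) := by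
  simp only [mem_orderLatticePts, antitone_ordinalSumElim_iff, Lex.forall, Sum.forall, forall_const,
    ordinalSumElim_inl, ordinalSumElim_mid, ordinalSumElim_inr]
  constructor
  · rintro ⟨⟨hx, hy, hzx, hyz⟩, hx01, hz01, hy01⟩
    obtain rfl | rfl : z = 0 ∨ z = 1 := by omega
    · exact .inl ⟨⟨hx, hx01⟩, rfl, funext fun b => (hyz b).antisymm (hy01 b).1⟩
    · exact .inr ⟨funext fun a => (hx01 a).2.antisymm (hzx a), rfl, hy, hy01⟩
  · rintro (⟨⟨hx, hx01⟩, rfl, rfl⟩ | ⟨rfl, rfl, hy, hy01⟩)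
    · exact ⟨⟨hx, antitone_const, fun a => (hx01 a).1, fun _ => le_rfl⟩, hx01, by simp, by simp⟩
    · exact ⟨⟨antitone_const, hy, fun _ => le_rfl, fun b => (hy01 b).2⟩, by simp, by simp, hy01⟩

theorem orderLatticePts_ordinalSum :
    orderLatticePts (α ⊕ₗ PUnit ⊕ₗ β) =
      (ordinalSumElim · 0 0) '' orderLatticePts α ∪ ordinalSumElim 1 1 '' orderLatticePts β := by
  apply Set.Subset.antisymm
  · intro f hf
    rw [← ordinalSumElim_eta f, ordinalSumElim_mem_orderLatticePts_iff] at hf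
    rw [← ordinalSumElim_eta f]
    rcases hf with ⟨hx, hz, hy⟩ | ⟨hx, hz, hy⟩
    · exact .inl ⟨_, hx, by rw [hz, hy]⟩
    · exact .inr ⟨_, hy, by rw [hx, hz]⟩
  · rintro _ (⟨x, hx, rfl⟩ | ⟨y, hy, rfl⟩)
    · exact ordinalSumElim_mem_orderLatticePts_iff.2 (.inl ⟨hx, rfl, rfl⟩)
    · exact ordinalSumElim_mem_orderLatticePts_iff.2 (.inr ⟨rfl, rfl, hy⟩)

theorem ordinalSumAddEquiv_image_latticeA :
    ordinalSumAddEquiv α β ℤ ''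
        (latticeA (orderLatticePts α) ×ˢ {0} ∪ {0} ×ˢ latticeA (orderLatticePts β)) =
      latticeA (orderLatticePts (α ⊕ₗ PUnit ⊕ₗ β)) := by
  simp only [orderLatticePts_ordinalSum, latticeA, Set.image_union, Set.prod_singleton,
    Set.singleton_prod, Set.image_image, ordinalSumAddEquiv_mk_zero, ordinalSumAddEquiv_zero_mk,
    Function.const_one]

end OrderPolytope

/-- The Hibi ring of an ordinal sum as a tensor product, via the unimodular map
`ordinalSumAddEquiv`. -/
def hibiRingOrdinalSumAlgEquiv (𝕜 : Type*) [Field 𝕜] (α β : Type*) [PartialOrder α]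
    [PartialOrder β] :
    hibiRing 𝕜 (α ⊕ₗ PUnit ⊕ₗ β) ≃ₐ[𝕜] hibiRing 𝕜 α ⊗[𝕜] hibiRing 𝕜 β :=
  toricRingTensorAlgEquiv 𝕜 (ordinalSumAddEquiv α β ℤ) ordinalSumAddEquiv_image_latticeA

theorem stmt_1_general (𝕜 : Type*) [Field 𝕜] (α β : Type*) [PartialOrder α] [PartialOrder β] :
    Nonempty (hibiRing 𝕜 (α ⊕ₗ PUnit ⊕ₗ β) ≃ₐ[𝕜]
        (hibiRing 𝕜 α ⊗[𝕜] hibiRing 𝕜 β)) ∧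
      Nonempty (hibiRing 𝕜 (α ⊕ₗ PUnit ⊕ₗ β) ≃ₐ[𝕜] hibiRing 𝕜 (β ⊕ₗ PUnit ⊕ₗ α)) :=
  ⟨⟨hibiRingOrdinalSumAlgEquiv 𝕜 α β⟩,
    ⟨(hibiRingOrdinalSumAlgEquiv 𝕜 α β).trans <| (Algebra.TensorProduct.comm 𝕜 _ _).trans
      (hibiRingOrdinalSumAlgEquiv 𝕜 β α).symm⟩⟩

theorem stmt_1 (𝕜 : Type*) [Field 𝕜] (α β : Type*) [Fintype α] [Fintype β]
    [PartialOrder α] [PartialOrder β] :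
    Nonempty (hibiRing 𝕜 (α ⊕ₗ PUnit ⊕ₗ β) ≃ₐ[𝕜]
        (hibiRing 𝕜 α ⊗[𝕜] hibiRing 𝕜 β)) ∧
      Nonempty (hibiRing 𝕜 (α ⊕ₗ PUnit ⊕ₗ β) ≃ₐ[𝕜] hibiRing 𝕜 (β ⊕ₗ PUnit ⊕ₗ α)) :=
  stmt_1_general 𝕜 α β

end
end

section
/- Work in the facet-data setup below and assume ℤA(P) = ℤ^{d+1}. Let φ : 𝓕 → ℤ^r be a group homomorphism with φ(w_v) = 0 for every v ∈ P ∩ ℤ^d, and set β_F = φ(ε_F) ∈ ℤ^r, writing β_F^{(j)} for the j-th coordinate of β_F. Then for every j ∈ {1,…,r} one has ∑_{F ∈ Ψ(P)} β_F^{(j)} a_F = 0 in ℝ^d and ∑_{F ∈ Ψ(P)} β_F^{(j)} b_F = 0. -/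
/-!
STATEMENT 2: facet-data setup.  `P = conv(intCast '' L) ⊆ ℝ^d` is a
full-dimensional integral polytope whose lattice points are exactly `L`; the
facets of `P` are indexed by a finite type `ι` via supporting data
`a : ι → ℝ^d`, `b : ι → ℝ` satisfying (d1) and (d2) (the integer facet heights
being `D i v`).  Assume `ℤA(P) = ℤ^{d+1}` and let `φ : 𝓕 = ℤ^ι → ℤ^r` be a
group homomorphism vanishing on every `w_v = (D i v)_i`, `v ∈ L`, with
`β i = φ(ε_i)`.  Then `∑_i β_i^{(j)} a_i = 0` and `∑_i β_i^{(j)} b_i = 0` for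
every `j`.
-/

open scoped NNReal

noncomputable section

def intCast {α : Type*} (v : α → ℤ) : α → ℝ := fun i => (v i : ℝ)

/-- A facet of `P`: a nonempty exposed face of dimension `dim P − 1`. -/
def IsFacet {α : Type*} [Fintype α] (P F : Set (α → ℝ)) : Prop :=
  IsExposed ℝ P F ∧ F.Nonempty ∧
    Module.finrank ℝ (affineSpan ℝ F).direction + 1 =
      Module.finrank ℝ (affineSpan ℝ P).direction

/-!
Each height function `v ↦ ⟨v, a_F⟩ + b_F` extends to the homomorphism
`(v, t) ↦ ⟨v, a_F⟩ + t b_F` on `ℤ^{d+1}`. For a fixed coordinate `j`, the combination of these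
extensions with weights `β_F^{(j)}` sends `(v, 1)` to the `j`-th coordinate of `φ(w_v) = 0`. It
therefore vanishes on `ℤA(P) = ℤ^{d+1}`, and its values on the standard basis are the coordinates
of `∑ β_F^{(j)} a_F` together with `∑ β_F^{(j)} b_F`.
-/

section Relations

variable {ι : Type*} [Fintype ι] [DecidableEq ι]

theorem map_eq_sum_smul_map_single {G : Type*} [AddCommGroup G] (φ : (ι → ℤ) →+ G) (x : ι → ℤ) :
    φ x = ∑ i, x i • φ (Pi.single i 1) := by
  conv_lhs => rw [pi_eq_sum_univ' x]
  simp only [map_sum, map_zsmul]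

theorem sum_map_single_smul_eq_zero_of_closure_eq_top {N R : Type*} [AddGroup N] [Ring R]
    {S : Set N} (hS : AddSubgroup.closure S = ⊤) (h : ι → N →+ R) (D : ι → N → ℤ)
    (hD : ∀ i, ∀ s ∈ S, h i s = D i s) (φ : (ι → ℤ) →+ ℤ) (hφ : ∀ s ∈ S, φ (D · s) = 0) :
    ∑ i, φ (Pi.single i 1) • h i = 0 := by
  refine AddMonoidHom.eq_of_eqOn_dense hS fun s hs ↦ ?_
  calc (∑ i, φ (Pi.single i 1) • h i) s
      = ∑ i, φ (Pi.single i 1) • (D i s : R) := by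
        simp only [AddMonoidHom.finsetSum_apply, AddMonoidHom.smul_apply, hD _ s hs]
    _ = ((∑ i, D i s • φ (Pi.single i 1) : ℤ) : R) := by
        simp only [zsmul_eq_mul, smul_eq_mul, mul_comm (D _ s), Int.cast_sum, Int.cast_mul]
    _ = 0 := by rw [← map_eq_sum_smul_map_single, hφ s hs, Int.cast_zero]

end Relations

section Homogenization

variable {α M : Type*} [Fintype α] [AddCommGroup M]

/-- The homomorphism `(v, t) ↦ ∑ k, v k • a k + t • b` on `ℤ^α × ℤ`, which restricts at height
`t = 1` to the affine function with linear part `a` and constant term `b`. -/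
def homogenization (a : α → M) (b : M) : (α → ℤ) × ℤ →+ M :=
  ((Fintype.linearCombination ℤ a).coprod (LinearMap.toSpanSingleton ℤ M b)).toAddMonoidHom

theorem homogenization_apply (a : α → M) (b : M) (p : (α → ℤ) × ℤ) :
    homogenization a b p = ∑ k, p.1 k • a k + p.2 • b :=
  rfl

theorem homogenization_single_zero [DecidableEq α] (a : α → M) (b : M) (k : α) :
    homogenization a b (Pi.single k 1, 0) = a k := by
  simp [homogenization]

theorem homogenization_zero_one (a : α → M) (b : M) : homogenization a b (0, 1) = b := by
  simp [homogenization]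

end Homogenization

theorem stmt_2_general {α ι κ R : Type*} [Fintype α] [Fintype ι] [DecidableEq ι] [Ring R]
    (L : Set (α → ℤ)) (a : ι → α → R) (b : ι → R) (D : ι → (α → ℤ) → ℤ)
    (hD : ∀ i, ∀ v ∈ L, (D i v : R) = (∑ k, (v k : R) * a i k) + b i)
    (hZA : AddSubgroup.closure (latticeA L) = ⊤)
    (φ : (ι → ℤ) →+ (κ → ℤ)) (hφ : ∀ v ∈ L, φ (fun i ↦ D i v) = 0)
    (β : ι → κ → ℤ) (hβ : ∀ i, β i = φ (Pi.single i 1)) (j : κ) :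
    (∑ i, (β i j : R) • a i) = 0 ∧ (∑ i, (β i j : R) * b i) = 0 := by
  classical
  have relation : ∑ i, β i j • homogenization (a i) (b i) = 0 := by
    simp only [hβ]
    refine sum_map_single_smul_eq_zero_of_closure_eq_top hZA _ (fun i p ↦ D i p.1) ?_
      ((Pi.evalAddMonoidHom _ j).comp φ) ?_
    · rintro i _ ⟨v, hv, rfl⟩
      simp only [homogenization_apply, zsmul_eq_mul, Int.cast_one, one_mul, hD i v hv]
    · rintro _ ⟨v, hv, rfl⟩
      exact congrFun (hφ v hv) j
  have relation_apply (p : (α → ℤ) × ℤ) :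
      ∑ i, (β i j : R) * homogenization (a i) (b i) p = 0 := by
    simpa using DFunLike.congr_fun relation p
  constructor
  · ext k
    simpa [homogenization_single_zero] using relation_apply (Pi.single k 1, 0)
  · simpa only [homogenization_zero_one] using relation_apply (0, 1)

theorem stmt_2 (d r : ℕ)
    (L : Finset (Fin d → ℤ)) (hLne : L.Nonempty)
    (P : Set (Fin d → ℝ)) (hP : P = convexHull ℝ (intCast '' (L : Set (Fin d → ℤ))))
    (hlat : ∀ w : Fin d → ℤ, intCast w ∈ P ↔ w ∈ L)
    (hfull : affineSpan ℝ P = ⊤)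
    -- the facets of `P`, indexed by a finite type `ι`, with their supporting data
    (ι : Type*) [Fintype ι] [DecidableEq ι]
    (a : ι → Fin d → ℝ) (b : ι → ℝ)
    -- (d1): each affine functional is nonnegative on `P` and cuts out a facet,
    -- and every facet arises from exactly one index
    (hd1 : ∀ i : ι, ∀ x ∈ P, 0 ≤ (∑ j, x j * a i j) + b i)
    (hfacet : ∀ i : ι, IsFacet P (P ∩ {x | (∑ j, x j * a i j) + b i = 0}))
    (hall : ∀ F : Set (Fin d → ℝ), IsFacet P F →
      ∃! i : ι, F = P ∩ {x | (∑ j, x j * a i j) + b i = 0})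
    -- (d2): the facet heights `d_F(v)` of lattice points are integers `D i v`
    (D : ι → (Fin d → ℤ) → ℤ)
    (hD : ∀ i : ι, ∀ v ∈ L, (D i v : ℝ) = (∑ j, (v j : ℝ) * a i j) + b i)
    -- `ℤA(P) = ℤ^{d+1}`
    (hZA : AddSubgroup.closure (latticeA (L : Set (Fin d → ℤ))) = ⊤)
    -- `φ : 𝓕 → ℤ^r` vanishing on each `w_v`
    (φ : (ι → ℤ) →+ (Fin r → ℤ))
    (hφ : ∀ v ∈ L, φ (fun i => D i v) = 0)
    (β : ι → Fin r → ℤ) (hβ : ∀ i, β i = φ (Pi.single i 1)) :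
    ∀ j : Fin r,
      (∑ i : ι, (β i j : ℝ) • a i) = 0 ∧ (∑ i : ι, (β i j : ℝ) * b i) = 0 :=
  stmt_2_general (L : Set (Fin d → ℤ)) a b D hD hZA φ hφ β hβ

end
end

section
/- Work in the facet-data setup below; assume P is normal and ℤA(P) = ℤ^{d+1}, and let φ : 𝓕 → ℤ^r be a surjective group homomorphism whose kernel is exactly the subgroup S generated by {w_v : v ∈ P ∩ ℤ^d}; set β_F = φ(ε_F). Let u ∈ ℝ^d be such that 0 lies in the interior of P + u, and put b'_F = b_F − ⟨a_F, u⟩ (so b'_F > 0 for every F ∈ Ψ(P)). Then the r vectors b^{(j)} := (b'_F β_F^{(j)})_{F ∈ Ψ(P)} ∈ ℝ^{Ψ(P)}, j = 1,…,r, form a basis of the linear subspace D = {α ∈ ℝ^{Ψ(P)} : ∑_{F ∈ Ψ(P)} α_F · (a_F / b'_F) = 0 in ℝ^d and ∑_{F ∈ Ψ(P)} α_F = 0}. (D is the space of affine dependencies among the vertices a_F/b'_F of the polar dual (P+u)°, so this says that (b'_F β_F)_{F ∈ Ψ(P)} is a Gale-transform of the dual polytope of P.) -/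
/-!
STATEMENT 3: in the facet-data setup, with `P` normal, `ℤA(P) = ℤ^{d+1}`, and
`φ : 𝓕 → ℤ^r` a surjective homomorphism with kernel exactly the subgroup `S`
generated by the `w_v`, set `β i = φ(ε_i)`.  If `0` is interior to `P + u` and
`b' i = b i − ⟨a i, u⟩` (so `b' i > 0`), then the `r` vectors
`(b' i * β i j)_{i ∈ ι}` (`j = 1,…,r`) form a basis of the space `D` of affine
dependencies among the vertices `a i / b' i` of the polar dual of `P + u`:
they are linearly independent and span exactly
`D = {α : ℝ^ι | ∑ i α i • (a i / b' i) = 0 and ∑ i α i = 0}`.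
-/

open scoped NNReal Pointwise

noncomputable section

def prodCast {α : Type*} (x : (α → ℤ) × ℤ) : (α → ℝ) × ℝ :=
  (intCast x.1, (x.2 : ℝ))

/-- Normality of an integral polytope: `ℕA(P) = ℤA(P) ∩ ℝ≥0A(P)`. -/
def IsNormalPolytope {α : Type*} (L : Set (α → ℤ)) : Prop :=
  ∀ x : (α → ℤ) × ℤ,
    x ∈ AddSubmonoid.closure (latticeA L) ↔
      x ∈ AddSubgroup.closure (latticeA L) ∧
        prodCast x ∈ Submodule.span ℝ≥0 (prodCast '' latticeA L)

/-!
Over `ℤ` the sequence `⟨w_v⟩ → ℤ^ι → ℤ^r → 0` given by `φ` is exact, and it stays exact under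
`Hom(-, K)`. So the coordinate rows of `β` are a basis of those `γ : ι → K` which are orthogonal to
every `w_v`, that is, for which the affine function `h = ∑ i, γ i * (⟨·, a i⟩ + b i)` vanishes at
every lattice point `v`. These points affinely span the space, so `h` is identically zero, which
means that its linear part `∑ i, γ i • a i` is zero and that so is its value `∑ i, γ i * b' i`
at `-u`. Rescaling `α i = b' i * γ i` turns this into the two equations defining an affine
dependency of the points `a i / b' i`.
-/

open scoped Matrix

section SurjectiveMatrix

variable {R S m n : Type*} [CommRing R] [CommRing S] [Finite m] [Fintype n] {B : Matrix m n R}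

theorem linearIndependent_row_map_of_mulVec_surjective (hB : Function.Surjective B.mulVec)
    (f : R →+* S) : LinearIndependent S (B.map f).row := by
  classical
  cases nonempty_fintype m
  obtain ⟨C, hBC⟩ := Matrix.mulVec_surjective_iff_exists_right_inverse.1 hB
  have hBC_map : B.map f * C.map f = 1 := by
    rw [← Matrix.map_mul, hBC, Matrix.map_one f f.map_zero f.map_one]
  rw [← Matrix.vecMul_injective_iff]
  refine Function.LeftInverse.injective (g := fun γ ↦ γ ᵥ* C.map f) fun c ↦ ?_
  change c ᵥ* B.map f ᵥ* C.map f = c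
  rw [Matrix.vecMul_vecMul, hBC_map, Matrix.vecMul_one]

theorem mem_span_row_map_iff_of_mulVec_surjective (hB : Function.Surjective B.mulVec)
    (f : R →+* S) (γ : n → S) :
    γ ∈ Submodule.span S (Set.range (B.map f).row) ↔
      ∀ y : n → R, B *ᵥ y = 0 → γ ⬝ᵥ (f ∘ y) = 0 := by
  classical
  cases nonempty_fintype m
  rw [← range_vecMulLinear, LinearMap.mem_range]
  constructor
  · rintro ⟨c, rfl⟩ y hy
    have hy_map : B.map f *ᵥ (f ∘ y) = 0 := by
      ext j
      rw [← RingHom.map_mulVec, hy, Pi.zero_apply, map_zero, Pi.zero_apply]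
    rw [Matrix.vecMulLinear_apply, ← Matrix.dotProduct_mulVec, hy_map, dotProduct_zero]
  · intro hγ
    obtain ⟨C, hBC⟩ := Matrix.mulVec_surjective_iff_exists_right_inverse.1 hB
    -- The columns of the projection `1 - C * B` lie in the kernel of `B`.
    have hproj : γ ᵥ* (1 - C * B).map f = 0 := by
      ext i
      refine hγ ((1 - C * B).col i) ?_
      rw [← Matrix.mulVec_single_one, Matrix.mulVec_mulVec, Matrix.mul_sub, ← Matrix.mul_assoc,
        hBC, Matrix.mul_one, Matrix.one_mul, sub_self, Matrix.zero_mulVec]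
    refine ⟨γ ᵥ* C.map f, ?_⟩
    rw [Matrix.map_sub f (map_sub f), Matrix.map_one f f.map_zero f.map_one, Matrix.map_mul,
      Matrix.vecMul_sub, Matrix.vecMul_one, sub_eq_zero] at hproj
    rw [Matrix.vecMulLinear_apply, Matrix.vecMul_vecMul, ← hproj]

end SurjectiveMatrix

theorem forall_mem_closure_dotProduct_eq_zero_iff {R S n : Type*} [Ring R] [Ring S] [Fintype n]
    (f : R →+* S) (γ : n → S) (W : Set (n → R)) :
    (∀ y ∈ AddSubgroup.closure W, γ ⬝ᵥ (f ∘ y) = 0) ↔ ∀ w ∈ W, γ ⬝ᵥ (f ∘ w) = 0 := by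
  let ψ : (n → R) →+ S := (dotProductBilin ℤ ℤ γ).toAddMonoidHom.comp (f.toAddMonoidHom.compLeft n)
  exact AddSubgroup.closure_le ψ.ker

theorem addMonoidHom_apply_eq_mulVec {ι σ : Type*} [Fintype ι] [DecidableEq ι]
    (φ : (ι → ℤ) →+ (σ → ℤ)) (y : ι → ℤ) :
    φ y = Matrix.of (fun j i ↦ φ (Pi.single i 1) j) *ᵥ y :=
  (LinearMap.toMatrix'_mulVec φ.toIntLinearMap y).symm

theorem forall_dotProduct_add_eq_zero_iff {R κ : Type*} [CommRing R] [Fintype κ]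
    {X : Set (κ → R)} (hX : affineSpan R X = ⊤) (c : κ → R) (t : R) (q : κ → R) :
    (∀ x ∈ X, x ⬝ᵥ c + t = 0) ↔ c = 0 ∧ q ⬝ᵥ c + t = 0 := by
  classical
  constructor
  · intro h
    let F : (κ → R) →ᵃ[R] R := (dotProductEquiv R κ c).toAffineMap + AffineMap.const R (κ → R) t
    have hF (x : κ → R) : F x = x ⬝ᵥ c + t := by simp [F, dotProduct_comm]
    have hF_zero : F = 0 := AffineMap.ext_on hX fun x hx ↦ (hF x).trans (h x hx)
    have h_all (x : κ → R) : x ⬝ᵥ c + t = 0 := by rw [← hF, hF_zero]; rfl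
    have ht : t = 0 := by simpa using h_all 0
    exact ⟨funext fun k ↦ by simpa [ht] using h_all (Pi.single k 1), h_all q⟩
  · rintro ⟨rfl, hq⟩ x -
    simpa using hq

section GaleTransform

variable (K : Type*) {E ι σ : Type*} [Field K] [AddCommGroup E] [Module K E] [Fintype ι]

/-- The space of affine dependencies of a finite family of points: the coefficient vectors with
sum zero whose linear combination of the points is zero. -/
def affineDependencies (p : ι → E) : Submodule K (ι → K) :=
  LinearMap.ker (Fintype.linearCombination K p) ⊓
    LinearMap.ker (Fintype.linearCombination K fun _ ↦ (1 : K))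

variable {K}

theorem mem_affineDependencies_iff {p : ι → E} {α : ι → K} :
    α ∈ affineDependencies K p ↔ ∑ i, α i • p i = 0 ∧ ∑ i, α i = 0 := by
  simp [affineDependencies, Fintype.linearCombination_apply]

variable (K)

/-- The vectors `g i : σ → K` form a Gale transform of the points `p i`: their coordinate rows
`(g i j)_i` are a basis of the affine dependencies of `p`. -/
structure IsGaleTransform (g : ι → σ → K) (p : ι → E) : Prop where
  linearIndependent : LinearIndependent K fun j i ↦ g i j
  span_eq : Submodule.span K (Set.range fun j i ↦ g i j) = affineDependencies K p

variable {K}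

theorem mem_affineDependencies_inv_smul_iff {c : ι → K} (hc : ∀ i, c i ≠ 0) (a : ι → E)
    (α : ι → K) :
    α ∈ affineDependencies K (fun i ↦ (c i)⁻¹ • a i) ↔
      ∑ i, ((c i)⁻¹ * α i) • a i = 0 ∧ ∑ i, (c i)⁻¹ * α i * c i = 0 := by
  have hcancel (i : ι) : (c i)⁻¹ * α i * c i = α i := by
    rw [mul_right_comm, inv_mul_cancel₀ (hc i), one_mul]
  simp only [mem_affineDependencies_iff, smul_smul, hcancel, mul_comm (α _)]

theorem isGaleTransform_mul_inv_smul {c : ι → K} (hc : ∀ i, c i ≠ 0) {g : ι → σ → K} {a : ι → E}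
    (hg : LinearIndependent K fun j i ↦ g i j)
    (hspan : ∀ γ : ι → K, γ ∈ Submodule.span K (Set.range fun j i ↦ g i j) ↔
      ∑ i, γ i • a i = 0 ∧ ∑ i, γ i * c i = 0) :
    IsGaleTransform K (fun i j ↦ c i * g i j) (fun i ↦ (c i)⁻¹ • a i) := by
  let e : (ι → K) ≃ₗ[K] (ι → K) :=
    LinearEquiv.piCongrRight fun i ↦ LinearEquiv.smulOfNeZero K K (c i) (hc i)
  have he_symm (α : ι → K) (i : ι) : e.symm α i = (c i)⁻¹ * α i := rfl
  have hrange : (Set.range fun j i ↦ c i * g i j) = e '' Set.range fun j i ↦ g i j :=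
    Set.range_comp e _
  refine ⟨hg.map' e.toLinearMap e.ker, Submodule.ext fun α ↦ ?_⟩
  rw [hrange, ← LinearEquiv.coe_toLinearMap, ← Submodule.map_span, Submodule.mem_map_equiv, hspan,
    mem_affineDependencies_inv_smul_iff hc]
  simp only [he_symm]

end GaleTransform

theorem stmt_3_general {K V κ ι σ : Type*} [Field K] [Fintype κ] [Fintype ι] [DecidableEq ι]
    [Finite σ] {s : Set V} (p : V → κ → K) (hspan : affineSpan K (p '' s) = ⊤)
    (a : ι → κ → K) (b : ι → K) (D : ι → V → ℤ)
    (hD : ∀ i, ∀ v ∈ s, (D i v : K) = (∑ j, p v j * a i j) + b i)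
    (φ : (ι → ℤ) →+ (σ → ℤ)) (hsurj : Function.Surjective φ)
    (hker : ∀ y, φ y = 0 ↔ y ∈ AddSubgroup.closure {w | ∃ v ∈ s, w = fun i ↦ D i v})
    (β : ι → σ → ℤ) (hβ : ∀ i, β i = φ (Pi.single i 1))
    (u : κ → K) (b' : ι → K) (hb' : ∀ i, b' i = b i - ∑ j, a i j * u j) (hb'_ne : ∀ i, b' i ≠ 0) :
    IsGaleTransform K (fun i j ↦ b' i * (β i j : K)) (fun i ↦ (b' i)⁻¹ • a i) := by
  obtain rfl : β = fun i ↦ φ (Pi.single i 1) := funext hβ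
  let B : Matrix σ ι ℤ := Matrix.of fun j i ↦ φ (Pi.single i 1) j
  have hφ : ⇑φ = B.mulVec := funext (addMonoidHom_apply_eq_mulVec φ)
  rw [hφ] at hsurj
  refine isGaleTransform_mul_inv_smul hb'_ne
    (linearIndependent_row_map_of_mulVec_surjective hsurj (Int.castRingHom K)) fun γ ↦ ?_
  have hform (x : κ → K) :
      ∑ i, γ i * (x ⬝ᵥ a i + b i) = x ⬝ᵥ (∑ i, γ i • a i) + ∑ i, γ i * b i := by
    simp only [mul_add, Finset.sum_add_distrib, dotProduct_sum, dotProduct_smul, smul_eq_mul]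
  have hb'_eq (i : ι) : b' i = -u ⬝ᵥ a i + b i := by
    rw [hb', neg_dotProduct, dotProduct_comm, neg_add_eq_sub, dotProduct]
  calc γ ∈ Submodule.span K (Set.range (B.map (Int.castRingHom K)).row)
      ↔ ∀ v ∈ s, ∑ i, γ i * (D i v : K) = 0 := by
        simp only [mem_span_row_map_iff_of_mulVec_surjective hsurj, ← hφ, hker,
          forall_mem_closure_dotProduct_eq_zero_iff]
        exact ⟨fun h v hv ↦ h _ ⟨v, hv, rfl⟩, by rintro h _ ⟨v, hv, rfl⟩; exact h v hv⟩
    _ ↔ ∀ x ∈ p '' s, x ⬝ᵥ (∑ i, γ i • a i) + ∑ i, γ i * b i = 0 := by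
        simp only [← hform, Set.forall_mem_image]
        refine forall₂_congr fun v hv ↦ ?_
        simp only [hD _ v hv, dotProduct]
    _ ↔ ∑ i, γ i • a i = 0 ∧ ∑ i, γ i * b' i = 0 := by
        rw [forall_dotProduct_add_eq_zero_iff hspan _ _ (-u), ← hform]
        simp only [hb'_eq]

theorem stmt_3 (d r : ℕ)
    (L : Finset (Fin d → ℤ)) (hLne : L.Nonempty)
    (P : Set (Fin d → ℝ)) (hP : P = convexHull ℝ (intCast '' (L : Set (Fin d → ℤ))))
    (hlat : ∀ w : Fin d → ℤ, intCast w ∈ P ↔ w ∈ L)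
    (hfull : affineSpan ℝ P = ⊤)
    -- the facets of `P`, indexed by a finite type `ι`, with their supporting data
    (ι : Type*) [Fintype ι] [DecidableEq ι]
    (a : ι → Fin d → ℝ) (b : ι → ℝ)
    (hd1 : ∀ i : ι, ∀ x ∈ P, 0 ≤ (∑ j, x j * a i j) + b i)
    (hfacet : ∀ i : ι, IsFacet P (P ∩ {x | (∑ j, x j * a i j) + b i = 0}))
    (hall : ∀ F : Set (Fin d → ℝ), IsFacet P F →
      ∃! i : ι, F = P ∩ {x | (∑ j, x j * a i j) + b i = 0})
    (D : ι → (Fin d → ℤ) → ℤ)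
    (hD : ∀ i : ι, ∀ v ∈ L, (D i v : ℝ) = (∑ j, (v j : ℝ) * a i j) + b i)
    -- `P` is normal and `ℤA(P) = ℤ^{d+1}`
    (hnormal : IsNormalPolytope (L : Set (Fin d → ℤ)))
    (hZA : AddSubgroup.closure (latticeA (L : Set (Fin d → ℤ))) = ⊤)
    -- `φ : 𝓕 → ℤ^r` surjective with kernel exactly `S = ⟨w_v : v ∈ L⟩`
    (φ : (ι → ℤ) →+ (Fin r → ℤ)) (hsurj : Function.Surjective φ)
    (hker : ∀ y : ι → ℤ, φ y = 0 ↔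
      y ∈ AddSubgroup.closure {w | ∃ v ∈ L, w = fun i => D i v})
    (β : ι → Fin r → ℤ) (hβ : ∀ i, β i = φ (Pi.single i 1))
    -- `0` is interior to `P + u`, and `b' i = b i − ⟨a i, u⟩ > 0`
    (u : Fin d → ℝ) (hu : (0 : Fin d → ℝ) ∈ interior ((fun x => x + u) '' P))
    (b' : ι → ℝ) (hb' : ∀ i, b' i = b i - ∑ j, a i j * u j)
    (hb'pos : ∀ i, 0 < b' i) :
    LinearIndependent ℝ (fun j : Fin r => (fun i => b' i * (β i j : ℝ) : ι → ℝ)) ∧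
      ∀ α : ι → ℝ,
        α ∈ Submodule.span ℝ
            (Set.range (fun j : Fin r => (fun i => b' i * (β i j : ℝ) : ι → ℝ))) ↔
          ((∑ i : ι, α i • ((b' i)⁻¹ • a i)) = 0 ∧ (∑ i : ι, α i) = 0) := by
  have hspan : affineSpan ℝ (intCast '' (L : Set (Fin d → ℤ))) = ⊤ := by
    rwa [hP, affineSpan_convexHull] at hfull
  have hgale := stmt_3_general intCast hspan a b D hD φ hsurj hker β hβ u b' hb'
    fun i ↦ (hb'pos i).ne'
  exact ⟨hgale.linearIndependent, fun α ↦ by rw [hgale.span_eq, mem_affineDependencies_iff]⟩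

end
end

section
/- For all positive integers n_1,…,n_k, the polytope P_{n_1,…,n_k} has the half-space representation P_{n_1,…,n_k} = {x ∈ ℝ^d : x_i ≥ 0 for every i ∈ {1,…,d}, and ⟨x, f_p⟩ + 1 ≥ 0 for every p ∈ {1,…,k}}, and this representation is irreducible: each of the d hyperplanes {x_i = 0} and each of the k hyperplanes {⟨x, f_p⟩ + 1 = 0} cuts out a facet of P_{n_1,…,n_k}, so P_{n_1,…,n_k} has exactly d + k facets. -/
/-!
STATEMENT 4: the half-space representation of `P_{n₁,…,n_k}`.  Coordinates are
indexed by `ι = Σ p : Fin k, Fin (n p)` (the blocks `B_{n_p}`).  The polytope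
`P = conv({0} ∪ B_d ∪ B_{n₁,…,n_k})` equals
`{x : x_i ≥ 0 for all i, and ⟨x, f_p⟩ + 1 ≥ 0 for all p}`, each of the `d + k`
hyperplanes cuts out a facet, these facets are pairwise distinct, and `P` has
exactly `d + k` facets.
-/

open scoped NNReal

noncomputable section

/-- The coordinate index type: the disjoint union of the blocks `B_{n_p}`. -/
abbrev blockIdx (k : ℕ) (n : Fin k → ℕ) : Type := (p : Fin k) × Fin (n p)

/-- The vertex `i₁ + ⋯ + i_k ∈ B_{n₁,…,n_k}` selecting `c p ∈ B_{n_p}` in each block. -/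
def chooseVec {k : ℕ} {n : Fin k → ℕ} (c : ∀ p, Fin (n p)) : blockIdx k n → ℝ :=
  fun j => if c j.1 = j.2 then 1 else 0

/-- The vertex set `V_{n₁,…,n_k} = {0} ∪ B_d ∪ B_{n₁,…,n_k}`. -/
def vertexSet (k : ℕ) (n : Fin k → ℕ) : Set (blockIdx k n → ℝ) :=
  {0} ∪ {v | ∃ j : blockIdx k n, v = Pi.single j 1} ∪ {v | ∃ c : ∀ p, Fin (n p), v = chooseVec c}

/-- The polytope `P_{n₁,…,n_k}`. -/
def polyP (k : ℕ) (n : Fin k → ℕ) : Set (blockIdx k n → ℝ) :=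
  convexHull ℝ (vertexSet k n)

/-- The vector `f_p = (k−2)·1_p − ∑_{q ≠ p} 1_q`. -/
def fvec {k : ℕ} {n : Fin k → ℕ} (p : Fin k) : blockIdx k n → ℝ :=
  fun j => if j.1 = p then (k : ℝ) - 2 else -1

/-!
A nonempty exposed face of a full-dimensional polyhedron that is not contained in any of the
bounding hyperplanes contains, by averaging, a point where all inequalities are strict; a linear
form maximised at such an interior point vanishes, so the face is everything. Hence a facet lies in
one of the bounding hyperplanes, and by dimension it is the whole section once that section is
itself a facet.

For `P_{n₁,…,n_k}` write `S_p` for the sum of `x` over block `p` and `S` for the total sum, so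
that `⟨x, f_p⟩ + 1 = (k - 1) S_p - (S - 1)`. A nonnegative `x` with `S ≤ 1` lies in the simplex
spanned by `0` and the basis vectors. If `S > 1`, put `t = (S - 1) / (k - 1)`. The inequalities
say `t ≤ S_p` for all `p`, so rescaling every block of `x` to sum `1` gives a point `z` of
`conv B_{n₁,…,n_k}`, a product of simplices, with `t z ≤ x`. The remainder `x - t z` has total
mass `S - k t = 1 - t`, so `x = t z + (x - t z)` is a convex combination of `z` and basis vectors.
-/

section LinearAlgebra

lemma vectorSpan_le_ker {𝕜 E M : Type*} [Ring 𝕜] [AddCommGroup E] [Module 𝕜 E] [AddCommGroup M]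
    [Module 𝕜 M] {s : Set E} {l : E →ₗ[𝕜] M} (h : ∀ x ∈ s, ∀ y ∈ s, l x = l y) :
    vectorSpan 𝕜 s ≤ LinearMap.ker l := by
  rw [vectorSpan_def, Submodule.span_le]
  rintro _ ⟨x, hx, y, hy, rfl⟩
  simp [h x hx y hy]

lemma vectorSpan_eq_span_of_zero_mem {𝕜 E : Type*} [Ring 𝕜] [AddCommGroup E] [Module 𝕜 E]
    {s : Set E} (h0 : 0 ∈ s) : vectorSpan 𝕜 s = Submodule.span 𝕜 s := by
  simpa using vectorSpan_eq_span_vsub_set_right 𝕜 h0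

lemma eq_top_of_forall_single_mem {𝕜 α : Type*} [Semiring 𝕜] [Finite α] [DecidableEq α]
    {V : Submodule 𝕜 (α → 𝕜)} (h : ∀ j, Pi.single j 1 ∈ V) : V = ⊤ := by
  rw [eq_top_iff, ← (Pi.basisFun 𝕜 α).span_eq, Submodule.span_le]
  rintro _ ⟨j, rfl⟩
  simpa using h j

end LinearAlgebra

lemma exists_mem_forall_pos_of_concaveOn {𝕜 E ι : Type*} [Field 𝕜] [LinearOrder 𝕜]
    [IsStrictOrderedRing 𝕜] [AddCommGroup E] [Module 𝕜 E] [Finite ι] {s : Set E} {f : ι → E → 𝕜}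
    (hs : s.Nonempty) (hf : ∀ i, ConcaveOn 𝕜 s (f i))
    (hnonneg : ∀ i, ∀ x ∈ s, 0 ≤ f i x) (hpos : ∀ i, ∃ x ∈ s, 0 < f i x) :
    ∃ y ∈ s, ∀ i, 0 < f i y := by
  have := Fintype.ofFinite ι
  rcases isEmpty_or_nonempty ι with hι | ⟨⟨i₀⟩⟩
  · exact hs.imp fun y hy => ⟨hy, hι.elim⟩
  choose x hxs hx using hpos
  have hcard : (0 : 𝕜) < Fintype.card ι := Nat.cast_pos.2 (Fintype.card_pos_iff.2 ⟨i₀⟩)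
  have hweight : ∑ _i : ι, (Fintype.card ι : 𝕜)⁻¹ = 1 := by simp [hcard.ne']
  have hinv : 0 < (Fintype.card ι : 𝕜)⁻¹ := inv_pos.2 hcard
  refine ⟨∑ i, (Fintype.card ι : 𝕜)⁻¹ • x i,
    (hf i₀).1.sum_mem (fun _ _ => hinv.le) hweight fun i _ => hxs i, fun i => ?_⟩
  calc 0 < ∑ j, (Fintype.card ι : 𝕜)⁻¹ • f i (x j) :=
        Finset.sum_pos' (fun j _ => mul_nonneg hinv.le (hnonneg i _ (hxs j)))
          ⟨i, Finset.mem_univ i, mul_pos hinv (hx i)⟩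
    _ ≤ f i (∑ j, (Fintype.card ι : 𝕜)⁻¹ • x j) :=
        (hf i).le_map_sum (fun _ _ => hinv.le) hweight fun j _ => hxs j

section Polyhedron

variable {E ι : Type*} [AddCommGroup E] [Module ℝ E] [TopologicalSpace E]

lemma eq_of_isExposed_of_mem_interior [ContinuousAdd E] [ContinuousSMul ℝ E] {P F : Set E} {x : E}
    (hF : IsExposed ℝ P F) (hxF : x ∈ F) (hxP : x ∈ interior P) : F = P := by
  obtain ⟨l, rfl⟩ := hF ⟨x, hxF⟩
  have hl : l = 0 := by
    by_contra hl
    have himage : l '' P ⊆ Set.Iic (l x) := Set.image_subset_iff.2 hxF.2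
    have hlt : l x ∈ interior (Set.Iic (l x)) := interior_mono himage
      ((l.isOpenMap_of_ne_zero hl).image_interior_subset P (Set.mem_image_of_mem l hxP))
    simp at hlt
  simp [hl]

lemma eq_of_isExposed_of_vectorSpan_le {P F G : Set E} (hF : IsExposed ℝ P F) (hne : F.Nonempty)
    (hFG : F ⊆ G) (hGP : G ⊆ P) (hspan : vectorSpan ℝ G ≤ vectorSpan ℝ F) : F = G := by
  obtain ⟨l, rfl⟩ := hF hne
  obtain ⟨y, hy⟩ := hne
  refine hFG.antisymm fun x hx => ⟨hGP hx, fun z hz => ?_⟩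
  have hker : vectorSpan ℝ {x ∈ P | ∀ y ∈ P, l y ≤ l x} ≤ LinearMap.ker l.toLinearMap :=
    vectorSpan_le_ker fun a ha b hb => le_antisymm (hb.2 a ha.1) (ha.2 b hb.1)
  have hxy : l (x - y) = 0 := hker (hspan (vsub_mem_vectorSpan ℝ hx (hFG hy)))
  rw [map_sub, sub_eq_zero] at hxy
  exact (hy.2 z hz).trans_eq hxy.symm

/-- The polyhedron cut out by the half-spaces `0 ≤ φ i x + c i`. -/
def polyhedron (φ : ι → E →L[ℝ] ℝ) (c : ι → ℝ) : Set E :=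
  {x | ∀ i, 0 ≤ φ i x + c i}

/-- The section of `polyhedron φ c` by its `i`-th bounding hyperplane. -/
def tightFace (φ : ι → E →L[ℝ] ℝ) (c : ι → ℝ) (i : ι) : Set E :=
  polyhedron φ c ∩ {x | φ i x + c i = 0}

variable {φ : ι → E →L[ℝ] ℝ} {c : ι → ℝ}

lemma convex_polyhedron : Convex ℝ (polyhedron φ c) := by
  have heq : polyhedron φ c = ⋂ i, {x | -c i ≤ φ i x} := by
    ext x
    simp [polyhedron, neg_le_iff_add_nonneg]
  rw [heq]
  exact convex_iInter fun i => convex_halfSpace_ge (φ i).toLinearMap.isLinear _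

lemma mem_interior_polyhedron [Finite ι] {x : E} (hx : ∀ i, 0 < φ i x + c i) :
    x ∈ interior (polyhedron φ c) := by
  have hopen : IsOpen (⋂ i, {x | 0 < φ i x + c i}) :=
    isOpen_iInter_of_finite fun i => isOpen_lt continuous_const (by fun_prop)
  refine mem_interior.2 ⟨_, fun y hy i => ?_, hopen, Set.mem_iInter.2 hx⟩
  exact (Set.mem_iInter.1 hy i).le

lemma isExposed_tightFace (i : ι) : IsExposed ℝ (polyhedron φ c) (tightFace φ c i) := by
  rintro ⟨y, hyP, hy : φ i y + c i = 0⟩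
  refine ⟨-φ i, Set.ext fun x => and_congr_right fun hx => ⟨fun hx0 z hz => ?_, fun hmax => ?_⟩⟩
  · have hx0 : φ i x + c i = 0 := hx0
    have hz := hz i
    simp only [neg_apply]
    linarith
  · have hxy := hmax y hyP
    simp only [neg_apply] at hxy
    exact le_antisymm (by linarith) (hx i)

lemma exists_subset_tightFace [ContinuousAdd E] [ContinuousSMul ℝ E] [Finite ι] {F : Set E}
    (hF : IsExposed ℝ (polyhedron φ c) F) (hne : F.Nonempty) (hproper : F ≠ polyhedron φ c) :
    ∃ i, F ⊆ tightFace φ c i := by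
  by_contra! hnot
  have hpos : ∀ i, ∃ x ∈ F, 0 < φ i x + c i := by
    intro i
    obtain ⟨x, hxF, hx⟩ := Set.not_subset.1 (hnot i)
    exact ⟨x, hxF, (hF.subset hxF i).lt_of_ne' fun h => hx ⟨hF.subset hxF, h⟩⟩
  obtain ⟨y, hyF, hy⟩ := exists_mem_forall_pos_of_concaveOn hne
    (fun i => ((φ i).toLinearMap.concaveOn (hF.convex convex_polyhedron)).add_const (c i))
    (fun i x hx => hF.subset hx i) hpos
  exact hproper (eq_of_isExposed_of_mem_interior hF hyF (mem_interior_polyhedron hy))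

end Polyhedron

section Facet

variable {α ι : Type*} [Fintype α]

lemma IsFacet.eq_of_subset {P F G : Set (α → ℝ)} (hF : IsFacet P F) (hG : IsFacet P G)
    (hFG : F ⊆ G) : F = G := by
  obtain ⟨hFexp, hFne, hFdim⟩ := hF
  obtain ⟨hGexp, -, hGdim⟩ := hG
  rw [direction_affineSpan, direction_affineSpan] at hFdim hGdim
  exact eq_of_isExposed_of_vectorSpan_le hFexp hFne hFG hGexp.subset
    (Submodule.eq_of_le_of_finrank_eq (vectorSpan_mono ℝ hFG) (by lia)).ge

lemma IsFacet.ne {P F : Set (α → ℝ)} (hF : IsFacet P F) : F ≠ P := by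
  rintro rfl
  exact Nat.succ_ne_self _ hF.2.2

lemma isFacet_tightFace {φ : ι → (α → ℝ) →L[ℝ] ℝ} {c : ι → ℝ} {i : ι} {w : α → ℝ}
    (hne : (tightFace φ c i).Nonempty) (hwP : w ∈ polyhedron φ c) (hw : φ i w + c i ≠ 0)
    (hspan : vectorSpan ℝ (insert w (tightFace φ c i)) = ⊤) :
    IsFacet (polyhedron φ c) (tightFace φ c i) := by
  refine ⟨isExposed_tightFace i, hne, ?_⟩
  have hP : vectorSpan ℝ (polyhedron φ c) = ⊤ :=
    top_unique (hspan ▸ vectorSpan_mono ℝ (Set.insert_subset hwP Set.inter_subset_left))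
  have hlower := finrank_vectorSpan_insert_le_set ℝ (tightFace φ c i) w
  have hker : vectorSpan ℝ (tightFace φ c i) ≤ LinearMap.ker (φ i).toLinearMap :=
    vectorSpan_le_ker fun x hx y hy => add_right_cancel (hx.2.trans hy.2.symm)
  have hφ : (φ i).toLinearMap ≠ 0 := by
    intro hzero
    obtain ⟨y, -, hy : φ i y + c i = 0⟩ := hne
    have hconst : φ i w = φ i y :=
      (LinearMap.congr_fun hzero w).trans (LinearMap.congr_fun hzero y).symm
    exact hw (hconst ▸ hy)
  have hupper := Submodule.finrank_mono hker
  have hdim := Module.Dual.finrank_ker_add_one_of_ne_zero hφ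
  rw [hspan, finrank_top] at hlower
  rw [direction_affineSpan, direction_affineSpan, hP, finrank_top]
  lia

lemma setOf_isFacet_polyhedron [Finite ι] {φ : ι → (α → ℝ) →L[ℝ] ℝ} {c : ι → ℝ}
    (h : ∀ i, IsFacet (polyhedron φ c) (tightFace φ c i)) :
    {F | IsFacet (polyhedron φ c) F} = Set.range (tightFace φ c) := by
  refine Set.Subset.antisymm (fun F hF => ?_) (Set.range_subset_iff.2 h)
  obtain ⟨i, hi⟩ := exists_subset_tightFace hF.1 hF.2.1 hF.ne
  exact ⟨i, (hF.eq_of_subset (h i) hi).symm⟩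

end Facet

lemma smul_add_mem_of_convex {𝕜 α : Type*} [Field 𝕜] [LinearOrder 𝕜] [IsStrictOrderedRing 𝕜]
    [Fintype α] [DecidableEq α] {s : Set (α → 𝕜)} (hs : Convex 𝕜 s)
    (hsingle : ∀ j, Pi.single j 1 ∈ s) {z w : α → 𝕜} {t : 𝕜} (hz : z ∈ s)
    (ht : 0 ≤ t) (hw : ∀ j, 0 ≤ w j) (hsum : t + ∑ j, w j = 1) : t • z + w ∈ s := by
  have hmem := hs.sum_mem (t := (Finset.univ : Finset (Option α))) (w := fun o => o.elim t w)
    (z := fun o => o.elim z fun j => Pi.single j 1) (by rintro (_ | j) _ <;> simp [ht, hw])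
    (by simpa [Fintype.sum_option] using hsum) (by rintro (_ | j) _ <;> simp [hz, hsingle])
  simpa only [Fintype.sum_option, Option.elim, ← pi_eq_sum_univ' w] using hmem

section BlockPolytope

variable {k : ℕ} {n : Fin k → ℕ}

lemma convex_polyP : Convex ℝ (polyP k n) :=
  convex_convexHull _ _

lemma zero_mem_polyP : 0 ∈ polyP k n :=
  subset_convexHull _ _ (Or.inl (Or.inl rfl))

lemma single_mem_polyP (j : blockIdx k n) : Pi.single j 1 ∈ polyP k n :=
  subset_convexHull _ _ (Or.inl (Or.inr ⟨j, rfl⟩))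

lemma chooseVec_mem_polyP (c : ∀ p, Fin (n p)) : chooseVec c ∈ polyP k n :=
  subset_convexHull _ _ (Or.inr ⟨c, rfl⟩)

lemma chooseVec_eq_sum_single (c : ∀ p, Fin (n p)) :
    chooseVec c = ∑ q, (Pi.single ⟨q, c q⟩ 1 : blockIdx k n → ℝ) := by
  ext ⟨p, a⟩
  rw [Finset.sum_apply, Finset.sum_eq_single p]
  · simp [chooseVec, Pi.single_apply, eq_comm]
  · intro q _ hqp
    exact Pi.single_eq_of_ne (fun h => hqp (congrArg Sigma.fst h).symm) _
  · simp

/-- The linear form `⟨·, f_p⟩`. -/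
def blockForm (p : Fin k) : (blockIdx k n → ℝ) →L[ℝ] ℝ :=
  ∑ j, fvec p j • ContinuousLinearMap.proj j

lemma blockForm_apply (p : Fin k) (x : blockIdx k n → ℝ) :
    blockForm p x = ∑ j, x j * fvec p j := by
  simp [blockForm, mul_comm]

lemma blockForm_eq_blockSum_sub_sum (p : Fin k) (x : blockIdx k n → ℝ) :
    blockForm p x = (k - 1) * ∑ a, x ⟨p, a⟩ - ∑ j, x j := by
  have hterm (j : blockIdx k n) :
      x j * fvec p j = (k - 1) * (if j.1 = p then x j else 0) - x j := by
    unfold fvec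
    split_ifs <;> ring
  have hblock : ∑ j : blockIdx k n, (if j.1 = p then x j else 0) = ∑ a, x ⟨p, a⟩ := by
    rw [Fintype.sum_sigma, Finset.sum_eq_single p] <;> simp +contextual
  simp only [blockForm_apply, hterm, Finset.sum_sub_distrib, ← Finset.mul_sum, hblock]

lemma blockForm_single (p : Fin k) (i : blockIdx k n) :
    blockForm p (Pi.single i 1) = fvec p i := by
  simp [blockForm_apply, Pi.single_apply]

lemma blockForm_chooseVec (p : Fin k) (c : ∀ p, Fin (n p)) :
    blockForm p (chooseVec c) = -1 := by
  rw [blockForm_eq_blockSum_sub_sum, Fintype.sum_sigma]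
  simp [chooseVec]

/-- The linear parts of the `d + k` inequalities: `x_i` for the coordinates `i` and `⟨x, f_p⟩` for
the blocks `p`. -/
def facetForm : blockIdx k n ⊕ Fin k → (blockIdx k n → ℝ) →L[ℝ] ℝ :=
  Sum.elim ContinuousLinearMap.proj blockForm

/-- The constant terms of the `d + k` inequalities. -/
def facetOffset : blockIdx k n ⊕ Fin k → ℝ :=
  Sum.elim (fun _ => 0) (fun _ => 1)

lemma mem_polyhedron_facetForm {x : blockIdx k n → ℝ} :
    x ∈ polyhedron facetForm facetOffset ↔ (∀ i, 0 ≤ x i) ∧ ∀ p, 0 ≤ blockForm p x + 1 := by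
  simp [polyhedron, facetForm, facetOffset]

lemma mem_polyP_of_blockSum_eq_one {z : blockIdx k n → ℝ} (hz : ∀ j, 0 ≤ z j)
    (hsum : ∀ p, ∑ a, z ⟨p, a⟩ = 1) : z ∈ polyP k n := by
  let vertices (p : Fin k) : Set (Fin (n p) → ℝ) :=
    Set.range fun i j => if i = j then (1 : ℝ) else 0
  let uncurry := (LinearEquiv.piCurry ℝ fun (p : Fin k) (_ : Fin (n p)) => ℝ).symm.toLinearMap
  have hcurry : (fun p a => z ⟨p, a⟩) ∈ convexHull ℝ (Set.univ.pi vertices) := by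
    refine mem_convexHull_pi fun p _ => ?_
    rw [convexHull_basis_eq_stdSimplex]
    exact ⟨fun a => hz _, hsum p⟩
  have himage : z ∈ convexHull ℝ (uncurry '' Set.univ.pi vertices) := by
    rw [← uncurry.image_convexHull]
    exact ⟨_, hcurry, rfl⟩
  refine convexHull_mono ?_ himage
  rintro _ ⟨u, hu, rfl⟩
  choose c hc using fun p => hu p (Set.mem_univ p)
  exact Or.inr ⟨c, funext fun j => (congrFun (hc j.1) j.2).symm⟩

lemma exists_mem_polyP_smul_le {x : blockIdx k n → ℝ} {t : ℝ} (hx : ∀ j, 0 ≤ x j) (ht : 0 < t)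
    (hblock : ∀ p, t ≤ ∑ a, x ⟨p, a⟩) : ∃ z ∈ polyP k n, ∑ j, z j = k ∧ ∀ j, t * z j ≤ x j := by
  have hpos (p : Fin k) : 0 < ∑ a, x ⟨p, a⟩ := ht.trans_le (hblock p)
  let z : blockIdx k n → ℝ := fun j => x j / ∑ a, x ⟨j.1, a⟩
  have hz (p : Fin k) : ∑ a, z ⟨p, a⟩ = 1 :=
    (Finset.sum_div ..).symm.trans (div_self (hpos p).ne')
  refine ⟨z, mem_polyP_of_blockSum_eq_one (fun j => div_nonneg (hx j) (hpos _).le) hz, ?_,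
    fun j => ?_⟩
  · simp [Fintype.sum_sigma, hz]
  · rw [mul_div_assoc', div_le_iff₀ (hpos _), mul_comm]
    exact mul_le_mul_of_nonneg_left (hblock _) (hx j)

lemma polyP_subset_polyhedron : polyP k n ⊆ polyhedron facetForm facetOffset := by
  refine convexHull_min ?_ convex_polyhedron
  rintro _ ((rfl | ⟨j, rfl⟩) | ⟨c, rfl⟩) <;>
    refine mem_polyhedron_facetForm.2 ⟨fun i => ?_, fun p => ?_⟩
  · simp
  · simp
  · rw [Pi.single_apply]
    split_ifs <;> norm_num
  · have hk : (1 : ℝ) ≤ k := Nat.one_le_cast.2 p.pos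
    rw [blockForm_single, fvec]
    split_ifs <;> linarith
  · unfold chooseVec
    split_ifs <;> norm_num
  · simp [blockForm_chooseVec]

lemma mem_polyP_of_sum_le_one {x : blockIdx k n → ℝ} (hx : ∀ j, 0 ≤ x j) (hsum : ∑ j, x j ≤ 1) :
    x ∈ polyP k n := by
  simpa using smul_add_mem_of_convex convex_polyP single_mem_polyP zero_mem_polyP
    (sub_nonneg.2 hsum) hx (sub_add_cancel 1 _)

lemma mem_polyP_of_one_lt_sum {x : blockIdx k n → ℝ} (hx : ∀ j, 0 ≤ x j)
    (hform : ∀ p, 0 ≤ blockForm p x + 1) (hsum : 1 < ∑ j, x j) : x ∈ polyP k n := by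
  simp only [blockForm_eq_blockSum_sub_sum] at hform
  have hk : (0 : ℝ) < k - 1 := by
    obtain ⟨⟨p, _⟩, -, -⟩ := Finset.exists_ne_zero_of_sum_ne_zero (zero_lt_one.trans hsum).ne'
    exact pos_of_mul_pos_left (by linarith [hform p]) (Finset.sum_nonneg fun a _ => hx ⟨p, a⟩)
  obtain ⟨t, ht⟩ : ∃ t, t * ((k : ℝ) - 1) = ∑ j, x j - 1 := ⟨_, div_mul_cancel₀ _ hk.ne'⟩
  have htpos : 0 < t := pos_of_mul_pos_left (by linarith) hk.le
  have hblock (p : Fin k) : t ≤ ∑ a, x ⟨p, a⟩ :=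
    le_of_mul_le_mul_right (by linarith [hform p]) hk
  obtain ⟨z, hz, hzsum, hzx⟩ := exists_mem_polyP_smul_le hx htpos hblock
  have hmass : t + ∑ j, (x - t • z) j = 1 := by
    simp only [Pi.sub_apply, Pi.smul_apply, smul_eq_mul, Finset.sum_sub_distrib, ← Finset.mul_sum,
      hzsum]
    linarith
  rw [← add_sub_cancel (t • z) x]
  exact smul_add_mem_of_convex convex_polyP single_mem_polyP hz htpos.le
    (fun j => sub_nonneg.2 (hzx j)) hmass

theorem polyP_eq_polyhedron : polyP k n = polyhedron facetForm facetOffset := by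
  refine polyP_subset_polyhedron.antisymm fun x hx => ?_
  obtain ⟨hcoord, hform⟩ := mem_polyhedron_facetForm.1 hx
  rcases le_or_gt (∑ j, x j) 1 with hsum | hsum
  · exact mem_polyP_of_sum_le_one hcoord hsum
  · exact mem_polyP_of_one_lt_sum hcoord hform hsum

lemma tightFace_inl (i : blockIdx k n) :
    tightFace facetForm facetOffset (Sum.inl i) = polyP k n ∩ {x | x i = 0} := by
  simp [tightFace, polyP_eq_polyhedron, facetForm, facetOffset]

lemma tightFace_inr (p : Fin k) : tightFace facetForm facetOffset (Sum.inr p) =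
    polyP k n ∩ {x | (∑ j : blockIdx k n, x j * fvec p j) + 1 = 0} := by
  simp [tightFace, polyP_eq_polyhedron, facetForm, facetOffset, blockForm_apply]

lemma zero_mem_tightFace_inl (i : blockIdx k n) :
    0 ∈ tightFace facetForm facetOffset (Sum.inl i) := by
  simp [tightFace_inl, zero_mem_polyP]

lemma zero_notMem_tightFace_inr (p : Fin k) :
    (0 : blockIdx k n → ℝ) ∉ tightFace facetForm facetOffset (Sum.inr p) := by
  simp [tightFace_inr]

lemma single_mem_tightFace_inl_iff {i j : blockIdx k n} :
    Pi.single j 1 ∈ tightFace facetForm facetOffset (Sum.inl i) ↔ i ≠ j := by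
  simp [tightFace_inl, single_mem_polyP, Pi.single_apply]

lemma single_mem_tightFace_inr_iff {p : Fin k} {j : blockIdx k n} :
    Pi.single j 1 ∈ tightFace facetForm facetOffset (Sum.inr p) ↔ (j.1 = p → k = 1) := by
  have hk : (k : ℝ) - 2 + 1 = 0 ↔ k = 1 := by
    rw [← Nat.cast_eq_one (R := ℝ)]
    constructor <;> intro h <;> linarith
  simp only [tightFace_inr, ← blockForm_apply, Set.mem_inter_iff, single_mem_polyP, true_and,
    Set.mem_ofPred_eq, blockForm_single]
  by_cases hj : j.1 = p <;> simp [fvec, hj, hk]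

lemma chooseVec_mem_tightFace_inr (p : Fin k) (c : ∀ p, Fin (n p)) :
    chooseVec c ∈ tightFace facetForm facetOffset (Sum.inr p) := by
  simp [tightFace_inr, ← blockForm_apply, chooseVec_mem_polyP, blockForm_chooseVec]

lemma isFacet_tightFace_inl (i : blockIdx k n) :
    IsFacet (polyP k n) (tightFace facetForm facetOffset (Sum.inl i)) := by
  rw [polyP_eq_polyhedron]
  refine isFacet_tightFace (w := Pi.single i 1) ⟨0, zero_mem_tightFace_inl i⟩
    (polyP_subset_polyhedron (single_mem_polyP i)) (by simp [facetForm, facetOffset]) ?_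
  rw [vectorSpan_eq_span_of_zero_mem (Set.mem_insert_of_mem _ (zero_mem_tightFace_inl i))]
  refine eq_top_of_forall_single_mem fun j => Submodule.subset_span ?_
  rcases eq_or_ne i j with rfl | hij
  · exact Set.mem_insert _ _
  · exact Set.mem_insert_of_mem _ (single_mem_tightFace_inl_iff.2 hij)

lemma single_mem_span_tightFace_inr (hn : ∀ p, 0 < n p) (p : Fin k) (j : blockIdx k n) :
    Pi.single j 1 ∈ Submodule.span ℝ (tightFace facetForm facetOffset (Sum.inr p)) := by
  have hoff (i : blockIdx k n) (hi : i.1 ≠ p) :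
      Pi.single i 1 ∈ Submodule.span ℝ (tightFace facetForm facetOffset (Sum.inr p)) :=
    Submodule.subset_span (single_mem_tightFace_inr_iff.2 fun h => absurd h hi)
  rcases eq_or_ne j.1 p with hj | hj
  · obtain ⟨q, a⟩ := j
    obtain rfl : q = p := hj
    let c : ∀ q, Fin (n q) := Function.update (fun q => ⟨0, hn q⟩) q a
    have hsplit : Pi.single ⟨q, a⟩ 1 + ∑ r ∈ Finset.univ.erase q, Pi.single ⟨r, c r⟩ 1 =
        chooseVec c := by
      rw [chooseVec_eq_sum_single, ← Finset.add_sum_erase _ _ (Finset.mem_univ q)]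
      simp [c]
    rw [eq_sub_of_add_eq hsplit]
    exact Submodule.sub_mem _ (Submodule.subset_span (chooseVec_mem_tightFace_inr q c))
      (Submodule.sum_mem _ fun r hr => hoff _ (Finset.ne_of_mem_erase hr))
  · exact hoff j hj

lemma isFacet_tightFace_inr (hn : ∀ p, 0 < n p) (p : Fin k) :
    IsFacet (polyP k n) (tightFace facetForm facetOffset (Sum.inr p)) := by
  rw [polyP_eq_polyhedron]
  refine isFacet_tightFace (w := 0) ⟨_, chooseVec_mem_tightFace_inr p fun q => ⟨0, hn q⟩⟩
    (polyP_subset_polyhedron zero_mem_polyP) (by simp [facetOffset]) ?_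
  rw [vectorSpan_eq_span_of_zero_mem (Set.mem_insert _ _), Submodule.span_insert_zero]
  exact eq_top_of_forall_single_mem (single_mem_span_tightFace_inr hn p)

lemma tightFace_injective (hn : ∀ p, 0 < n p) :
    Function.Injective (tightFace (facetForm (k := k) (n := n)) facetOffset) := by
  rintro (i | p) (j | q) h
  · by_contra hij
    have hmem := single_mem_tightFace_inl_iff.2 (ne_of_apply_ne Sum.inl hij)
    exact single_mem_tightFace_inl_iff.1 (h.subset hmem) rfl
  · exact absurd (h.subset (zero_mem_tightFace_inl i)) (zero_notMem_tightFace_inr q)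
  · exact absurd (h.superset (zero_mem_tightFace_inl j)) (zero_notMem_tightFace_inr p)
  · by_contra hpq
    have hpq' : p ≠ q := ne_of_apply_ne Sum.inr hpq
    let j : blockIdx k n := ⟨q, ⟨0, hn q⟩⟩
    have hmem : Pi.single j 1 ∈ tightFace facetForm facetOffset (Sum.inr p) :=
      single_mem_tightFace_inr_iff.2 fun hqp => absurd hqp hpq'.symm
    obtain rfl : k = 1 := single_mem_tightFace_inr_iff.1 (h.subset hmem) rfl
    exact hpq' (Subsingleton.elim p q)

end BlockPolytope

theorem stmt_4 (k : ℕ) (hk : 0 < k) (n : Fin k → ℕ) (hn : ∀ p, 0 < n p) :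
    polyP k n =
      {x : blockIdx k n → ℝ |
        (∀ i : blockIdx k n, 0 ≤ x i) ∧
        ∀ p : Fin k, 0 ≤ (∑ j : blockIdx k n, x j * fvec p j) + 1} ∧
    (∀ i : blockIdx k n, IsFacet (polyP k n) (polyP k n ∩ {x | x i = 0})) ∧
    (∀ p : Fin k, IsFacet (polyP k n)
      (polyP k n ∩ {x | (∑ j : blockIdx k n, x j * fvec p j) + 1 = 0})) ∧
    Function.Injective
      (Sum.elim (fun i : blockIdx k n => polyP k n ∩ {x | x i = 0})
        (fun p : Fin k => polyP k n ∩ {x | (∑ j : blockIdx k n, x j * fvec p j) + 1 = 0})) ∧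
    {F : Set (blockIdx k n → ℝ) | IsFacet (polyP k n) F}.ncard =
      Fintype.card (blockIdx k n) + k := by
  have hfacet : ∀ h, IsFacet (polyP k n) (tightFace facetForm facetOffset h) :=
    Sum.rec isFacet_tightFace_inl (isFacet_tightFace_inr hn)
  have hfaces : {F | IsFacet (polyP k n) F} = Set.range (tightFace facetForm facetOffset) := by
    rw [polyP_eq_polyhedron] at hfacet ⊢
    exact setOf_isFacet_polyhedron hfacet
  have hinj := tightFace_injective hn
  simp only [← tightFace_inl, ← tightFace_inr]
  refine ⟨?_, fun i => hfacet _, fun p => hfacet _, ?_, ?_⟩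
  · rw [polyP_eq_polyhedron]
    exact Set.ext fun x => by simp [mem_polyhedron_facetForm, blockForm_apply]
  · rwa [← Sum.elim_comp_inl_inr (tightFace facetForm facetOffset)] at hinj
  · rw [hfaces, Set.ncard_range_of_injective hinj, Nat.card_eq_fintype_card, Fintype.card_sum,
      Fintype.card_fin]

end
end

section
/- Fix positive integers n_1,…,n_k with k ≥ 1 and d = n_1+⋯+n_k. For v ∈ V_{n_1,…,n_k} define w_v = (v_1,…,v_d, ⟨v, f_1⟩ + 1, …, ⟨v, f_k⟩ + 1) ∈ ℤ^{d+k}. Then the quotient of ℤ^{d+k} by the subgroup generated by {w_v : v ∈ V_{n_1,…,n_k}} is isomorphic to ℤ^{k−1}. (By the standard description of divisor class groups of normal toric rings via the facet data of Proposition 3.1, this says Cl(𝕜[P_{n_1,…,n_k}]) ≅ ℤ^{k−1}.) -/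
/-!
STATEMENT 7: for `v ∈ V_{n₁,…,n_k}` let
`w_v = (v₁,…,v_d, ⟨v,f₁⟩+1, …, ⟨v,f_k⟩+1) ∈ ℤ^{d+k}`.  Then
`ℤ^{d+k} / ⟨w_v : v ∈ V_{n₁,…,n_k}⟩ ≅ ℤ^{k−1}`
(the divisor class group `Cl(𝕜[P_{n₁,…,n_k}]) ≅ ℤ^{k−1}`).
-/

noncomputable section

/-- The lattice point `i₁ + ⋯ + i_k ∈ B_{n₁,…,n_k}`. -/
def chooseVecInt {k : ℕ} {n : Fin k → ℕ} (c : ∀ p, Fin (n p)) : blockIdx k n → ℤ :=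
  fun j => if c j.1 = j.2 then 1 else 0

/-- The lattice point set `V_{n₁,…,n_k} = {0} ∪ B_d ∪ B_{n₁,…,n_k}`. -/
def latticeSet (k : ℕ) (n : Fin k → ℕ) : Set (blockIdx k n → ℤ) :=
  {0} ∪ {v | ∃ j : blockIdx k n, v = Pi.single j 1} ∪
    {v | ∃ c : ∀ p, Fin (n p), v = chooseVecInt c}

/-- The integer vector `f_p = (k−2)·1_p − ∑_{q ≠ p} 1_q`. -/
def fvecInt {k : ℕ} {n : Fin k → ℕ} (p : Fin k) : blockIdx k n → ℤ :=
  fun j => if j.1 = p then (k : ℤ) - 2 else -1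

/-- `w_v = (v, ⟨v,f₁⟩+1, …, ⟨v,f_k⟩+1) ∈ ℤ^{d+k}`. -/
def wvec {k : ℕ} {n : Fin k → ℕ} (v : blockIdx k n → ℤ) : (blockIdx k n ⊕ Fin k) → ℤ :=
  Sum.elim v (fun p => (∑ j : blockIdx k n, v j * fvecInt p j) + 1)

/-!
Since `w_0 = (0, 1, …, 1)` and `w_v - w_0 = (v, ⟨v, f_1⟩, …, ⟨v, f_k⟩)`, and since the points `v`
include `0` and generate `ℤ^d`, the vectors `w_v` generate the sum of the graph of
`v ↦ (⟨v, f_1⟩, …, ⟨v, f_k⟩)` and `ℤ w_0`. Dividing by the graph leaves `ℤ^k`, in which `w_0`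
becomes `(1, …, 1)`, and `ℤ^k / ℤ (1, …, 1) ≅ ℤ^(k-1)`.
-/

section Translate

variable {M A : Type*} [AddGroup M] [AddGroup A]

theorem closure_image_add_const (ψ : M →+ A) (e : A) {S : Set M} (h0 : 0 ∈ S) :
    AddSubgroup.closure ((fun v => ψ v + e) '' S) =
      (AddSubgroup.closure S).map ψ ⊔ AddSubgroup.zmultiples e := by
  apply le_antisymm
  · rw [AddSubgroup.closure_le]
    rintro _ ⟨v, hv, rfl⟩
    exact AddSubgroup.add_mem_sup
      (AddSubgroup.mem_map_of_mem ψ (AddSubgroup.subset_closure hv))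
      (AddSubgroup.mem_zmultiples e)
  · have translate_mem {v : M} (hv : v ∈ S) :
        ψ v + e ∈ AddSubgroup.closure ((fun v => ψ v + e) '' S) :=
      AddSubgroup.subset_closure ⟨v, hv, rfl⟩
    have e_mem : e ∈ AddSubgroup.closure ((fun v => ψ v + e) '' S) := by
      simpa using translate_mem h0
    refine sup_le ?_ (AddSubgroup.zmultiples_le_of_mem e_mem)
    rw [AddMonoidHom.map_closure, AddSubgroup.closure_le]
    rintro _ ⟨v, hv, rfl⟩
    simpa using AddSubgroup.sub_mem _ (translate_mem hv) e_mem

end Translate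

section Graph

variable {ι κ G : Type*} [AddCommGroup G] (φ : (ι → G) →+ (κ → G))

/-- The parametrization `v ↦ (v, φ v)` of the graph of `φ : G^ι → G^κ`, with values in `G^(ι ⊕ κ)`
rather than in `G^ι × G^κ`. -/
def graphHom : (ι → G) →+ (ι ⊕ κ → G) where
  toFun v := Sum.elim v (φ v)
  map_zero' := by simp
  map_add' v w := by rw [map_add, Sum.elim_add_add]

/-- The map `(v, y) ↦ y - φ v` on `G^(ι ⊕ κ)`, which identifies the quotient by the graph of `φ`
with `G^κ`. -/
def graphDefect : (ι ⊕ κ → G) →+ (κ → G) where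
  toFun x := x ∘ Sum.inr - φ (x ∘ Sum.inl)
  map_zero' := by simp
  map_add' x y := by simp only [Pi.add_comp, map_add, add_sub_add_comm]

@[simp]
theorem graphDefect_sumElim (v : ι → G) (y : κ → G) :
    graphDefect φ (Sum.elim v y) = y - φ v :=
  rfl

theorem graphDefect_surjective : Function.Surjective (graphDefect φ) :=
  fun y => ⟨Sum.elim 0 y, by simp⟩

theorem ker_graphDefect : (graphDefect φ).ker = (graphHom φ).range := by
  ext x
  constructor
  · intro hx
    have hy : x ∘ Sum.inr = φ (x ∘ Sum.inl) := sub_eq_zero.mp hx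
    exact ⟨x ∘ Sum.inl, (congrArg _ hy.symm).trans (Sum.elim_comp_inl_inr x)⟩
  · rintro ⟨v, rfl⟩
    exact sub_self (φ v)

theorem comap_graphDefect_zmultiples (e : κ → G) :
    (AddSubgroup.zmultiples e).comap (graphDefect φ) =
      (graphHom φ).range ⊔ AddSubgroup.zmultiples (Sum.elim (0 : ι → G) e) := by
  have map_eq : (AddSubgroup.zmultiples (Sum.elim (0 : ι → G) e)).map (graphDefect φ) =
      AddSubgroup.zmultiples e := by
    rw [AddMonoidHom.map_zmultiples, graphDefect_sumElim, map_zero, sub_zero]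
  rw [← map_eq, AddSubgroup.comap_map_eq, ker_graphDefect, sup_comm]

end Graph

section DiffZero

/-- The map `y ↦ (y_1 - y_0, …, y_m - y_0)`, which identifies the quotient of `G^(m + 1)` by the
diagonal with `G^m`. -/
def diffZero (G : Type*) [AddCommGroup G] (m : ℕ) : (Fin (m + 1) → G) →+ (Fin m → G) where
  toFun y i := y i.succ - y 0
  map_zero' := by ext; simp
  map_add' y z := by ext; simp only [Pi.add_apply, add_sub_add_comm]

theorem diffZero_surjective (G : Type*) [AddCommGroup G] (m : ℕ) :
    Function.Surjective (diffZero G m) :=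
  fun z => ⟨Fin.cons 0 z, by ext; simp [diffZero]⟩

theorem ker_diffZero_int (m : ℕ) : (diffZero ℤ m).ker = AddSubgroup.zmultiples 1 := by
  ext y
  rw [AddSubgroup.mem_zmultiples_iff]
  constructor
  · intro hy
    refine ⟨y 0, funext (Fin.cases (by simp) fun i => ?_)⟩
    have hi : y i.succ = y 0 := sub_eq_zero.mp (congrFun hy i)
    simp [hi]
  · rintro ⟨a, rfl⟩
    ext i
    simp [diffZero]

end DiffZero

theorem stmt_7_general {ι : Type*} {m : ℕ} (φ : (ι → ℤ) →+ (Fin (m + 1) → ℤ)) {S : Set (ι → ℤ)}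
    (h0 : 0 ∈ S) (hS : AddSubgroup.closure S = ⊤) :
    Nonempty
      (((ι ⊕ Fin (m + 1) → ℤ) ⧸ AddSubgroup.closure ((fun v => Sum.elim v (φ v + 1)) '' S)) ≃+
        (Fin m → ℤ)) := by
  have lift_eq : (fun v => Sum.elim v (φ v + 1)) =
      fun v => graphHom φ v + Sum.elim (0 : ι → ℤ) (1 : Fin (m + 1) → ℤ) := by
    funext v
    simp [graphHom, ← Sum.elim_add_add]
  have closure_eq_ker : AddSubgroup.closure ((fun v => Sum.elim v (φ v + 1)) '' S) =
      ((diffZero ℤ m).comp (graphDefect φ)).ker := by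
    rw [lift_eq, closure_image_add_const _ _ h0, hS, ← AddMonoidHom.range_eq_map,
      ← AddMonoidHom.comap_ker, ker_diffZero_int, comap_graphDefect_zmultiples]
  exact ⟨(QuotientAddGroup.quotientAddEquivOfEq closure_eq_ker).trans
    (QuotientAddGroup.quotientKerEquivOfSurjective _
      ((diffZero_surjective ℤ m).comp (graphDefect_surjective φ)))⟩

theorem zero_mem_latticeSet (k : ℕ) (n : Fin k → ℕ) : 0 ∈ latticeSet k n :=
  Or.inl (Or.inl rfl)

theorem single_mem_latticeSet {k : ℕ} {n : Fin k → ℕ} (j : blockIdx k n) :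
    Pi.single j 1 ∈ latticeSet k n :=
  Or.inl (Or.inr ⟨j, rfl⟩)

theorem closure_latticeSet (k : ℕ) (n : Fin k → ℕ) :
    AddSubgroup.closure (latticeSet k n) = ⊤ := by
  refine (AddSubgroup.eq_top_iff' _).mpr fun x => ?_
  rw [pi_eq_sum_univ' x]
  exact AddSubgroup.sum_mem _ fun j _ => AddSubgroup.zsmul_mem _
    (AddSubgroup.subset_closure (single_mem_latticeSet j)) _

/-- The map `v ↦ (⟨v, f_1⟩, …, ⟨v, f_k⟩)`, as multiplication of row vectors by the matrix with
columns `f_1, …, f_k`. -/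
def facetForms (k : ℕ) (n : Fin k → ℕ) : (blockIdx k n → ℤ) →+ (Fin k → ℤ) :=
  (Matrix.of fun j p => fvecInt p j).vecMulLinear.toAddMonoidHom

theorem stmt_7 (k : ℕ) (hk : 1 ≤ k) (n : Fin k → ℕ) (hn : ∀ p, 0 < n p) :
    Nonempty
      ((((blockIdx k n ⊕ Fin k) → ℤ) ⧸
          AddSubgroup.closure (wvec '' latticeSet k n)) ≃+
        (Fin (k - 1) → ℤ)) := by
  obtain ⟨m, rfl⟩ := Nat.exists_eq_add_of_le' hk
  exact stmt_7_general (facetForms (m + 1) n) (zero_mem_latticeSet _ n) (closure_latticeSet _ n)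

end
end

section
/- Let k ≥ 3 and let n_1,…,n_k be positive integers. Then the toric ideal I_{P_{n_1,…,n_k}} is not generated by its elements of total degree at most 2; that is, the ideal generated by {f ∈ I_{P_{n_1,…,n_k}} : deg f ≤ 2} is strictly contained in I_{P_{n_1,…,n_k}}. (Consequently 𝕜[P_{n_1,…,n_k}] is not isomorphic to any Hibi ring, since toric ideals of Hibi rings are generated by quadratic binomials.) -/
/-!
STATEMENT 8: for `k ≥ 3` the toric ideal `I_{P_{n₁,…,n_k}}` is not generated by
its elements of total degree at most `2`: the ideal generated by
`{f ∈ I : deg f ≤ 2}` is strictly contained in `I`.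
-/

noncomputable section

/-- The `𝕜`-algebra map `𝕜[x_v : v ∈ V] → 𝕜[t₀, t₁^{±1}, …, t_d^{±1}]`,
`x_v ↦ t^v t₀`, realized in the group algebra of `ℤ^d × ℤ`. -/
def toricMap (𝕜 : Type*) [Field 𝕜] (k : ℕ) (n : Fin k → ℕ) :
    MvPolynomial (latticeSet k n) 𝕜 →ₐ[𝕜]
      AddMonoidAlgebra 𝕜 ((blockIdx k n → ℤ) × ℤ) :=
  MvPolynomial.aeval
    (fun v : latticeSet k n => AddMonoidAlgebra.single ((v : blockIdx k n → ℤ), (1 : ℤ)) (1 : 𝕜))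

/-- The toric ideal `I_{P_{n₁,…,n_k}}`. -/
def toricIdeal (𝕜 : Type*) [Field 𝕜] (k : ℕ) (n : Fin k → ℕ) :
    Ideal (MvPolynomial (latticeSet k n) 𝕜) :=
  RingHom.ker (toricMap 𝕜 k n)

/-!
Choose one basis vector `e_p` in each block and let `c = e_1 + ⋯ + e_k`. The binomial
`x_c x_0^{k-1} - x_{e_1} ⋯ x_{e_k}` lies in the toric ideal. On the other hand, a divisor of
`x_c x_0^{k-1}` of degree `< k` is the only monomial with its image: its points add up to `0` or
to `c`. The coordinates of `c` add up to `k` while those of `0` and of a basis vector add up to at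
most `1`, so fewer than `k` lattice points with sum `c` have to include a point of
`B_{n₁,…,n_k}`, which can only be `c` itself, and then the others are `0`. So no element of the
toric ideal of degree `< k` involves a divisor of `x_c x_0^{k-1}`, a property which is inherited
by the whole ideal that these elements generate.
-/

section MonomialMap

variable {σ M : Type*} [AddCommMonoid M]

/-- The `R`-algebra map `x_s ↦ t^{A s}` whose kernel is the toric ideal of the configuration `A`;
it sends `x^u` to `t^{weight A u}`. -/
def monomialMap (R : Type*) [CommSemiring R] (A : σ → M) :
    MvPolynomial σ R →ₐ[R] AddMonoidAlgebra R M :=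
  MvPolynomial.aeval fun s => AddMonoidAlgebra.single (A s) 1

/-- The monomial `x^u` is the only one with its image under `monomialMap R A`. -/
def IsAloneInFiber (A : σ → M) (u : σ →₀ ℕ) : Prop :=
  ∀ ⦃w : σ →₀ ℕ⦄, Finsupp.weight A w = Finsupp.weight A u → w = u

lemma monomialMap_monomial {R : Type*} [CommSemiring R] (A : σ → M) (u : σ →₀ ℕ) (r : R) :
    monomialMap R A (MvPolynomial.monomial u r) =
      AddMonoidAlgebra.single (Finsupp.weight A u) r := by
  have map_X_pow (s : σ) (m : ℕ) :
      monomialMap R A (MvPolynomial.X s) ^ m = AddMonoidAlgebra.single (m • A s) 1 := by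
    rw [monomialMap, MvPolynomial.aeval_X, AddMonoidAlgebra.single_pow, one_pow]
  induction u using Finsupp.induction_linear generalizing r with
  | zero =>
    rw [MvPolynomial.monomial_zero', ← MvPolynomial.algebraMap_eq, AlgHom.commutes, map_zero]
    rfl
  | add u v hu hv =>
    rw [← one_mul r, ← MvPolynomial.monomial_mul, map_mul, hu, hv,
      AddMonoidAlgebra.single_mul_single, map_add]
  | single s m =>
    rw [← MvPolynomial.C_mul_X_pow_eq_monomial, map_mul, map_pow, map_X_pow,
      ← MvPolynomial.algebraMap_eq, AlgHom.commutes, ← Algebra.smul_def,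
      AddMonoidAlgebra.smul_single', mul_one, Finsupp.weight_single]

lemma coeff_monomialMap_weight {R : Type*} [CommSemiring R] {A : σ → M} {u : σ →₀ ℕ}
    (hu : IsAloneInFiber A u) (f : MvPolynomial σ R) :
    (monomialMap R A f).coeff (Finsupp.weight A u) = f.coeff u := by
  classical
  induction f using MvPolynomial.induction_on' with
  | monomial w r =>
    have same_weight_iff : Finsupp.weight A w = Finsupp.weight A u ↔ w = u :=
      ⟨fun h => hu h, fun h => h ▸ rfl⟩
    rw [monomialMap_monomial, AddMonoidAlgebra.coeff_single, Finsupp.single_apply,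
      MvPolynomial.coeff_monomial]
    simp only [same_weight_iff]
  | add f g hf hg =>
    rw [map_add, AddMonoidAlgebra.coeff_add, Finsupp.add_apply, hf, hg, MvPolynomial.coeff_add]

lemma coeff_eq_zero_of_mem_span {R : Type*} [CommSemiring R] {S : Set (MvPolynomial σ R)}
    {u : σ →₀ ℕ} (hS : ∀ f ∈ S, ∀ w ≤ u, f.coeff w = 0) {f : MvPolynomial σ R}
    (hf : f ∈ Ideal.span S) : f.coeff u = 0 := by
  classical
  suffices ∀ w ≤ u, f.coeff w = 0 from this u le_rfl
  induction hf using Submodule.span_induction with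
  | mem f hf => exact hS f hf
  | zero => exact fun w _ => MvPolynomial.coeff_zero w
  | add f g _ _ hf hg =>
    intro w hw
    rw [MvPolynomial.coeff_add, hf w hw, hg w hw, add_zero]
  | smul g f _ hf =>
    intro w hw
    rw [smul_eq_mul, MvPolynomial.coeff_mul]
    refine Finset.sum_eq_zero fun q hq => ?_
    have q_le : q.2 ≤ w := Finset.HasAntidiagonal.mem_antidiagonal.mp hq ▸ le_add_self
    rw [hf q.2 (q_le.trans hw), mul_zero]

theorem span_totalDegree_lt_lt_ker_monomialMap (R : Type*) [CommRing R] [Nontrivial R]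
    {A : σ → M} {u v : σ →₀ ℕ} (hne : v ≠ u) (hweight : Finsupp.weight A v = Finsupp.weight A u)
    {d : ℕ} (halone : ∀ w ≤ u, w.degree < d → IsAloneInFiber A w) :
    Ideal.span {f | f ∈ RingHom.ker (monomialMap R A) ∧ f.totalDegree < d} <
      RingHom.ker (monomialMap R A) := by
  classical
  refine lt_of_le_not_ge (Ideal.span_le.mpr fun f hf => hf.1) fun hle => ?_
  have binomial_mem : MvPolynomial.monomial u (1 : R) - MvPolynomial.monomial v 1 ∈
      RingHom.ker (monomialMap R A) := by
    rw [RingHom.mem_ker, map_sub, monomialMap_monomial, monomialMap_monomial, hweight, sub_self]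
  have coeff_low : ∀ f ∈ {f | f ∈ RingHom.ker (monomialMap R A) ∧ f.totalDegree < d},
      ∀ w ≤ u, f.coeff w = 0 := by
    rintro f ⟨hf, hd⟩ w hw
    by_contra hcoeff
    have degree_lt : w.degree < d :=
      (MvPolynomial.le_totalDegree (MvPolynomial.mem_support_iff.mpr hcoeff)).trans_lt hd
    apply hcoeff
    rw [← coeff_monomialMap_weight (halone w hw degree_lt) f, RingHom.mem_ker.mp hf,
      AddMonoidAlgebra.coeff_zero, Finsupp.zero_apply]
  have coeff_binomial := coeff_eq_zero_of_mem_span coeff_low (hle binomial_mem)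
  rw [MvPolynomial.coeff_sub, MvPolynomial.coeff_monomial, MvPolynomial.coeff_monomial,
    if_pos rfl, if_neg hne, sub_zero] at coeff_binomial
  exact one_ne_zero coeff_binomial

lemma weight_prodMk_one {S : Type*} [AddCommMonoidWithOne S] (a : σ → M) (u : σ →₀ ℕ) :
    Finsupp.weight (fun s => (a s, (1 : S))) u = (Finsupp.weight a u, (u.degree : S)) := by
  induction u using Finsupp.induction_linear with
  | zero => simp only [map_zero, Nat.cast_zero, Prod.mk_zero_zero]
  | add u v hu hv => simp [hu, hv]
  | single s m => simp [Finsupp.weight_single]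

end MonomialMap

section LatticePoints

variable {k : ℕ} {n : Fin k → ℕ}

/-- The point `0` of `V_{n₁,…,n_k}`. -/
def latticeSet.origin : latticeSet k n := ⟨0, Or.inl (Or.inl rfl)⟩

/-- The points of `B_d ⊆ V_{n₁,…,n_k}`. -/
def latticeSet.basisPoint (j : blockIdx k n) : latticeSet k n :=
  ⟨Pi.single j 1, Or.inl (Or.inr ⟨j, rfl⟩)⟩

/-- The points of `B_{n₁,…,n_k} ⊆ V_{n₁,…,n_k}`; `c` chooses one basis vector in each block. -/
def latticeSet.transversal (c : ∀ p, Fin (n p)) : latticeSet k n :=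
  ⟨chooseVecInt c, Or.inr ⟨c, rfl⟩⟩

open latticeSet

/-- The sum of the points of `V_{n₁,…,n_k}` with multiplicities `u`, that is, the exponent of
`t₁, …, t_d` in the image of the monomial `x^u`. -/
abbrev pointSum : (latticeSet k n →₀ ℕ) →+ (blockIdx k n → ℤ) :=
  Finsupp.weight (Subtype.val : latticeSet k n → blockIdx k n → ℤ)

lemma sum_chooseVecInt (c : ∀ p, Fin (n p)) : ∑ j, chooseVecInt c j = k := by
  rw [Fintype.sum_sigma]
  simp [chooseVecInt]

lemma chooseVecInt_eq_sum_single (c : ∀ p, Fin (n p)) :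
    chooseVecInt c = ∑ p, (Pi.single ⟨p, c p⟩ 1 : blockIdx k n → ℤ) := by
  funext ⟨p, i⟩
  rw [Finset.sum_apply, Finset.sum_eq_single p]
  · simp [chooseVecInt, Pi.single_apply, eq_comm]
  · exact fun q _ hq => Pi.single_eq_of_ne (fun h => hq (congrArg Sigma.fst h).symm) _
  · simp

lemma chooseVecInt_nonneg (c : ∀ p, Fin (n p)) : 0 ≤ chooseVecInt c := fun j => by
  simp only [chooseVecInt, Pi.zero_apply]
  split_ifs <;> simp

lemma eq_of_chooseVecInt_le {c c' : ∀ p, Fin (n p)} (h : chooseVecInt c' ≤ chooseVecInt c) :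
    c' = c := by
  funext p
  by_contra hne
  have one_le_zero : (1 : ℤ) ≤ 0 := by simpa [chooseVecInt, Ne.symm hne] using h ⟨p, c' p⟩
  exact absurd one_le_zero (by decide)

namespace latticeSet

lemma coe_nonneg (v : latticeSet k n) : 0 ≤ (v : blockIdx k n → ℤ) := by
  obtain ⟨_, (rfl | ⟨j, rfl⟩) | ⟨c, rfl⟩⟩ := v
  · exact le_rfl
  · exact Pi.single_nonneg.mpr zero_le_one
  · exact chooseVecInt_nonneg c

lemma eq_origin_of_coe_nonpos {v : latticeSet k n} (hv : (v : blockIdx k n → ℤ) ≤ 0) :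
    v = origin :=
  Subtype.ext (le_antisymm hv (coe_nonneg v))

lemma sum_coe_le_one {v : latticeSet k n} (hv : ∀ c, v ≠ transversal c) :
    ∑ j, (v : blockIdx k n → ℤ) j ≤ 1 := by
  obtain ⟨_, (rfl | ⟨j, rfl⟩) | ⟨c, rfl⟩⟩ := v
  · simp
  · simp
  · exact absurd rfl (hv c)

lemma transversal_ne_origin (hk : k ≠ 0) (c : ∀ p, Fin (n p)) : transversal c ≠ origin := by
  intro h
  have sum_eq_zero := congrArg (fun v : latticeSet k n => ∑ j, (v : blockIdx k n → ℤ) j) h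
  simp [transversal, origin, sum_chooseVecInt, hk] at sum_eq_zero

lemma basisPoint_ne_origin (j : blockIdx k n) : basisPoint j ≠ origin :=
  fun h => Pi.single_ne_zero_iff.mpr one_ne_zero (congrArg Subtype.val h)

end latticeSet

lemma coe_le_pointSum {u : latticeSet k n →₀ ℕ} {v : latticeSet k n} (hv : u v ≠ 0) :
    (v : blockIdx k n → ℤ) ≤ pointSum u :=
  Finsupp.le_weight_of_ne_zero coe_nonneg hv

lemma sum_pointSum (u : latticeSet k n →₀ ℕ) :
    ∑ j, pointSum u j = ∑ v ∈ u.support, (u v : ℤ) * ∑ j, (v : blockIdx k n → ℤ) j := by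
  simp only [pointSum, Finsupp.weight_apply, Finsupp.sum, Finset.sum_apply, nsmul_eq_mul,
    Finset.mul_sum]
  exact Finset.sum_comm

lemma sum_pointSum_le_degree {u : latticeSet k n →₀ ℕ} (hu : ∀ c, u (transversal c) = 0) :
    ∑ j, pointSum u j ≤ u.degree := by
  rw [sum_pointSum, Finsupp.degree_apply, Nat.cast_sum]
  refine Finset.sum_le_sum fun v hv => mul_le_of_le_one_right (Int.natCast_nonneg _) ?_
  refine sum_coe_le_one fun c hc => Finsupp.mem_support_iff.mp hv ?_
  rw [hc, hu c]

lemma eq_single_origin_of_pointSum_eq_zero {u : latticeSet k n →₀ ℕ} (hu : pointSum u = 0) :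
    u = Finsupp.single origin u.degree := by
  have support_subset : u.support ⊆ {origin} := fun v hv =>
    Finset.mem_singleton.mpr <|
      eq_origin_of_coe_nonpos (hu ▸ coe_le_pointSum (Finsupp.mem_support_iff.mp hv))
  obtain ⟨m, rfl⟩ := Finsupp.support_subset_singleton'.mp support_subset
  rw [Finsupp.degree_single]

lemma transversal_apply_ne_zero_of_pointSum_eq {u : latticeSet k n →₀ ℕ} {c : ∀ p, Fin (n p)}
    (hu : pointSum u = chooseVecInt c) (hlt : u.degree < k) : u (transversal c) ≠ 0 := by
  obtain ⟨c', hc'⟩ : ∃ c', u (transversal c') ≠ 0 := by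
    by_contra! hnone
    have sum_le := sum_pointSum_le_degree hnone
    rw [hu, sum_chooseVecInt] at sum_le
    omega
  have c'_eq : c' = c := eq_of_chooseVecInt_le (hu ▸ coe_le_pointSum hc')
  rwa [← c'_eq]

lemma eq_single_transversal_add_single_origin {u : latticeSet k n →₀ ℕ} {c : ∀ p, Fin (n p)}
    (hu : pointSum u = chooseVecInt c) (hlt : u.degree < k) :
    u = Finsupp.single (transversal c) 1 + Finsupp.single origin (u.degree - 1) := by
  obtain ⟨w, rfl⟩ : ∃ w, u = Finsupp.single (transversal c) 1 + w :=
    exists_add_of_le (Finsupp.single_le_iff.mpr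
      (Nat.one_le_iff_ne_zero.mpr (transversal_apply_ne_zero_of_pointSum_eq hu hlt)))
  have pointSum_w : pointSum w = 0 := by
    rwa [map_add, Finsupp.weight_single, one_smul, transversal, add_eq_left] at hu
  rw [map_add, Finsupp.degree_single, Nat.add_sub_cancel_left,
    ← eq_single_origin_of_pointSum_eq_zero pointSum_w]

lemma pointSum_eq_zero_or_eq_chooseVecInt (hk : k ≠ 0) {c : ∀ p, Fin (n p)} {a : ℕ}
    {u : latticeSet k n →₀ ℕ}
    (hu : u ≤ Finsupp.single (transversal c) 1 + Finsupp.single origin a) :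
    pointSum u = 0 ∨ pointSum u = chooseVecInt c := by
  classical
  have pointSum_u : pointSum u = u (transversal c) • chooseVecInt c := by
    rw [pointSum, Finsupp.weight_apply, Finsupp.sum]
    refine Finset.sum_eq_single (transversal c) (fun v hv hvc => ?_) fun h => ?_
    · have hv_origin : v = origin := by
        by_contra hvo
        exact Finsupp.mem_support_iff.mp hv (by simpa [hvc, hvo] using hu v)
      rw [hv_origin, origin, smul_zero]
    · rw [Finsupp.notMem_support_iff.mp h, zero_smul]
  have apply_le_one : u (transversal c) ≤ 1 := by
    simpa [transversal_ne_origin hk c] using hu (transversal c)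
  rw [pointSum_u]
  obtain h | h := Nat.le_one_iff_eq_zero_or_eq_one.mp apply_le_one
  · exact .inl (by rw [h, zero_smul])
  · exact .inr (by rw [h, one_smul])

/-- The configuration `{(v, 1) : v ∈ V_{n₁,…,n_k}}`, of which `toricIdeal 𝕜 k n` is the toric
ideal. -/
def homogenizedPoint (v : latticeSet k n) : (blockIdx k n → ℤ) × ℤ := (v, 1)

lemma weight_homogenizedPoint (u : latticeSet k n →₀ ℕ) :
    Finsupp.weight homogenizedPoint u = (pointSum u, (u.degree : ℤ)) :=
  weight_prodMk_one _ u

lemma isAloneInFiber_of_le_of_degree_lt {c : ∀ p, Fin (n p)} {a : ℕ} {u : latticeSet k n →₀ ℕ}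
    (hu : u ≤ Finsupp.single (transversal c) 1 + Finsupp.single origin a) (hlt : u.degree < k) :
    IsAloneInFiber homogenizedPoint u := by
  intro w hw
  rw [weight_homogenizedPoint, weight_homogenizedPoint, Prod.mk.injEq, Nat.cast_inj] at hw
  obtain ⟨pointSum_eq, degree_eq⟩ := hw
  obtain h | h := pointSum_eq_zero_or_eq_chooseVecInt (Nat.ne_zero_of_lt hlt) hu
  · rw [eq_single_origin_of_pointSum_eq_zero h,
      eq_single_origin_of_pointSum_eq_zero (pointSum_eq.trans h), degree_eq]
  · rw [eq_single_transversal_add_single_origin h hlt,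
      eq_single_transversal_add_single_origin (pointSum_eq.trans h) (degree_eq ▸ hlt), degree_eq]

lemma weight_sum_single_basisPoint (hk : k ≠ 0) (c : ∀ p, Fin (n p)) :
    Finsupp.weight homogenizedPoint (∑ p, Finsupp.single (basisPoint ⟨p, c p⟩) 1) =
      Finsupp.weight homogenizedPoint
        (Finsupp.single (transversal c) 1 + Finsupp.single origin (k - 1)) := by
  rw [weight_homogenizedPoint, weight_homogenizedPoint]
  congr 1
  · simp only [map_sum, map_add, Finsupp.weight_single, one_smul, basisPoint, transversal, origin,
      smul_zero, add_zero, chooseVecInt_eq_sum_single]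
  · simp only [map_sum, map_add, Finsupp.degree_single, Finset.sum_const, Finset.card_univ,
      Fintype.card_fin, smul_eq_mul, mul_one, Nat.add_sub_cancel' (Nat.one_le_iff_ne_zero.mpr hk)]

lemma sum_single_basisPoint_ne (hk : 2 ≤ k) (c : ∀ p, Fin (n p)) :
    ∑ p, Finsupp.single (basisPoint ⟨p, c p⟩) 1 ≠
      Finsupp.single (transversal c) 1 + Finsupp.single origin (k - 1) := by
  classical
  intro h
  have pred_eq_zero : k - 1 = 0 := by
    simpa [basisPoint_ne_origin, transversal_ne_origin (by omega : k ≠ 0)] using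
      (DFunLike.congr_fun h origin).symm
  omega

end LatticePoints

theorem stmt_8_general (𝕜 : Type*) [Field 𝕜] (k : ℕ) (hk : 2 ≤ k)
    (n : Fin k → ℕ) (hn : ∀ p, 0 < n p) :
    Ideal.span
        {f : MvPolynomial (latticeSet k n) 𝕜 |
          f ∈ toricIdeal 𝕜 k n ∧ f.totalDegree < k} <
      toricIdeal 𝕜 k n :=
  let c : ∀ p, Fin (n p) := fun p => ⟨0, hn p⟩
  span_totalDegree_lt_lt_ker_monomialMap 𝕜 (sum_single_basisPoint_ne hk c)
    (weight_sum_single_basisPoint (by omega) c) fun _ => isAloneInFiber_of_le_of_degree_lt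

theorem stmt_8 (𝕜 : Type*) [Field 𝕜] (k : ℕ) (hk : 3 ≤ k)
    (n : Fin k → ℕ) (hn : ∀ p, 0 < n p) :
    Ideal.span
        {f : MvPolynomial (latticeSet k n) 𝕜 |
          f ∈ toricIdeal 𝕜 k n ∧ f.totalDegree ≤ 2} <
      toricIdeal 𝕜 k n :=
  (Ideal.span_mono fun _ hf => And.imp_right (lt_of_le_of_lt · hk) hf).trans_lt
    (stmt_8_general 𝕜 k (by omega) n hn)

end
end

section
/- Let P ⊂ ℝ^d be a (0,1)-polytope of dimension e having exactly e + 2 facets (i.e. rank P = 1). Then P is normal, i.e. ℕA(P) = ℤA(P) ∩ ℝ≥0A(P), and there exist positive integers n, m, l such that 𝕜[P] is isomorphic as a 𝕜-algebra to a polynomial ring in l − 1 variables over the toric ring 𝕜[Δ_n × Δ_m] of the product of simplices Δ_n × Δ_m (the toric ring 𝕜[Δ_n × Δ_m] is the Segre product of polynomial rings in n+1 and m+1 variables over 𝕜). In particular every (0,1)-polytope of rank 1 is normal and its divisor class group is ℤ (torsionfree). -/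
/-!
STATEMENT 10: a (0,1)-polytope `P ⊆ ℝ^d` of dimension `e` with exactly `e + 2`
facets (rank 1) is normal, and there are positive integers `n, m, l` such that
`𝕜[P]` is a polynomial ring in `l − 1` variables over the toric ring of the
product of simplices `Δ_n × Δ_m` (the Segre product of polynomial rings).
-/

open scoped NNReal

noncomputable section

/-- The lattice points of a subset of `ℝ^α`, as integer vectors. -/
def latticePts {α : Type*} (P : Set (α → ℝ)) : Set (α → ℤ) :=
  {v | intCast v ∈ P}

/-- The simplex `Δ_n = conv(B_{n+1}) ⊆ ℝ^{n+1}`. -/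
def stdSimplex' (n : ℕ) : Set (Fin (n + 1) → ℝ) :=
  convexHull ℝ {y | ∃ i, y = Pi.single i (1 : ℝ)}

/-- The product polytope `Δ_n × Δ_m ⊆ ℝ^{n+1} × ℝ^{m+1}`. -/
def simplexProd (n m : ℕ) : Set ((Fin (n + 1) ⊕ Fin (m + 1)) → ℝ) :=
  {x | (fun i => x (Sum.inl i)) ∈ stdSimplex' n ∧ (fun j => x (Sum.inr j)) ∈ stdSimplex' m}

/-!
The forms defining the facets of `P`, homogenized, embed the span of the cone over `P` into `ℝ^ι`,
where `ι` is the set of facets, and the cone becomes the intersection of the image with the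
nonnegative orthant. In rank one the image is a hyperplane, so after positive rescalings of the
forms it is given by an equation `∑ i, σ i * y i = 0` with signs `σ i`. The rays of
`{y ≥ 0 | ∑ i, σ i * y i = 0}` are spanned by the `e_z` with `σ z = 0` and the `e_a + e_b` with
`σ a = 1` and `σ b = -1`, and every ray contains a homogenized vertex, at scale `t_z` or `t_ab`.
The relation `(e_a + e_b) + (e_a' + e_b') = (e_a + e_b') + (e_a' + e_b)` becomes a positive
relation between two pairs of zero-one vectors, and comparing a coordinate in which one vector
differs from one of the other pair shows that all `t_ab` agree. Hence all scales can be made equal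
to `1`. Since zero-one vectors are vertices of the cube, no vertex lies off the rays, so the
lattice generators of `P` become exactly the `e_z` and the `e_a + e_b`, which generate the monoid
of all solutions in natural numbers: a free monoid times the Segre monoid of a product of two
simplices.
-/

section SignedSums

variable {ι κ : Type*}

/-- Vectors of natural numbers, read coordinatewise in `R`. -/
def natCastVec (R : Type*) [Semiring R] : (ι → ℕ) →+ (ι → R) :=
  (Nat.castAddMonoidHom R).compLeft ι

@[simp]
theorem natCastVec_apply {R : Type*} [Semiring R] (q : ι → ℕ) (i : ι) :
    natCastVec R q i = q i :=
  rfl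

theorem natCastVec_injective (R : Type*) [Semiring R] [CharZero R] :
    Function.Injective (natCastVec R : (ι → ℕ) →+ (ι → R)) :=
  fun _ _ h => funext fun i => Nat.cast_injective (congrFun h i)

/-- The generators of the monoid of `σ`-balanced vectors (`balancedMonoid`): the unit vectors `e_z`
with `σ z = 0` and the sums `e_a + e_b` with `σ a = 1` and `σ b = -1`. -/
def balancedGens [DecidableEq ι] (σ : ι → SignType) : Set (ι → ℕ) :=
  {γ | (∃ z, σ z = 0 ∧ γ = Pi.single z 1) ∨
    ∃ a b, σ a = 1 ∧ σ b = -1 ∧ γ = Pi.single a 1 + Pi.single b 1}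

theorem apply_le_one_of_mem_balancedGens [DecidableEq ι] {σ : ι → SignType} {γ : ι → ℕ}
    (hγ : γ ∈ balancedGens σ) (i : ι) : γ i ≤ 1 := by
  rcases hγ with ⟨z, -, rfl⟩ | ⟨a, b, ha, hb, rfl⟩
  · by_cases h : i = z <;> simp [h]
  · have hab : a ≠ b := by
      rintro rfl
      simp [ha] at hb
    by_cases h : i = a <;> by_cases h' : i = b <;> simp_all

theorem eq_of_smul_natCastVec_eq [DecidableEq ι] {R : Type*} [Semiring R] {σ : ι → SignType}
    {γ γ' : ι → ℕ} (hγ : γ ∈ balancedGens σ) (hγ' : γ' ∈ balancedGens σ) {t t' : R} (ht : t ≠ 0)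
    (ht' : t' ≠ 0) (h : t • natCastVec R γ = t' • natCastVec R γ') : γ = γ' := by
  funext i
  have hi : t * γ i = t' * γ' i := congrFun h i
  have h₁ := apply_le_one_of_mem_balancedGens hγ i
  have h₂ := apply_le_one_of_mem_balancedGens hγ' i
  interval_cases γ i <;> interval_cases γ' i <;> simp_all

theorem ne_zero_of_mem_balancedGens [DecidableEq ι] {σ : ι → SignType} {γ : ι → ℕ}
    (hγ : γ ∈ balancedGens σ) : γ ≠ 0 := by
  rcases hγ with ⟨z, -, rfl⟩ | ⟨a, b, -, -, rfl⟩ <;> simp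

/-- The signs of the two factors of a Segre product. -/
def segreSign : ι ⊕ κ → SignType :=
  Sum.elim (fun _ => 1) fun _ => -1

theorem mem_balancedGens_segreSign [DecidableEq ι] [DecidableEq κ] {γ : ι ⊕ κ → ℕ} :
    γ ∈ balancedGens segreSign ↔
      ∃ a b, γ = Pi.single (Sum.inl a) 1 + Pi.single (Sum.inr b) 1 := by
  simp [balancedGens, segreSign]

theorem exists_equiv_segreSign [Finite ι] {σ : ι → SignType}
    (hpos : Nontrivial {i // σ i = 1}) (hneg : Nontrivial {i // σ i = -1}) :
    ∃ k n m : ℕ, 0 < n ∧ 0 < m ∧ ∃ e : Fin k ⊕ Fin (n + 1) ⊕ Fin (m + 1) ≃ ι,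
      (∀ z, σ (e (Sum.inl z)) = 0) ∧ σ ∘ e ∘ Sum.inr = segreSign := by
  cases nonempty_fintype ι
  obtain ⟨n, hn, hn'⟩ : ∃ n, 0 < n ∧ Fintype.card {i // σ i = 1} = n + 1 :=
    ⟨_, Nat.sub_pos_of_lt Fintype.one_lt_card, (Nat.sub_add_cancel Fintype.card_pos).symm⟩
  obtain ⟨m, hm, hm'⟩ : ∃ m, 0 < m ∧ Fintype.card {i // σ i = -1} = m + 1 :=
    ⟨_, Nat.sub_pos_of_lt Fintype.one_lt_card, (Nat.sub_add_cancel Fintype.card_pos).symm⟩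
  let e₀ := (Fintype.equivFin {i // σ i = 0}).symm
  let e₁ := (Fintype.equivFinOfCardEq hn').symm
  let e₂ := (Fintype.equivFinOfCardEq hm').symm
  let f : Fin _ ⊕ Fin (n + 1) ⊕ Fin (m + 1) → ι :=
    Sum.elim (fun z => e₀ z) (Sum.elim (fun a => e₁ a) fun b => e₂ b)
  have hf : Function.Bijective f := by
    refine ⟨?_, fun i => ?_⟩
    · refine (Subtype.val_injective.comp e₀.injective).sumElim
        ((Subtype.val_injective.comp e₁.injective).sumElim
          (Subtype.val_injective.comp e₂.injective) fun a b h => ?_) fun z s h => ?_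
      · simpa [(e₁ a).2, (e₂ b).2] using congrArg σ h
      · rcases s with a | b
        · simpa [(e₀ z).2, (e₁ a).2] using congrArg σ h
        · simpa [(e₀ z).2, (e₂ b).2] using congrArg σ h
    · rcases SignType.trichotomy (σ i) with h | h | h
      · exact ⟨Sum.inr (Sum.inr (e₂.symm ⟨i, h⟩)), by simp [f]⟩
      · exact ⟨Sum.inl (e₀.symm ⟨i, h⟩), by simp [f]⟩
      · exact ⟨Sum.inr (Sum.inl (e₁.symm ⟨i, h⟩)), by simp [f]⟩
  refine ⟨_, n, m, hn, hm, Equiv.ofBijective f hf, fun z => (e₀ z).2, funext fun s => ?_⟩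
  rcases s with a | b
  exacts [(e₁ a).2, (e₂ b).2]

variable [Fintype ι]

/-- The signed sum `∑ i, σ i * y i`. -/
def balance (R : Type*) [CommRing R] (σ : ι → SignType) : (ι → R) →ₗ[R] R :=
  ∑ i, (σ i : R) • LinearMap.proj i

theorem balance_apply {R : Type*} [CommRing R] (σ : ι → SignType) (y : ι → R) :
    balance R σ y = ∑ i, (σ i : R) * y i := by
  simp [balance]

/-- The monoid of vectors of natural numbers with vanishing signed sum: a polynomial factor for
each sign `0`, times the Segre monoid of the positive and the negative signs. -/
def balancedMonoid (σ : ι → SignType) : AddSubmonoid (ι → ℕ) :=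
  (AddMonoidHom.mker (balance ℤ σ)).comap (natCastVec ℤ)

theorem mem_balancedMonoid {σ : ι → SignType} {q : ι → ℕ} :
    q ∈ balancedMonoid σ ↔ ∑ i, (σ i : ℤ) * q i = 0 := by
  simp [balancedMonoid, AddMonoidHom.mem_mker, balance_apply]

theorem balance_natCastVec_of_mem_balancedGens (R : Type*) [CommRing R] [DecidableEq ι]
    {σ : ι → SignType} {γ : ι → ℕ} (hγ : γ ∈ balancedGens σ) :
    balance R σ (natCastVec R γ) = 0 := by
  rcases hγ with ⟨z, hz, rfl⟩ | ⟨a, b, ha, hb, rfl⟩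
  · simp [balance_apply, Pi.single_apply, hz]
  · simp [balance_apply, Pi.single_apply, mul_add, Finset.sum_add_distrib, ha, hb]

theorem balance_neg (R : Type*) [CommRing R] (σ : ι → SignType) :
    balance R (-σ) = -balance R σ :=
  LinearMap.ext fun y => by simp [balance_apply]

theorem exists_sign_eq_one_of_balance_eq_zero {R : Type*} [CommRing R] [LinearOrder R]
    [IsStrictOrderedRing R] {σ : ι → SignType} {y : ι → R} (hy : 0 ≤ y) (hb : balance R σ y = 0)
    {j : ι} (hj : σ j = -1) (hyj : y j ≠ 0) : ∃ a, σ a = 1 ∧ y a ≠ 0 := by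
  by_contra! h
  have hterm : ∀ i ∈ Finset.univ, (σ i : R) * y i ≤ 0 := fun i _ => by
    rcases SignType.trichotomy (σ i) with hi | hi | hi
    · simpa [hi] using hy i
    · simp [hi]
    · simp [h i hi]
  rw [balance_apply, Finset.sum_eq_zero_iff_of_nonpos hterm] at hb
  simpa [hj, hyj] using hb j (Finset.mem_univ j)

theorem exists_sign_eq_neg_one_of_balance_eq_zero {R : Type*} [CommRing R] [LinearOrder R]
    [IsStrictOrderedRing R] {σ : ι → SignType} {y : ι → R} (hy : 0 ≤ y) (hb : balance R σ y = 0)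
    {j : ι} (hj : σ j = 1) (hyj : y j ≠ 0) : ∃ b, σ b = -1 ∧ y b ≠ 0 := by
  simpa [neg_eq_iff_eq_neg] using exists_sign_eq_one_of_balance_eq_zero (σ := -σ) hy
    (by simp [balance_neg, hb]) (by simpa using hj) hyj

theorem exists_balancedGens_support_subset {R : Type*} [CommRing R] [LinearOrder R]
    [IsStrictOrderedRing R] [DecidableEq ι] {σ : ι → SignType} {y : ι → R} (hy : 0 ≤ y)
    (hy0 : y ≠ 0) (hb : balance R σ y = 0) :
    ∃ γ ∈ balancedGens σ, ∀ i, y i = 0 → γ i = 0 := by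
  have hsingle : ∀ {i j}, y i = 0 → y j ≠ 0 → Pi.single (M := fun _ => ℕ) j 1 i = 0 :=
    fun hi hj => Pi.single_eq_of_ne (ne_of_apply_ne y (hi.trans_ne hj.symm)) 1
  have hpair : ∀ {a b}, σ a = 1 → σ b = -1 → y a ≠ 0 → y b ≠ 0 →
      ∃ γ ∈ balancedGens σ, ∀ i, y i = 0 → γ i = 0 := fun ha hb hya hyb =>
    ⟨_, Or.inr ⟨_, _, ha, hb, rfl⟩, fun i hi => by simp [hsingle hi hya, hsingle hi hyb]⟩
  obtain ⟨j, hj⟩ := Function.ne_iff.1 hy0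
  rcases SignType.trichotomy (σ j) with hσ | hσ | hσ
  · obtain ⟨a, ha, hya⟩ := exists_sign_eq_one_of_balance_eq_zero hy hb hσ hj
    exact hpair ha hσ hya hj
  · exact ⟨_, Or.inl ⟨j, hσ, rfl⟩, fun i hi => hsingle hi hj⟩
  · obtain ⟨b, hb, hyb⟩ := exists_sign_eq_neg_one_of_balance_eq_zero hy hb hσ hj
    exact hpair hσ hb hj hyb

theorem exists_eq_smul_of_mem_balancedGens {R : Type*} [CommRing R] [DecidableEq ι]
    {σ : ι → SignType} {γ : ι → ℕ} (hγ : γ ∈ balancedGens σ) {y : ι → R}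
    (hb : balance R σ y = 0) (hy : ∀ i, γ i = 0 → y i = 0) :
    ∃ t : R, y = t • natCastVec R γ := by
  rcases hγ with ⟨z, -, rfl⟩ | ⟨a, b, ha, hb', rfl⟩
  · refine ⟨y z, funext fun i => ?_⟩
    by_cases h : i = z
    · simp [h]
    · simp [h, hy i (by simp [h])]
  · have hab : a ≠ b := by
      rintro rfl
      simp [ha] at hb'
    have hsupp : ∀ i, i ≠ a ∧ i ≠ b → y i = 0 := fun i hi => hy i (by simp [hi])
    have hyab : y a = y b := by
      rw [balance_apply, Fintype.sum_eq_add a b hab fun i hi => by rw [hsupp i hi, mul_zero]] at hb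
      simpa [ha, hb', add_neg_eq_zero] using hb
    refine ⟨y a, funext fun i => ?_⟩
    by_cases h : i = a
    · simp [h, hab]
    by_cases h' : i = b
    · simp [h', hab.symm, hyab]
    · simp [h, h', hsupp i ⟨h, h'⟩]

theorem closure_balancedGens [DecidableEq ι] (σ : ι → SignType) :
    AddSubmonoid.closure (balancedGens σ) = balancedMonoid σ := by
  refine le_antisymm ((AddSubmonoid.closure_le).2 fun γ hγ =>
    balance_natCastVec_of_mem_balancedGens ℤ hγ) fun q hq => ?_
  induction hN : ∑ i, q i using Nat.strong_induction_on generalizing q with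
  | _ N ih =>
    rcases eq_or_ne q 0 with rfl | hq0
    · exact zero_mem _
    obtain ⟨γ, hγ, hsupp⟩ := exists_balancedGens_support_subset (R := ℤ) (y := natCastVec ℤ q)
      (fun i => Int.natCast_nonneg _)
      ((map_ne_zero_iff _ (natCastVec_injective ℤ)).2 hq0) hq
    have hle : γ ≤ q := fun i => by
      rcases Nat.eq_zero_or_pos (q i) with h | h
      · exact (hsupp i (by simp [h])).le.trans (Nat.zero_le _)
      · exact (apply_le_one_of_mem_balancedGens hγ i).trans h
    obtain ⟨p, rfl⟩ := exists_add_of_le hle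
    have hp : p ∈ balancedMonoid σ := by
      have : balance ℤ σ (natCastVec ℤ (γ + p)) = 0 := hq
      rwa [map_add, map_add, balance_natCastVec_of_mem_balancedGens ℤ hγ, zero_add] at this
    have hγ0 : 0 < ∑ i, γ i :=
      Fintype.sum_pos (pos_iff_ne_zero.2 (ne_zero_of_mem_balancedGens hγ))
    refine add_mem (AddSubmonoid.subset_closure hγ) (ih _ ?_ p hp rfl)
    simp only [Pi.add_apply, Finset.sum_add_distrib] at hN
    omega

theorem comp_inr_mem_balancedMonoid [Finite κ] {κ' : Type*} [Fintype κ'] {σ : ι → SignType}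
    (e : κ ⊕ κ' ≃ ι) (he : ∀ z, σ (e (Sum.inl z)) = 0) {q : ι → ℕ} :
    q ∘ e ∘ Sum.inr ∈ balancedMonoid (σ ∘ e ∘ Sum.inr) ↔ q ∈ balancedMonoid σ := by
  cases nonempty_fintype κ
  rw [mem_balancedMonoid, mem_balancedMonoid, ← e.sum_comp, Fintype.sum_sum_type]
  simp [he]

/-- Splits off coordinates of sign `0`, which are unconstrained. -/
def balancedMonoidEquivProd [Finite κ] {κ' : Type*} [Fintype κ'] {σ : ι → SignType}
    (e : κ ⊕ κ' ≃ ι) (he : ∀ z, σ (e (Sum.inl z)) = 0) :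
    balancedMonoid σ ≃+ (κ →₀ ℕ) × balancedMonoid (σ ∘ e ∘ Sum.inr) where
  toFun q := (Finsupp.equivFunOnFinite.symm (q.1 ∘ e ∘ Sum.inl),
    ⟨q.1 ∘ e ∘ Sum.inr, (comp_inr_mem_balancedMonoid e he).2 q.2⟩)
  invFun p := ⟨Sum.elim p.1 p.2.1 ∘ e.symm, (comp_inr_mem_balancedMonoid e he).1 <| by
    convert p.2.2 using 1
    ext
    simp⟩
  left_inv q := by
    ext i
    obtain ⟨s, rfl⟩ := e.surjective i
    rcases s with z | j <;> simp
  right_inv p := by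
    ext <;> simp
  map_add' p q := by
    ext <;> simp

end SignedSums

section BalancedCharts

variable {E ι α : Type*} [AddCommGroup E] [Module ℝ E] [DecidableEq ι]

/-- `φ` provides coordinates on the span of `S` in which the elements of `S` are precisely the
generators of the monoid of `σ`-balanced vectors. -/
structure IsBalancedChart (φ : E →ₗ[ℝ] ι → ℝ) (S : Set E) (σ : ι → SignType) : Prop where
  injOn : Set.InjOn φ (Submodule.span ℝ S)
  image_eq : φ '' S = natCastVec ℝ '' balancedGens σ

/-- `prodCast` as a homomorphism. -/
def prodCastHom : (α → ℤ) × ℤ →+ (α → ℝ) × ℝ where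
  toFun := prodCast
  map_zero' := by ext <;> simp [prodCast, intCast]
  map_add' x y := by ext <;> simp [prodCast, intCast]

theorem prodCastHom_injective : Function.Injective (prodCastHom (α := α)) := by
  intro x y h
  ext i
  · simpa [prodCastHom, prodCast, intCast] using congrFun (congrArg Prod.fst h) i
  · simpa [prodCastHom, prodCast] using congrArg Prod.snd h

theorem prodCast_mem_span_of_mem_closure {A : Set ((α → ℤ) × ℤ)} {x : (α → ℤ) × ℤ}
    (hx : x ∈ AddSubgroup.closure A) : prodCast x ∈ Submodule.span ℝ (prodCast '' A) := by
  have hle : AddSubgroup.closure A ≤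
      (Submodule.span ℝ (prodCast '' A)).toAddSubgroup.comap prodCastHom :=
    (AddSubgroup.closure_le _).2 fun a ha => Submodule.subset_span ⟨a, ha, rfl⟩
  exact hle hx

theorem prodCast_mem_cone_of_mem_closure {A : Set ((α → ℤ) × ℤ)} {x : (α → ℤ) × ℤ}
    (hx : x ∈ AddSubmonoid.closure A) : prodCast x ∈ Submodule.span ℝ≥0 (prodCast '' A) := by
  have hle : AddSubmonoid.closure A ≤
      (Submodule.span ℝ≥0 (prodCast '' A)).toAddSubmonoid.comap prodCastHom :=
    AddSubmonoid.closure_le.2 fun a ha => Submodule.subset_span ⟨a, ha, rfl⟩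
  exact hle hx

theorem nonempty_closure_addEquiv_closure {M N K : Type*} [AddMonoid M] [AddMonoid N] [AddMonoid K]
    {f : M →+ K} {g : N →+ K} {A : Set M} {B : Set N} (h : f '' A = g '' B)
    (hf : Set.InjOn f (AddSubmonoid.closure A)) (hg : Function.Injective g) :
    Nonempty (AddSubmonoid.closure A ≃+ AddSubmonoid.closure B) := by
  have himage : (AddSubmonoid.closure A).map f = (AddSubmonoid.closure B).map g := by
    rw [AddMonoidHom.map_mclosure, AddMonoidHom.map_mclosure, h]
  let F : AddSubmonoid.closure A ≃+ (AddSubmonoid.closure A).map f :=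
    AddEquiv.ofBijective (f.addSubmonoidMap _)
      ⟨fun a b hab => Subtype.ext (hf a.2 b.2 (congrArg Subtype.val hab)),
        f.addSubmonoidMap_surjective _⟩
  exact ⟨F.trans ((AddEquiv.addSubmonoidCongr himage).trans
    ((AddSubmonoid.closure B).equivMapOfInjective g hg).symm)⟩

variable {L : Set (α → ℤ)} {σ : ι → SignType} {φ : (α → ℝ) × ℝ →ₗ[ℝ] ι → ℝ}

theorem IsBalancedChart.image_latticeA (h : IsBalancedChart φ (prodCast '' latticeA L) σ) :
    φ.toAddMonoidHom.comp prodCastHom '' latticeA L = natCastVec ℝ '' balancedGens σ := by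
  rw [← h.image_eq, Set.image_image]
  rfl

theorem IsBalancedChart.injOn_closure (h : IsBalancedChart φ (prodCast '' latticeA L) σ) :
    Set.InjOn (φ.toAddMonoidHom.comp prodCastHom) (AddSubgroup.closure (latticeA L)) :=
  fun _ hx _ hy hxy => prodCastHom_injective <|
    h.injOn (prodCast_mem_span_of_mem_closure hx) (prodCast_mem_span_of_mem_closure hy) hxy

theorem nonneg_and_balance_eq_zero_of_mem_cone [Fintype ι] {σ : ι → SignType} {y : ι → ℝ}
    (hy : y ∈ Submodule.span ℝ≥0 (natCastVec ℝ '' balancedGens σ)) :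
    0 ≤ y ∧ balance ℝ σ y = 0 := by
  induction hy using Submodule.span_induction with
  | mem y h =>
    obtain ⟨γ, hγ, rfl⟩ := h
    exact ⟨fun i => Nat.cast_nonneg _, balance_natCastVec_of_mem_balancedGens ℝ hγ⟩
  | zero => simp
  | add y z _ _ hy hz => exact ⟨add_nonneg hy.1 hz.1, by rw [map_add, hy.2, hz.2, add_zero]⟩
  | smul c y _ hy =>
    refine ⟨fun i => mul_nonneg c.2 (hy.1 i), ?_⟩
    rw [NNReal.smul_def, map_smul, hy.2, smul_zero]

theorem exists_balancedMonoid_natCastVec_eq [Fintype ι] {σ : ι → SignType} {y : ι → ℝ}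
    (hcone : y ∈ Submodule.span ℝ≥0 (natCastVec ℝ '' balancedGens σ))
    (hint : y ∈ AddSubgroup.closure (natCastVec ℝ '' balancedGens σ)) :
    ∃ q ∈ balancedMonoid σ, natCastVec ℝ q = y := by
  obtain ⟨hnonneg, hb⟩ := nonneg_and_balance_eq_zero_of_mem_cone hcone
  have hle : AddSubgroup.closure (natCastVec ℝ '' balancedGens σ) ≤
      ((Int.castAddHom ℝ).compLeft ι).range := by
    refine (AddSubgroup.closure_le _).2 ?_
    rintro _ ⟨γ, -, rfl⟩
    exact ⟨natCastVec ℤ γ, by ext; simp⟩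
  obtain ⟨p, rfl⟩ : ∃ p, intCast p = y := hle hint
  have hp : ∀ i, ((p i).toNat : ℤ) = p i := fun i =>
    Int.toNat_of_nonneg (Int.cast_nonneg_iff.1 (hnonneg i))
  refine ⟨fun i => (p i).toNat, mem_balancedMonoid.2 ?_, ?_⟩
  · simp only [balance_apply, intCast] at hb
    simp only [hp]
    exact_mod_cast hb
  · ext i
    rw [natCastVec_apply, ← Int.cast_natCast, hp, intCast]

theorem IsBalancedChart.isNormalPolytope [Finite ι]
    (h : IsBalancedChart φ (prodCast '' latticeA L) σ) : IsNormalPolytope L := by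
  cases nonempty_fintype ι
  refine fun x => ⟨fun hx => ⟨AddSubgroup.le_closure_toAddSubmonoid _ hx,
    prodCast_mem_cone_of_mem_closure hx⟩, fun ⟨hint, hcone⟩ => ?_⟩
  set ψ := φ.toAddMonoidHom.comp prodCastHom
  have hcone' : ψ x ∈ Submodule.span ℝ≥0 (natCastVec ℝ '' balancedGens σ) := by
    rw [← h.image_eq]
    exact (Submodule.map_span (φ.restrictScalars ℝ≥0) _).le ⟨_, hcone, rfl⟩
  have hint' : ψ x ∈ AddSubgroup.closure (natCastVec ℝ '' balancedGens σ) := by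
    rw [← h.image_latticeA, ← AddMonoidHom.map_closure]
    exact ⟨x, hint, rfl⟩
  obtain ⟨q, hq, hqx⟩ := exists_balancedMonoid_natCastVec_eq hcone' hint'
  obtain ⟨x', hx', hxx'⟩ : ψ x ∈ (AddSubmonoid.closure (latticeA L)).map ψ := by
    rw [AddMonoidHom.map_mclosure, h.image_latticeA, ← AddMonoidHom.map_mclosure,
      closure_balancedGens]
    exact ⟨q, hq, hqx⟩
  rwa [← h.injOn_closure (AddSubgroup.le_closure_toAddSubmonoid _ hx') hint hxx']

theorem IsBalancedChart.nonempty_closure_latticeA_addEquiv [Fintype ι]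
    (h : IsBalancedChart φ (prodCast '' latticeA L) σ) :
    Nonempty (AddSubmonoid.closure (latticeA L) ≃+ balancedMonoid σ) := by
  rw [← closure_balancedGens]
  exact nonempty_closure_addEquiv_closure h.image_latticeA
    (h.injOn_closure.mono (AddSubgroup.le_closure_toAddSubmonoid _)) (natCastVec_injective ℝ)

end BalancedCharts

section ZeroOneVectors

variable {α : Type*}

/-- The vertices of the unit cube. -/
def zeroOneVectors (α : Type*) : Set (α → ℝ) :=
  Set.univ.pi fun _ => {0, 1}

theorem mem_zeroOneVectors {v : α → ℝ} : v ∈ zeroOneVectors α ↔ ∀ i, v i = 0 ∨ v i = 1 := by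
  simp [zeroOneVectors]

theorem extremePoints_unitCube :
    (Set.univ.pi fun _ : α => Set.Icc (0 : ℝ) 1).extremePoints ℝ = zeroOneVectors α := by
  simp only [extremePoints_pi, Set.extremePoints_Icc zero_le_one, zeroOneVectors]

theorem convexHull_subset_unitCube {T : Set (α → ℝ)} (hT : T ⊆ zeroOneVectors α) :
    convexHull ℝ T ⊆ Set.univ.pi fun _ => Set.Icc 0 1 :=
  convexHull_min (hT.trans (extremePoints_unitCube.symm.subset.trans extremePoints_subset))
    (convex_pi fun _ _ => convex_Icc 0 1)

theorem mem_of_mem_convexHull_of_mem_zeroOneVectors {T : Set (α → ℝ)} {v : α → ℝ}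
    (hT : T ⊆ zeroOneVectors α) (hv : v ∈ zeroOneVectors α) (h : v ∈ convexHull ℝ T) : v ∈ T := by
  rw [← extremePoints_unitCube] at hv
  exact extremePoints_convexHull_subset
    (inter_extremePoints_subset_extremePoints_of_subset (convexHull_subset_unitCube hT) ⟨h, hv⟩)

theorem intCast_injective : Function.Injective (intCast (α := α)) :=
  fun _ _ h => funext fun i => Int.cast_injective (congrFun h i)

theorem intCast_mem_zeroOneVectors {v : α → ℤ} (hv : ∀ i, v i = 0 ∨ v i = 1) :
    intCast v ∈ zeroOneVectors α :=
  mem_zeroOneVectors.2 fun i => by simpa [intCast] using hv i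

theorem latticePts_convexHull_of_zero_one {V : Set (α → ℤ)}
    (hV : ∀ v ∈ V, ∀ i, v i = 0 ∨ v i = 1) :
    latticePts (convexHull ℝ (intCast '' V)) = V := by
  have hV' : intCast '' V ⊆ zeroOneVectors α :=
    Set.image_subset_iff.2 fun v hv => intCast_mem_zeroOneVectors (hV v hv)
  refine Set.Subset.antisymm (fun v hv => ?_) fun v hv => subset_convexHull ℝ _ ⟨v, hv, rfl⟩
  have hv01 : intCast v ∈ zeroOneVectors α := intCast_mem_zeroOneVectors fun i => by
    obtain ⟨h0, h1⟩ : 0 ≤ (v i : ℝ) ∧ (v i : ℝ) ≤ 1 :=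
      convexHull_subset_unitCube hV' hv i trivial
    norm_cast at h0 h1
    omega
  exact intCast_injective.mem_set_image.1
    (mem_of_mem_convexHull_of_mem_zeroOneVectors hV' hv01 hv)

theorem latticePts_stdSimplex' (n : ℕ) :
    latticePts (stdSimplex' n) = Set.range fun i => Pi.single i (1 : ℤ) := by
  have h : stdSimplex' n = convexHull ℝ (intCast '' Set.range fun i => Pi.single i (1 : ℤ)) := by
    rw [stdSimplex', ← Set.range_comp]
    congr 1
    ext y
    refine exists_congr fun i => ?_
    have : intCast (Pi.single i (1 : ℤ)) = Pi.single i (1 : ℝ) := by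
      ext j
      by_cases hj : j = i <;> simp [intCast, hj]
    rw [Function.comp_apply, this, eq_comm]
  rw [h, latticePts_convexHull_of_zero_one]
  rintro _ ⟨i, rfl⟩ j
  by_cases hj : j = i <;> simp [hj]

theorem intCast_image_latticePts_simplexProd (n m : ℕ) :
    intCast '' latticePts (simplexProd n m) = natCastVec ℝ '' balancedGens segreSign := by
  have hL : latticePts (simplexProd n m) = natCastVec ℤ '' balancedGens segreSign := by
    ext v
    have hv : v ∈ latticePts (simplexProd n m) ↔
        v ∘ Sum.inl ∈ latticePts (stdSimplex' n) ∧ v ∘ Sum.inr ∈ latticePts (stdSimplex' m) :=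
      Iff.rfl
    rw [hv, latticePts_stdSimplex', latticePts_stdSimplex']
    constructor
    · rintro ⟨⟨a, ha⟩, ⟨b, hb⟩⟩
      refine ⟨_, mem_balancedGens_segreSign.2 ⟨a, b, rfl⟩, funext fun s => ?_⟩
      rcases s with i | j
      · simpa [Pi.single_apply] using congrFun ha i
      · simpa [Pi.single_apply] using congrFun hb j
    · rintro ⟨γ, hγ, rfl⟩
      obtain ⟨a, b, rfl⟩ := mem_balancedGens_segreSign.1 hγ
      exact ⟨⟨a, funext fun i => by simp [Pi.single_apply]⟩,
        ⟨b, funext fun j => by simp [Pi.single_apply]⟩⟩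
  rw [hL, Set.image_image]
  exact Set.image_congr fun γ _ => funext fun i => by simp [intCast]

theorem isBalancedChart_simplexProd (n m : ℕ) :
    IsBalancedChart (LinearMap.fst ℝ _ _) (prodCast '' latticeA (latticePts (simplexProd n m)))
      segreSign := by
  have himage : LinearMap.fst ℝ _ _ '' (prodCast '' latticeA (latticePts (simplexProd n m))) =
      natCastVec ℝ '' balancedGens segreSign := by
    rw [← intCast_image_latticePts_simplexProd, latticeA, Set.image_image, Set.image_image]
    rfl
  have hspan : Submodule.span ℝ (prodCast '' latticeA (latticePts (simplexProd n m))) ≤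
      LinearMap.eqLocus (LinearMap.snd ℝ _ _)
        (∑ a : Fin (n + 1), LinearMap.proj (Sum.inl a) ∘ₗ LinearMap.fst ℝ _ _) := by
    rw [Submodule.span_le]
    rintro _ ⟨_, ⟨v, hv, rfl⟩, rfl⟩
    obtain ⟨γ, hγ, hγv⟩ := (intCast_image_latticePts_simplexProd n m).subset ⟨v, hv, rfl⟩
    obtain ⟨a, b, rfl⟩ := mem_balancedGens_segreSign.1 hγ
    simp [prodCast, ← hγv, Pi.single_apply]
  refine ⟨fun x hx y hy hxy => Prod.ext hxy ?_, himage⟩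
  have hx2 := hspan hx
  have hy2 := hspan hy
  simp only [LinearMap.mem_eqLocus, LinearMap.snd_apply, LinearMap.sum_apply,
    LinearMap.comp_apply] at hx2 hy2
  rw [hx2, hy2, hxy]

end ZeroOneVectors

section FinitelyGeneratedCones

variable {E ι : Type*} [AddCommGroup E] [Module ℝ E] {S : Set E} {f g : E →ₗ[ℝ] ℝ} {x : E}

theorem nonneg_of_mem_cone (hf : ∀ s ∈ S, 0 ≤ f s) (hx : x ∈ Submodule.span ℝ≥0 S) : 0 ≤ f x := by
  induction hx using Submodule.span_induction with
  | mem y h => exact hf y h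
  | zero => exact (map_zero f).ge
  | add y z _ _ hy hz => exact (map_add f y z).symm ▸ add_nonneg hy hz
  | smul c y _ hy =>
    rw [NNReal.smul_def, map_smul]
    exact mul_nonneg c.2 hy

theorem eq_zero_or_pos_of_mem_cone (hf : ∀ s ∈ S, 0 < f s) (hx : x ∈ Submodule.span ℝ≥0 S) :
    x = 0 ∨ 0 < f x := by
  induction hx using Submodule.span_induction with
  | mem y h => exact Or.inr (hf y h)
  | zero => exact Or.inl rfl
  | add y z _ _ hy hz =>
    rcases hy with rfl | hy
    · simpa using hz
    rcases hz with rfl | hz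
    · simpa using Or.inr hy
    · exact Or.inr ((map_add f y z).symm ▸ add_pos hy hz)
  | smul c y _ hy =>
    rcases eq_or_ne c 0 with rfl | hc
    · simp
    refine hy.imp (fun h => by rw [h, smul_zero]) fun h => ?_
    rw [NNReal.smul_def, map_smul]
    exact mul_pos (NNReal.coe_pos.2 (pos_iff_ne_zero.2 hc)) h

/-- The projection along `a` onto the kernel of `f`, for a linear form `f` with `f a ≠ 0`. -/
def projKer (f : E →ₗ[ℝ] ℝ) (a : E) : E →ₗ[ℝ] E :=
  LinearMap.id - ((f a)⁻¹ • f).smulRight a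

theorem projKer_apply (f : E →ₗ[ℝ] ℝ) (a x : E) : projKer f a x = x - ((f a)⁻¹ * f x) • a := by
  simp [projKer]

theorem mem_cone_insert_of_projKer_mem {a : E} (hf : ∀ s ∈ S, 0 ≤ f s) (ha : f a < 0)
    (hx : f x < 0) (h : projKer f a x ∈ Submodule.span ℝ≥0 (projKer f a '' S)) :
    x ∈ Submodule.span ℝ≥0 (insert a S) := by
  obtain ⟨s, hs, hsx⟩ := (Submodule.map_span ((projKer f a).restrictScalars ℝ≥0) S).ge h
  replace hsx : projKer f a s = projKer f a x := hsx
  have hcoeff : 0 ≤ (f a)⁻¹ * (f x - f s) :=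
    mul_nonneg_of_nonpos_of_nonpos (inv_nonpos.2 ha.le)
      (sub_nonpos.2 (hx.le.trans (nonneg_of_mem_cone hf hs)))
  refine Submodule.mem_span_insert.2 ⟨Real.toNNReal ((f a)⁻¹ * (f x - f s)), s, hs, ?_⟩
  rw [NNReal.smul_def, Real.coe_toNNReal _ hcoeff, mul_sub, sub_smul]
  rw [projKer_apply, projKer_apply] at hsx
  linear_combination (norm := module) -hsx

theorem exists_nonneg_of_notMem_cone_image (t : Finset ι) (v : ι → E)
    (hx : x ∉ Submodule.span ℝ≥0 (v '' t)) :
    ∃ f : E →ₗ[ℝ] ℝ, (∀ k ∈ t, 0 ≤ f (v k)) ∧ f x < 0 := by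
  classical
  induction t using Finset.induction_on generalizing v x with
  | empty =>
    have hx0 : x ≠ 0 := by simpa using hx
    obtain ⟨f, hf⟩ := not_forall.1 (mt (Module.forall_dual_apply_eq_zero_iff ℝ x).1 hx0)
    rcases lt_or_gt_of_ne hf with h | h
    exacts [⟨f, by simp, h⟩, ⟨-f, by simp, by simpa using h⟩]
  | insert j t _ ih =>
    rw [Finset.coe_insert, Set.image_insert_eq] at hx
    obtain ⟨f, hft, hfx⟩ := ih v fun h => hx (Submodule.span_mono (Set.subset_insert _ _) h)
    rcases le_or_gt 0 (f (v j)) with hfj | hfj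
    · exact ⟨f, by simpa [hfj] using hft, hfx⟩
    -- Neither `f` nor the old generators suffice: project everything along the new one.
    have hft' : ∀ s ∈ v '' t, 0 ≤ f s := Set.forall_mem_image.2 hft
    obtain ⟨g, hgt, hgx⟩ := ih (projKer f (v j) ∘ v) (x := projKer f (v j) x) fun h =>
      hx (mem_cone_insert_of_projKer_mem hft' hfj hfx (by rwa [Set.image_comp] at h))
    refine ⟨g ∘ₗ projKer f (v j), fun k hk => ?_, hgx⟩
    rcases Finset.mem_insert.1 hk with rfl | hk
    · simp [projKer_apply, hfj.ne]
    · exact hgt k hk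

theorem exists_nonneg_of_notMem_cone (hS : S.Finite) (hx : x ∉ Submodule.span ℝ≥0 S) :
    ∃ f : E →ₗ[ℝ] ℝ, (∀ s ∈ S, 0 ≤ f s) ∧ f x < 0 := by
  simpa using exists_nonneg_of_notMem_cone_image hS.toFinset id (by simpa using hx)

/-- The span of the points of `S` at which `f` vanishes. If `f` is nonnegative on `S`, this is the
span of the face of the cone over `S` cut out by `f`. -/
def zeroSpan (S : Set E) (f : E →ₗ[ℝ] ℝ) : Submodule ℝ E :=
  Submodule.span ℝ {s ∈ S | f s = 0}

/-- `f` is nonnegative on `S` and cuts out a facet of the cone over `S`. -/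
structure IsFacetForm (S : Set E) (f : E →ₗ[ℝ] ℝ) : Prop where
  nonneg : ∀ s ∈ S, 0 ≤ f s
  finrank_zeroSpan : Module.finrank ℝ (zeroSpan S f) + 1 = Module.finrank ℝ (Submodule.span ℝ S)

theorem zeroSpan_le_span : zeroSpan S f ≤ Submodule.span ℝ S :=
  Submodule.span_mono (Set.sep_subset _ _)

theorem zeroSpan_le_ker : zeroSpan S f ≤ LinearMap.ker f :=
  Submodule.span_le.2 fun _ hs => hs.2

theorem zeroSpan_mono (h : ∀ s ∈ S, f s = 0 → g s = 0) : zeroSpan S f ≤ zeroSpan S g :=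
  Submodule.span_mono fun s hs => ⟨hs.1, h s hs.1 hs.2⟩

theorem apply_eq_zero_iff_mem_zeroSpan (hf : ∀ s ∈ S, 0 ≤ f s)
    (hx : x ∈ Submodule.span ℝ≥0 S) : f x = 0 ↔ x ∈ zeroSpan S f := by
  refine ⟨fun h => ?_, fun h => zeroSpan_le_ker h⟩
  induction hx using Submodule.span_induction with
  | mem y hy => exact Submodule.subset_span ⟨hy, h⟩
  | zero => exact zero_mem _
  | add y z hy hz ihy ihz =>
    rw [map_add, add_eq_zero_iff_of_nonneg (nonneg_of_mem_cone hf hy)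
      (nonneg_of_mem_cone hf hz)] at h
    exact add_mem (ihy h.1) (ihz h.2)
  | smul c y _ ih =>
    rw [NNReal.smul_def, map_smul, smul_eq_mul, mul_eq_zero, NNReal.coe_eq_zero] at h
    rcases h with rfl | h
    · simp
    · exact Submodule.smul_mem _ _ (ih h)

theorem IsFacetForm.exists_pos (hf : IsFacetForm S f) : ∃ s ∈ S, 0 < f s := by
  by_contra! h
  have hS : {s ∈ S | f s = 0} = S :=
    Set.sep_eq_self_iff_mem_true.2 fun s hs => (h s hs).antisymm (hf.nonneg s hs)
  have := hf.finrank_zeroSpan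
  rw [zeroSpan, hS] at this
  omega

theorem IsFacetForm.smul (hf : IsFacetForm S f) {r : ℝ} (hr : 0 < r) : IsFacetForm S (r • f) where
  nonneg s hs := mul_nonneg hr.le (hf.nonneg s hs)
  finrank_zeroSpan := by
    have h : zeroSpan S (r • f) = zeroSpan S f :=
      le_antisymm (zeroSpan_mono fun s _ hs => (mul_eq_zero_iff_left hr.ne').1 hs)
        (zeroSpan_mono fun s _ hs => mul_eq_zero_of_right r hs)
    rw [h, hf.finrank_zeroSpan]

/-- `g` lists the facets of the cone over `S`, each once, by linear forms cutting them out. -/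
structure IsFacetSystem (S : Set E) (g : ι → E →ₗ[ℝ] ℝ) : Prop where
  isFacetForm : ∀ i, IsFacetForm S (g i)
  existsUnique : ∀ f, IsFacetForm S f → ∃! i, ∀ s ∈ S, f s = 0 ↔ g i s = 0

theorem IsFacetSystem.smul {g : ι → E →ₗ[ℝ] ℝ} (hg : IsFacetSystem S g) {r : ι → ℝ}
    (hr : ∀ i, 0 < r i) : IsFacetSystem S fun i => r i • g i where
  isFacetForm i := (hg.isFacetForm i).smul (hr i)
  existsUnique f hf := by
    simpa [(hr _).ne'] using hg.existsUnique f hf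

variable [FiniteDimensional ℝ E]

theorem exists_form_vanishing_on_zeroSpan (hx : x ∈ Submodule.span ℝ S) (hf : ∀ s ∈ S, 0 ≤ f s)
    (hfx : f x < 0) (hfacet : ¬ IsFacetForm S f) :
    ∃ g : E →ₗ[ℝ] ℝ, (∀ s ∈ S, f s = 0 → g s = 0) ∧ g x = 0 ∧ ∃ s ∈ S, g s < 0 := by
  have hxW : x ∉ zeroSpan S f := fun h => hfx.ne (zeroSpan_le_ker h)
  obtain ⟨u, huS, hu⟩ : ∃ u ∈ S, u ∉ zeroSpan S f ⊔ Submodule.span ℝ {x} := by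
    by_contra! h
    have hspan : zeroSpan S f ⊔ Submodule.span ℝ {x} = Submodule.span ℝ S :=
      le_antisymm (sup_le zeroSpan_le_span (by simpa using hx)) (Submodule.span_le.2 h)
    exact hfacet ⟨hf, by rw [← hspan, Submodule.finrank_sup_span_singleton hxW]⟩
  obtain ⟨g, hgu, hg⟩ := Submodule.exists_le_ker_of_notMem hu
  have hgW : ∀ s ∈ S, f s = 0 → g s = 0 := fun s hs h =>
    hg (Submodule.mem_sup_left (Submodule.subset_span ⟨hs, h⟩))
  have hgx : g x = 0 := hg (Submodule.mem_sup_right (Submodule.mem_span_singleton_self x))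
  rcases lt_or_gt_of_ne hgu with h | h
  · exact ⟨g, hgW, hgx, u, huS, h⟩
  · exact ⟨-g, by simpa using hgW, by simpa using hgx, u, huS, by simpa using h⟩

theorem exists_zeroSpan_lt (hS : S.Finite) (hx : x ∈ Submodule.span ℝ S) (hf : ∀ s ∈ S, 0 ≤ f s)
    (hfx : f x < 0) (hfacet : ¬ IsFacetForm S f) :
    ∃ f' : E →ₗ[ℝ] ℝ, (∀ s ∈ S, 0 ≤ f' s) ∧ f' x < 0 ∧ zeroSpan S f < zeroSpan S f' := by
  obtain ⟨g, hgW, hgx, s₀, hs₀, hgs₀⟩ := exists_form_vanishing_on_zeroSpan hx hf hfx hfacet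
  -- Tilt `f` in the direction `g` until a further point of `S` becomes a zero.
  obtain ⟨u, ⟨huS, hgu⟩, hmin⟩ := Set.exists_min_image {s ∈ S | g s < 0} (fun s => f s / -g s)
    (hS.subset (Set.sep_subset _ _)) ⟨s₀, hs₀, hgs₀⟩
  set t := f u / -g u
  have ht : 0 ≤ t := div_nonneg (hf u huS) (neg_nonneg.2 hgu.le)
  have htu : f u + t * g u = 0 := by
    have : t * -g u = f u := div_mul_cancel₀ _ (neg_ne_zero.2 hgu.ne)
    linarith
  refine ⟨f + t • g, fun s hs => ?_, by simpa [hgx] using hfx, ?_⟩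
  · rcases le_or_gt 0 (g s) with hgs | hgs
    · exact add_nonneg (hf s hs) (mul_nonneg ht hgs)
    · have := (le_div_iff₀ (neg_pos.2 hgs)).1 (hmin s ⟨hs, hgs⟩)
      change 0 ≤ f s + t * g s
      linarith
  · have hker : zeroSpan S f ≤ LinearMap.ker g := Submodule.span_le.2 fun s hs => hgW s hs.1 hs.2
    refine (zeroSpan_mono fun s hs h => by simp [h, hgW s hs h]).lt_of_ne fun h => hgu.ne ?_
    have hu : u ∈ zeroSpan S (f + t • g) := Submodule.subset_span ⟨huS, htu⟩
    exact hker (h.symm ▸ hu)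

theorem exists_isFacetForm_neg (hS : S.Finite) (hx : x ∈ Submodule.span ℝ S)
    (hx' : x ∉ Submodule.span ℝ≥0 S) : ∃ f, IsFacetForm S f ∧ f x < 0 := by
  obtain ⟨f, hf, hfx⟩ := exists_nonneg_of_notMem_cone hS hx'
  induction hW : zeroSpan S f using WellFoundedGT.induction generalizing f with
  | _ W ih =>
    by_cases hfacet : IsFacetForm S f
    · exact ⟨f, hfacet, hfx⟩
    · obtain ⟨f', hf', hfx', hlt⟩ := exists_zeroSpan_lt hS hx hf hfx hfacet
      exact ih _ (hW ▸ hlt) f' hf' hfx' rfl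

theorem IsFacetForm.zeroSpan_sup_span_singleton (hf : IsFacetForm S f) {u : E} (hu : u ∈ S)
    (hfu : f u ≠ 0) : zeroSpan S f ⊔ Submodule.span ℝ {u} = Submodule.span ℝ S := by
  have hnotMem : u ∉ zeroSpan S f := fun h => hfu (zeroSpan_le_ker h)
  refine Submodule.eq_of_le_of_finrank_eq (sup_le zeroSpan_le_span ?_) ?_
  · simpa using Submodule.subset_span hu
  · rw [Submodule.finrank_sup_span_singleton hnotMem, hf.finrank_zeroSpan]

theorem IsFacetForm.exists_eq_mul (hf : IsFacetForm S f) (hg : IsFacetForm S g)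
    (h : ∀ s ∈ S, f s = 0 → g s = 0) :
    ∃ r : ℝ, 0 < r ∧ ∀ x ∈ Submodule.span ℝ S, g x = r * f x := by
  obtain ⟨u, hu, hfu⟩ := hf.exists_pos
  have heq : ∀ x ∈ Submodule.span ℝ S, g x = g u / f u * f x := by
    have hle : zeroSpan S f ⊔ Submodule.span ℝ {u} ≤ LinearMap.eqLocus g ((g u / f u) • f) := by
      refine sup_le (Submodule.span_le.2 fun s hs => ?_) (Submodule.span_le.2 ?_)
      · simp [h s hs.1 hs.2, hs.2]
      · simp [hfu.ne']
    rw [hf.zeroSpan_sup_span_singleton hu hfu.ne'] at hle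
    exact fun x hx => hle hx
  obtain ⟨w, hw, hgw⟩ := hg.exists_pos
  refine ⟨_, pos_of_mul_pos_left ?_ (hf.nonneg w hw), heq⟩
  rwa [← heq w (Submodule.subset_span hw)]

namespace IsFacetSystem

variable {g : ι → E →ₗ[ℝ] ℝ}

theorem mem_cone (hg : IsFacetSystem S g) (hS : S.Finite) (hx : x ∈ Submodule.span ℝ S)
    (hpos : ∀ i, 0 ≤ g i x) : x ∈ Submodule.span ℝ≥0 S := by
  by_contra hcon
  obtain ⟨f, hf, hfx⟩ := exists_isFacetForm_neg hS hx hcon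
  obtain ⟨i, hi, -⟩ := hg.existsUnique f hf
  obtain ⟨r, hr, heq⟩ := (hg.isFacetForm i).exists_eq_mul hf fun s hs => (hi s hs).2
  rw [heq x hx] at hfx
  exact hfx.not_ge (mul_nonneg hr.le (hpos i))

theorem eq_of_zeros_subset (hg : IsFacetSystem S g) {i j : ι}
    (h : ∀ s ∈ S, g i s = 0 → g j s = 0) : i = j := by
  obtain ⟨r, hr, heq⟩ := (hg.isFacetForm i).exists_eq_mul (hg.isFacetForm j) h
  refine (hg.existsUnique _ (hg.isFacetForm i)).unique (fun s _ => Iff.rfl) fun s hs => ?_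
  rw [heq s (Submodule.subset_span hs), mul_eq_zero_iff_left hr.ne']

theorem injOn_pi (hg : IsFacetSystem S g) (hS : S.Finite) {h : E →ₗ[ℝ] ℝ} (hh : ∀ s ∈ S, 0 < h s) :
    Set.InjOn (LinearMap.pi g) (Submodule.span ℝ S) := by
  intro x hx y hy hxy
  have hgi : ∀ i, g i x = g i y := fun i => congrFun hxy i
  have hcone := hg.mem_cone hS (sub_mem hx hy) fun i => by rw [map_sub, hgi, sub_self]
  have hcone' := hg.mem_cone hS (sub_mem hy hx) fun i => by rw [map_sub, hgi, sub_self]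
  rcases eq_zero_or_pos_of_mem_cone hh hcone with h0 | hpos
  · exact sub_eq_zero.1 h0
  · have := nonneg_of_mem_cone (fun s hs => (hh s hs).le) hcone'
    rw [map_sub] at hpos this
    linarith

end IsFacetSystem

end FinitelyGeneratedCones

section Homogenization

variable {W α : Type*} [AddCommGroup W] [Module ℝ W]

/-- The point at height one above `x`, on the ray of the cone over a polytope given by `x`. -/
def homogenize (x : W) : W × ℝ :=
  (x, 1)

theorem homogenize_mem_cone_of_mem_convexHull {V : Set W} {x : W} (hx : x ∈ convexHull ℝ V) :
    homogenize x ∈ Submodule.span ℝ≥0 (homogenize '' V) := by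
  have hconv : Convex ℝ (homogenize ⁻¹' (Submodule.span ℝ≥0 (homogenize '' V) : Set (W × ℝ))) := by
    intro x hx y hy a b ha hb hab
    have h : homogenize (a • x + b • y) =
        (⟨a, ha⟩ : ℝ≥0) • homogenize x + (⟨b, hb⟩ : ℝ≥0) • homogenize y :=
      Prod.ext rfl (by simp [homogenize, hab])
    rw [Set.mem_preimage, h]
    exact add_mem (Submodule.smul_mem _ _ hx) (Submodule.smul_mem _ _ hy)
  exact convexHull_min (Set.image_subset_iff.1 Submodule.subset_span) hconv hx

theorem span_homogenize_convexHull (V : Set W) :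
    Submodule.span ℝ (homogenize '' convexHull ℝ V) = Submodule.span ℝ (homogenize '' V) := by
  refine le_antisymm (Submodule.span_le.2 ?_)
    (Submodule.span_mono (Set.image_mono (subset_convexHull ℝ V)))
  rintro _ ⟨x, hx, rfl⟩
  exact Submodule.span_le_restrictScalars ℝ≥0 ℝ _ (homogenize_mem_cone_of_mem_convexHull hx)

theorem finrank_span_homogenize [FiniteDimensional ℝ W] {F : Set W} (hF : F.Nonempty) :
    Module.finrank ℝ (Submodule.span ℝ (homogenize '' F)) =
      Module.finrank ℝ (affineSpan ℝ F).direction + 1 := by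
  obtain ⟨p, hp⟩ := hF
  set D := (affineSpan ℝ F).direction.map (LinearMap.inl ℝ W ℝ)
  have hsub : ∀ x : W, homogenize x - homogenize p = LinearMap.inl ℝ W ℝ (x - p) := fun x => by
    simp [homogenize]
  have hspan : Submodule.span ℝ (homogenize '' F) = D ⊔ Submodule.span ℝ {homogenize p} := by
    refine le_antisymm (Submodule.span_le.2 ?_) (sup_le ?_ ?_)
    · rintro _ ⟨x, hx, rfl⟩
      rw [← sub_add_cancel (homogenize x) (homogenize p), hsub]
      exact Submodule.add_mem_sup (Submodule.mem_map_of_mem (AffineSubspace.vsub_mem_direction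
        (subset_affineSpan ℝ F hx) (subset_affineSpan ℝ F hp)))
        (Submodule.mem_span_singleton_self _)
    · rw [Submodule.map_le_iff_le_comap, direction_affineSpan,
        vectorSpan_eq_span_vsub_set_right ℝ hp, Submodule.span_le]
      rintro _ ⟨x, hx, rfl⟩
      change LinearMap.inl ℝ W ℝ (x - p) ∈ Submodule.span ℝ (homogenize '' F)
      rw [← hsub]
      exact sub_mem (Submodule.subset_span ⟨x, hx, rfl⟩) (Submodule.subset_span ⟨p, hp, rfl⟩)
    · exact (Submodule.span_singleton_le_iff_mem _ _).2 (Submodule.subset_span ⟨p, hp, rfl⟩)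
  have hnotMem : homogenize p ∉ D := by
    rintro ⟨x, -, hx⟩
    simpa [homogenize] using congrArg Prod.snd hx
  rw [hspan, Submodule.finrank_sup_span_singleton hnotMem,
    ← (Submodule.equivMapOfInjective _ LinearMap.inl_injective _).finrank_eq]

/-- The face of the polytope `convexHull ℝ V` cut out by `f`. -/
def faceOf (V : Set W) (f : W × ℝ →ₗ[ℝ] ℝ) : Set W :=
  {x ∈ convexHull ℝ V | f (homogenize x) = 0}

variable {V : Set W} {f g : W × ℝ →ₗ[ℝ] ℝ}

theorem span_homogenize_faceOf (hf : ∀ s ∈ homogenize '' V, 0 ≤ f s) :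
    Submodule.span ℝ (homogenize '' faceOf V f) = zeroSpan (homogenize '' V) f := by
  refine le_antisymm (Submodule.span_le.2 ?_) (Submodule.span_le.2 ?_)
  · rintro _ ⟨x, hx, rfl⟩
    exact (apply_eq_zero_iff_mem_zeroSpan hf (homogenize_mem_cone_of_mem_convexHull hx.1)).1 hx.2
  · rintro _ ⟨⟨v, hv, rfl⟩, h⟩
    exact Submodule.subset_span ⟨v, ⟨subset_convexHull ℝ V hv, h⟩, rfl⟩

theorem faceOf_eq_faceOf_iff (hf : ∀ s ∈ homogenize '' V, 0 ≤ f s)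
    (hg : ∀ s ∈ homogenize '' V, 0 ≤ g s) :
    faceOf V f = faceOf V g ↔ ∀ s ∈ homogenize '' V, f s = 0 ↔ g s = 0 := by
  constructor
  · rintro h _ ⟨v, hv, rfl⟩
    have hv' := subset_convexHull ℝ V hv
    simpa [faceOf, hv'] using Set.ext_iff.1 h v
  · intro h
    have hspan : zeroSpan (homogenize '' V) f = zeroSpan (homogenize '' V) g :=
      le_antisymm (zeroSpan_mono fun s hs => (h s hs).1) (zeroSpan_mono fun s hs => (h s hs).2)
    ext x
    refine and_congr_right fun hx => ?_
    have hx' := homogenize_mem_cone_of_mem_convexHull hx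
    rw [apply_eq_zero_iff_mem_zeroSpan hf hx', apply_eq_zero_iff_mem_zeroSpan hg hx', hspan]

variable {V : Set (α → ℝ)} {f : (α → ℝ) × ℝ →ₗ[ℝ] ℝ}

section Finite

variable [Finite α]

theorem isExposed_faceOf (hf : ∀ s ∈ homogenize '' V, 0 ≤ f s) :
    IsExposed ℝ (convexHull ℝ V) (faceOf V f) := by
  rintro ⟨p, hp, hfp⟩
  have hfP : ∀ x ∈ convexHull ℝ V, 0 ≤ f (homogenize x) := fun x hx =>
    nonneg_of_mem_cone hf (homogenize_mem_cone_of_mem_convexHull hx)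
  let l : StrongDual ℝ (α → ℝ) := -(f ∘ₗ LinearMap.inl ℝ _ ℝ).toContinuousLinearMap
  have hl : ∀ x, f (homogenize x) = f (0, 1) - l x := fun x => by
    have : homogenize x = (x, 0) + (0, 1) := by simp [homogenize]
    rw [this, map_add]
    simp [l, add_comm]
  refine ⟨l, Set.ext fun x => and_congr_right fun hx => ⟨fun h y hy => ?_, fun h => ?_⟩⟩
  · linarith [hl x, hl y, hfP y hy]
  · linarith [hl x, hl p, hfP x hx, h p hp]

theorem finrank_direction_faceOf_add_one (hf : ∀ s ∈ homogenize '' V, 0 ≤ f s)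
    (hne : (faceOf V f).Nonempty) :
    Module.finrank ℝ (affineSpan ℝ (faceOf V f)).direction + 1 =
      Module.finrank ℝ (zeroSpan (homogenize '' V) f) := by
  rw [← finrank_span_homogenize hne, span_homogenize_faceOf hf]

theorem finrank_span_homogenize_eq_dim_add_one (hV : V.Nonempty) :
    Module.finrank ℝ (Submodule.span ℝ (homogenize '' V)) =
      Module.finrank ℝ (affineSpan ℝ (convexHull ℝ V)).direction + 1 := by
  rw [← finrank_span_homogenize hV.convexHull, span_homogenize_convexHull]

end Finite

variable [Fintype α]

theorem IsFacetForm.isFacet_faceOf (hf : IsFacetForm (homogenize '' V) f)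
    (hdim : 0 < Module.finrank ℝ (affineSpan ℝ (convexHull ℝ V)).direction) :
    IsFacet (convexHull ℝ V) (faceOf V f) := by
  have hV : V.Nonempty := by
    obtain ⟨_, ⟨v, hv, -⟩, -⟩ := hf.exists_pos
    exact ⟨v, hv⟩
  have hrank := hf.finrank_zeroSpan
  rw [finrank_span_homogenize_eq_dim_add_one hV] at hrank
  have hne : (faceOf V f).Nonempty := by
    by_contra h
    rw [← span_homogenize_faceOf hf.nonneg, Set.not_nonempty_iff_eq_empty.1 h, Set.image_empty,
      Submodule.span_empty, finrank_bot] at hrank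
    omega
  refine ⟨isExposed_faceOf hf.nonneg, hne, ?_⟩
  rw [finrank_direction_faceOf_add_one hf.nonneg hne]
  omega

theorem IsFacet.exists_isFacetForm {F : Set (α → ℝ)} (hF : IsFacet (convexHull ℝ V) F) :
    ∃ f, IsFacetForm (homogenize '' V) f ∧ F = faceOf V f := by
  obtain ⟨hexp, hne, hrank⟩ := hF
  obtain ⟨l, hl⟩ := hexp hne
  obtain ⟨p, hp⟩ := hne
  obtain ⟨hpP, hpmax⟩ := hl.subset hp
  let f : (α → ℝ) × ℝ →ₗ[ℝ] ℝ := l p • LinearMap.snd ℝ _ ℝ - l.toLinearMap ∘ₗ LinearMap.fst ℝ _ ℝ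
  have hfx : ∀ x, f (homogenize x) = l p - l x := fun x => by simp [f, homogenize]
  have hnonneg : ∀ s ∈ homogenize '' V, 0 ≤ f s := Set.forall_mem_image.2 fun v hv => by
    rw [hfx]
    exact sub_nonneg.2 (hpmax v (subset_convexHull ℝ V hv))
  have hFf : F = faceOf V f := by
    rw [hl]
    refine Set.ext fun x => and_congr_right fun hx => ?_
    rw [hfx, sub_eq_zero]
    exact ⟨fun h => (h p hpP).antisymm (hpmax x hx), fun h y hy => h ▸ hpmax y hy⟩
  refine ⟨f, ⟨hnonneg, ?_⟩, hFf⟩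
  rw [finrank_span_homogenize_eq_dim_add_one (convexHull_nonempty_iff.1 ⟨p, hpP⟩), ← hrank,
    ← finrank_direction_faceOf_add_one hnonneg (hFf ▸ ⟨p, hp⟩), hFf]

theorem exists_isFacetSystem (hfacet : ∃ F, IsFacet (convexHull ℝ V) F) :
    ∃ g : {F // IsFacet (convexHull ℝ V) F} → (α → ℝ) × ℝ →ₗ[ℝ] ℝ,
      IsFacetSystem (homogenize '' V) g := by
  choose g hg hface using fun F : {F // IsFacet (convexHull ℝ V) F} => F.2.exists_isFacetForm
  have hdim : 0 < Module.finrank ℝ (affineSpan ℝ (convexHull ℝ V)).direction := by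
    obtain ⟨F, -, -, hF⟩ := hfacet
    omega
  refine ⟨g, hg, fun f hf => ?_⟩
  have hiff : ∀ F, (∀ s ∈ homogenize '' V, f s = 0 ↔ g F s = 0) ↔ faceOf V f = F := fun F => by
    rw [← faceOf_eq_faceOf_iff hf.nonneg (hg F).nonneg, ← hface F]
  exact ⟨⟨_, hf.isFacet_faceOf hdim⟩, (hiff _).2 rfl, fun F hF => Subtype.ext ((hiff F).1 hF).symm⟩

end Homogenization

section BalancedFacetSystems

variable {E ι : Type*} [AddCommGroup E] [Module ℝ E] {S : Set E} {x : E}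

theorem exists_zeros_subset_of_mem_cone {g : ι → E →ₗ[ℝ] ℝ} (hg : ∀ i, ∀ s ∈ S, 0 ≤ g i s)
    (hx : x ∈ Submodule.span ℝ≥0 S) (hx0 : x ≠ 0) : ∃ s ∈ S, ∀ i, g i x = 0 → g i s = 0 := by
  induction hx using Submodule.span_induction with
  | mem s hs => exact ⟨s, hs, fun _ => id⟩
  | zero => exact absurd rfl hx0
  | add y z hy hz ihy ihz =>
    rcases eq_or_ne y 0 with rfl | hy0
    · rw [zero_add] at hx0 ⊢
      exact ihz hx0
    · obtain ⟨s, hs, h⟩ := ihy hy0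
      refine ⟨s, hs, fun i hi => h i ?_⟩
      rw [map_add, add_eq_zero_iff_of_nonneg (nonneg_of_mem_cone (hg i) hy)
        (nonneg_of_mem_cone (hg i) hz)] at hi
      exact hi.1
  | smul c y _ ih =>
    obtain ⟨s, hs, h⟩ := ih (right_ne_zero_of_smul hx0)
    refine ⟨s, hs, fun i hi => h i ?_⟩
    rw [NNReal.smul_def, map_smul] at hi
    exact (smul_eq_zero.1 hi).resolve_left (NNReal.coe_ne_zero.2 (left_ne_zero_of_smul hx0))

theorem exists_ne_zero_eq_ker {W : Type*} [AddCommGroup W] [Module ℝ W] [FiniteDimensional ℝ W]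
    {U : Submodule ℝ W} (hU : Module.finrank ℝ U + 1 = Module.finrank ℝ W) :
    ∃ f : Module.Dual ℝ W, f ≠ 0 ∧ U = LinearMap.ker f := by
  obtain ⟨f, hf, hle⟩ := U.exists_le_ker_of_lt_top (lt_top_iff_ne_top.2 fun h => by
    rw [h, finrank_top] at hU
    omega)
  refine ⟨f, hf, Submodule.eq_of_le_of_finrank_eq hle ?_⟩
  have := Module.Dual.finrank_ker_add_one_of_ne_zero hf
  omega

open Filter Topology in
theorem IsFacetSystem.exists_pos_sub_smul_mem_cone [FiniteDimensional ℝ E] [Finite ι]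
    {g : ι → E →ₗ[ℝ] ℝ} (hg : IsFacetSystem S g) (hS : S.Finite) {y : E}
    (hx : x ∈ Submodule.span ℝ≥0 S) (hy : y ∈ Submodule.span ℝ S)
    (h : ∀ i, g i x = 0 → g i y = 0) :
    ∃ ε : ℝ, 0 < ε ∧ x - ε • y ∈ Submodule.span ℝ≥0 S := by
  have hsmall : ∀ᶠ ε in 𝓝[>] (0 : ℝ), ∀ i, ε * g i y ≤ g i x := by
    refine eventually_all.2 fun i => ?_
    rcases (nonneg_of_mem_cone (hg.isFacetForm i).nonneg hx).eq_or_lt with hi | hi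
    · simp [← hi, h i hi.symm]
    · have hlim : Tendsto (fun ε : ℝ => ε * g i y) (𝓝 0) (𝓝 0) := by
        simpa using (continuous_mul_const (g i y)).tendsto 0
      exact (hlim.mono_left nhdsWithin_le_nhds).eventually_le_const hi
  obtain ⟨ε, hε, hpos⟩ := (hsmall.and self_mem_nhdsWithin).exists
  refine ⟨ε, hpos, hg.mem_cone hS (sub_mem ?_ (Submodule.smul_mem _ _ hy)) fun i => ?_⟩
  · exact Submodule.span_le_restrictScalars ℝ≥0 ℝ _ hx
  · simpa using hε i

variable [Fintype ι]

/-- A facet system whose values on the span of `S` are subject to a single linear relation, which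
the signs `σ` express. -/
structure IsBalancedFacetSystem (S : Set E) (g : ι → E →ₗ[ℝ] ℝ) (σ : ι → SignType) : Prop
    extends IsFacetSystem S g where
  map_span : (Submodule.span ℝ S).map (LinearMap.pi g) = LinearMap.ker (balance ℝ σ)
  sign_ne_zero : σ ≠ 0

namespace IsBalancedFacetSystem

variable {g : ι → E →ₗ[ℝ] ℝ} {σ : ι → SignType}

theorem neg (h : IsBalancedFacetSystem S g σ) : IsBalancedFacetSystem S g (-σ) where
  toIsFacetSystem := h.toIsFacetSystem
  map_span := by rw [h.map_span, balance_neg, LinearMap.ker_neg]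
  sign_ne_zero := by simpa [funext_iff] using h.sign_ne_zero

theorem balance_eq_zero (h : IsBalancedFacetSystem S g σ) (hx : x ∈ Submodule.span ℝ S) :
    balance ℝ σ (LinearMap.pi g x) = 0 :=
  h.map_span.le ⟨x, hx, rfl⟩

variable [FiniteDimensional ℝ E]

theorem nontrivial_sign_eq_one (h : IsBalancedFacetSystem S g σ) {j : ι} (hj : σ j = -1) :
    Nontrivial {i // σ i = 1} := by
  have hpos : ∀ s ∈ S, g j s ≠ 0 → ∃ a, σ a = 1 ∧ g a s ≠ 0 := fun s hs hjs =>
    exists_sign_eq_one_of_balance_eq_zero (fun i => (h.isFacetForm i).nonneg s hs)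
      (h.balance_eq_zero (Submodule.subset_span hs)) hj hjs
  obtain ⟨s, hs, hjs⟩ := (h.isFacetForm j).exists_pos
  obtain ⟨a, ha, -⟩ := hpos s hs hjs.ne'
  obtain ⟨s', hs', has', hjs'⟩ : ∃ s ∈ S, g a s = 0 ∧ g j s ≠ 0 := by
    by_contra! hzeros
    have haj := h.eq_of_zeros_subset hzeros
    simp [← haj, ha] at hj
  obtain ⟨a', ha', ha's'⟩ := hpos s' hs' hjs'
  refine ⟨⟨a, ha⟩, ⟨a', ha'⟩, fun haa' => ha's' ?_⟩
  rwa [← Subtype.mk.inj haa']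

theorem nontrivial_sign_eq_neg_one (h : IsBalancedFacetSystem S g σ) {j : ι} (hj : σ j = 1) :
    Nontrivial {i // σ i = -1} := by
  simpa [neg_eq_iff_eq_neg] using h.neg.nontrivial_sign_eq_one (j := j) (by simpa using hj)

theorem nontrivial_signs (h : IsBalancedFacetSystem S g σ) :
    Nontrivial {i // σ i = 1} ∧ Nontrivial {i // σ i = -1} := by
  obtain ⟨j, hj⟩ := Function.ne_iff.1 h.sign_ne_zero
  rcases SignType.trichotomy (σ j) with hj' | hj' | hj'
  · have hpos := h.nontrivial_sign_eq_one hj'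
    exact ⟨hpos, h.nontrivial_sign_eq_neg_one (Classical.arbitrary {i // σ i = 1}).2⟩
  · exact absurd hj' hj
  · have hneg := h.nontrivial_sign_eq_neg_one hj'
    exact ⟨h.nontrivial_sign_eq_one (Classical.arbitrary {i // σ i = -1}).2, hneg⟩

theorem exists_apply_eq_smul [DecidableEq ι] (h : IsBalancedFacetSystem S g σ) (hS : S.Finite)
    {f : E →ₗ[ℝ] ℝ} (hf : ∀ s ∈ S, 0 < f s) {γ : ι → ℕ} (hγ : γ ∈ balancedGens σ) :
    ∃ s ∈ S, ∃ t : ℝ, 0 < t ∧ LinearMap.pi g s = t • natCastVec ℝ γ := by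
  obtain ⟨x, hx, hxγ⟩ := h.map_span.ge (balance_natCastVec_of_mem_balancedGens ℝ hγ)
  have hgx : ∀ i, g i x = γ i := congrFun hxγ
  have hx0 : x ≠ 0 := by
    rintro rfl
    refine ne_zero_of_mem_balancedGens hγ (funext fun i => ?_)
    simpa using (hgx i).symm
  have hcone := h.mem_cone hS hx fun i => (hgx i).symm ▸ Nat.cast_nonneg _
  obtain ⟨s, hs, hzeros⟩ := exists_zeros_subset_of_mem_cone
    (fun i => (h.isFacetForm i).nonneg) hcone hx0
  have hsS := Submodule.subset_span (R := ℝ) hs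
  obtain ⟨t, ht⟩ := exists_eq_smul_of_mem_balancedGens hγ (h.balance_eq_zero hsS)
    fun i hi => hzeros i (by rw [hgx, hi, Nat.cast_zero])
  obtain ⟨i, hi⟩ : ∃ i, g i s ≠ 0 := by
    by_contra! hs0
    have := h.injOn_pi hS hf hsS (zero_mem _) (funext fun i => by simpa using hs0 i)
    exact (hf s hs).ne' (by rw [this, map_zero])
  have hpos : 0 < t * γ i := by
    have := congrFun ht i
    exact (((h.isFacetForm i).nonneg s hs).lt_of_ne' hi).trans_eq this
  exact ⟨s, hs, t, pos_of_mul_pos_left hpos (Nat.cast_nonneg _), ht⟩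

end IsBalancedFacetSystem

theorem exists_pos_mul_balance_eq (f : Module.Dual ℝ (ι → ℝ)) :
    ∃ r : ι → ℝ, (∀ i, 0 < r i) ∧ ∃ σ : ι → SignType, ∀ y, f y = balance ℝ σ (r * y) := by
  classical
  let c : ι → ℝ := fun i => f (Pi.single i 1)
  refine ⟨fun i => if c i = 0 then 1 else |c i|, fun i => ?_, fun i => SignType.sign (c i),
    fun y => ?_⟩
  · dsimp only
    split_ifs with h
    exacts [one_pos, abs_pos.2 h]
  · have hc : ∀ i, c i = SignType.sign (c i) * if c i = 0 then 1 else |c i| := fun i => by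
      split_ifs with h
      · simp [h]
      · rw [sign_mul_abs]
    rw [LinearMap.pi_apply_eq_sum_univ f y, balance_apply]
    refine Finset.sum_congr rfl fun i _ => ?_
    rw [smul_eq_mul, Pi.mul_apply, ← mul_assoc, ← hc, mul_comm]
    congr 2
    ext j
    simp [Pi.single_apply, eq_comm]

theorem IsFacetSystem.exists_isBalancedFacetSystem [FiniteDimensional ℝ E]
    {g : ι → E →ₗ[ℝ] ℝ} (hg : IsFacetSystem S g) (hS : S.Finite) {f : E →ₗ[ℝ] ℝ}
    (hf : ∀ s ∈ S, 0 < f s)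
    (hcard : Module.finrank ℝ (Submodule.span ℝ S) + 1 = Fintype.card ι) :
    ∃ r : ι → ℝ, ∃ σ, IsBalancedFacetSystem S (fun i => r i • g i) σ := by
  have hrank : Module.finrank ℝ ((Submodule.span ℝ S).map (LinearMap.pi g)) =
      Module.finrank ℝ (Submodule.span ℝ S) :=
    (LinearEquiv.ofBijective ((LinearMap.pi g).submoduleMap _)
      ⟨fun x y h => Subtype.ext (hg.injOn_pi hS hf x.2 y.2 (congrArg Subtype.val h)),
        (LinearMap.pi g).submoduleMap_surjective _⟩).finrank_eq.symm
  obtain ⟨F, hF, hker⟩ := exists_ne_zero_eq_ker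
    (U := (Submodule.span ℝ S).map (LinearMap.pi g)) (by simpa [hrank] using hcard)
  obtain ⟨r, hr, σ, hσ⟩ := exists_pos_mul_balance_eq F
  refine ⟨r, σ, hg.smul hr, ?_, ?_⟩
  · ext y
    constructor
    · rintro ⟨x, hx, rfl⟩
      exact (hσ _).symm.trans (hker.le ⟨x, hx, rfl⟩)
    · intro hy
      have hry : r * (r⁻¹ * y) = y := funext fun i => mul_inv_cancel_left₀ (hr i).ne' _
      obtain ⟨x, hx, hxy⟩ := hker.ge (x := r⁻¹ * y) (by rwa [LinearMap.mem_ker, hσ, hry])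
      exact ⟨x, hx, by rw [← hry, ← hxy]; rfl⟩
  · rintro rfl
    exact hF (LinearMap.ext fun y => by simp [hσ, balance_apply])

end BalancedFacetSystems

section ZeroOneCones

variable {α ι : Type*} {V : Set (α → ℝ)} {g : ι → (α → ℝ) × ℝ →ₗ[ℝ] ℝ} {σ : ι → SignType}

theorem coeff_eq_of_homogenize_add_eq {p q r s : α → ℝ} (hp : p ∈ zeroOneVectors α)
    (hq : q ∈ zeroOneVectors α) (hr : r ∈ zeroOneVectors α) (hs : s ∈ zeroOneVectors α)
    (hpr : p ≠ r) {a b c d : ℝ} (ha : 0 < a) (hb : 0 < b) (hc : 0 < c) (hd : 0 < d)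
    (h : a • homogenize p + b • homogenize q = c • homogenize r + d • homogenize s) : a = d := by
  obtain ⟨i, hi⟩ := Function.ne_iff.1 hpr
  have hcoord : a * p i + b * q i = c * r i + d * s i := by
    simpa [homogenize] using congrFun (congrArg Prod.fst h) i
  have htotal : a + b = c + d := by simpa [homogenize] using congrArg Prod.snd h
  rcases mem_zeroOneVectors.1 hp i with h₁ | h₁ <;>
    rcases mem_zeroOneVectors.1 hq i with h₂ | h₂ <;>
    rcases mem_zeroOneVectors.1 hr i with h₃ | h₃ <;>
    rcases mem_zeroOneVectors.1 hs i with h₄ | h₄ <;>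
    rw [h₁, h₃] at hi <;> rw [h₁, h₂, h₃, h₄] at hcoord <;>
    first | exact absurd rfl hi | linarith

theorem snd_pos_of_mem_image_homogenize : ∀ s ∈ homogenize '' V, 0 < LinearMap.snd ℝ _ ℝ s :=
  Set.forall_mem_image.2 fun _ _ => one_pos

/-- In the coordinates `g`, the homogenization of some point of `V` lies at distance `t` (in units
of `γ`) on the ray through `γ`. -/
def HasRayScale (g : ι → (α → ℝ) × ℝ →ₗ[ℝ] ℝ) (V : Set (α → ℝ)) (γ : ι → ℕ) (t : ℝ) : Prop :=
  0 < t ∧ ∃ v ∈ V, LinearMap.pi g (homogenize v) = t • natCastVec ℝ γ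

theorem HasRayScale.rescale {γ : ι → ℕ} {t : ℝ} (h : HasRayScale g V γ t) {r : ι → ℝ}
    (hr : ∀ i, γ i ≠ 0 → r i = t⁻¹) : HasRayScale (fun i => r i • g i) V γ 1 := by
  obtain ⟨ht, v, hv, hvγ⟩ := h
  refine ⟨one_pos, v, hv, funext fun i => ?_⟩
  have hi : g i (homogenize v) = t * γ i := congrFun hvγ i
  by_cases hγ : γ i = 0
  · simp [hi, hγ]
  · simp [hi, hr i hγ, ht.ne']

variable {v w : α → ℝ}

/-- A linear form whose value at the homogenization of a zero-one vector is its squared distance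
from the zero-one vector `v`. -/
def vertexForm [Fintype α] (v : α → ℝ) : (α → ℝ) × ℝ →ₗ[ℝ] ℝ :=
  ∑ i, ((1 - 2 * v i) • LinearMap.proj i ∘ₗ LinearMap.fst ℝ _ ℝ + v i • LinearMap.snd ℝ _ ℝ)

theorem vertexForm_homogenize [Fintype α] (hv : v ∈ zeroOneVectors α)
    (hw : w ∈ zeroOneVectors α) : vertexForm v (homogenize w) = ∑ i, (w i - v i) ^ 2 := by
  simp only [vertexForm, homogenize, LinearMap.sum_apply]
  refine Finset.sum_congr rfl fun i _ => ?_
  rcases mem_zeroOneVectors.1 hv i with hi | hi <;>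
    rcases mem_zeroOneVectors.1 hw i with hi' | hi' <;>
    norm_num [hi, hi']

variable [Finite α]

theorem eq_of_homogenize_sub_smul_mem_cone (hV : V ⊆ zeroOneVectors α) (hv : v ∈ V) (hw : w ∈ V)
    {ε : ℝ} (hε : 0 < ε)
    (h : homogenize v - ε • homogenize w ∈ Submodule.span ℝ≥0 (homogenize '' V)) : w = v := by
  cases nonempty_fintype α
  have hpos : ∀ s ∈ homogenize '' V, 0 ≤ vertexForm v s := Set.forall_mem_image.2 fun u hu => by
    rw [vertexForm_homogenize (hV hv) (hV hu)]
    positivity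
  have hle := nonneg_of_mem_cone hpos h
  rw [map_sub, map_smul, vertexForm_homogenize (hV hv) (hV hv),
    vertexForm_homogenize (hV hv) (hV hw)] at hle
  have hsum : ∑ i, (w i - v i) ^ 2 = 0 := by
    have hsq : 0 ≤ ∑ i, (w i - v i) ^ 2 := by positivity
    have hle' : ε * ∑ i, (w i - v i) ^ 2 ≤ 0 := by simpa using hle
    exact hsq.antisymm' (nonpos_of_mul_nonpos_right hle' hε)
  rw [Finset.sum_eq_zero_iff_of_nonneg fun i _ => sq_nonneg _] at hsum
  exact funext fun i =>
    sub_eq_zero.1 (pow_eq_zero_iff two_ne_zero |>.1 (hsum i (Finset.mem_univ i)))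

variable [DecidableEq ι]

namespace IsFacetSystem

theorem rayScale_eq_of_add_eq (hg : IsFacetSystem (homogenize '' V) g) (hfin : V.Finite)
    (hV : V ⊆ zeroOneVectors α) {γ₁ γ₂ γ₃ γ₄ : ι → ℕ} {t₁ t₂ t₃ t₄ : ℝ}
    (h₁ : HasRayScale g V γ₁ t₁) (h₂ : HasRayScale g V γ₂ t₂) (h₃ : HasRayScale g V γ₃ t₃)
    (h₄ : HasRayScale g V γ₄ t₄) (hadd : γ₁ + γ₂ = γ₃ + γ₄) (hγ₁ : γ₁ ∈ balancedGens σ)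
    (hγ₃ : γ₃ ∈ balancedGens σ) (hne : γ₁ ≠ γ₃) : t₁ = t₄ := by
  obtain ⟨ht₁, p, hp, hpγ⟩ := h₁
  obtain ⟨ht₂, q, hq, hqγ⟩ := h₂
  obtain ⟨ht₃, r, hr, hrγ⟩ := h₃
  obtain ⟨ht₄, s, hs, hsγ⟩ := h₄
  have hmem : ∀ {v} (c : ℝ), v ∈ V → c • homogenize v ∈ Submodule.span ℝ (homogenize '' V) :=
    fun c hv => Submodule.smul_mem _ c (Submodule.subset_span ⟨_, hv, rfl⟩)
  have hrel : t₁⁻¹ • homogenize p + t₂⁻¹ • homogenize q =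
      t₃⁻¹ • homogenize r + t₄⁻¹ • homogenize s := by
    refine hg.injOn_pi (hfin.image _) snd_pos_of_mem_image_homogenize
      (add_mem (hmem _ hp) (hmem _ hq)) (add_mem (hmem _ hr) (hmem _ hs)) ?_
    simp only [map_add, map_smul, hpγ, hqγ, hrγ, hsγ, inv_smul_smul₀ ht₁.ne',
      inv_smul_smul₀ ht₂.ne', inv_smul_smul₀ ht₃.ne', inv_smul_smul₀ ht₄.ne']
    rw [← map_add, hadd, map_add]
  have hpr : p ≠ r := by
    rintro rfl
    exact hne (eq_of_smul_natCastVec_eq hγ₁ hγ₃ ht₁.ne' ht₃.ne' (hpγ.symm.trans hrγ))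
  exact inv_injective (coeff_eq_of_homogenize_add_eq (hV hp) (hV hq) (hV hr) (hV hs) hpr
    (inv_pos.2 ht₁) (inv_pos.2 ht₂) (inv_pos.2 ht₃) (inv_pos.2 ht₄) hrel)

variable [Fintype ι]

theorem isBalancedChart (hg : IsFacetSystem (homogenize '' V) g) (hfin : V.Finite)
    (hV : V ⊆ zeroOneVectors α) (hb : ∀ v ∈ V, balance ℝ σ (LinearMap.pi g (homogenize v)) = 0)
    (hgens : ∀ γ ∈ balancedGens σ, HasRayScale g V γ 1) :
    IsBalancedChart (LinearMap.pi g) (homogenize '' V) σ := by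
  have hinj := hg.injOn_pi (hfin.image _) snd_pos_of_mem_image_homogenize
  replace hgens : ∀ γ ∈ balancedGens σ,
      ∃ v ∈ V, LinearMap.pi g (homogenize v) = natCastVec ℝ γ := fun γ hγ => by
    simpa using (hgens γ hγ).2
  refine ⟨hinj, Set.Subset.antisymm ?_ ?_⟩
  · rintro _ ⟨_, ⟨v, hv, rfl⟩, rfl⟩
    have hvS : homogenize v ∈ homogenize '' V := ⟨v, hv, rfl⟩
    have hne : LinearMap.pi g (homogenize v) ≠ 0 := fun h => by
      have := hinj (Submodule.subset_span hvS) (zero_mem _) (h.trans (map_zero _).symm)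
      simpa [homogenize] using congrArg Prod.snd this
    obtain ⟨γ, hγ, hzeros⟩ := exists_balancedGens_support_subset
      (fun i => (hg.isFacetForm i).nonneg _ hvS) hne (hb v hv)
    obtain ⟨w, hw, hwγ⟩ := hgens γ hγ
    -- A vertex of the cube is not a proper convex combination, so splitting off `w` from `v`
    -- leaves only `w = v`.
    obtain ⟨ε, hε, hcone⟩ := hg.exists_pos_sub_smul_mem_cone (hfin.image _)
      (Submodule.subset_span hvS) (Submodule.subset_span ⟨w, hw, rfl⟩) fun i hi => by
        simpa [hzeros i hi] using congrFun hwγ i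
    rw [← eq_of_homogenize_sub_smul_mem_cone hV hv hw hε hcone]
    exact ⟨γ, hγ, hwγ.symm⟩
  · rintro _ ⟨γ, hγ, rfl⟩
    obtain ⟨v, hv, hvγ⟩ := hgens γ hγ
    exact ⟨_, ⟨v, hv, rfl⟩, hvγ⟩

end IsFacetSystem

namespace IsBalancedFacetSystem

variable [Fintype ι]

theorem exists_hasRayScale (h : IsBalancedFacetSystem (homogenize '' V) g σ) (hfin : V.Finite)
    {γ : ι → ℕ} (hγ : γ ∈ balancedGens σ) : ∃ t, HasRayScale g V γ t := by
  obtain ⟨_, ⟨v, hv, rfl⟩, t, ht, hvγ⟩ :=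
    h.exists_apply_eq_smul (hfin.image _) snd_pos_of_mem_image_homogenize hγ
  exact ⟨t, ht, v, hv, hvγ⟩

theorem exists_uniform_hasRayScale (h : IsBalancedFacetSystem (homogenize '' V) g σ)
    (hfin : V.Finite) (hV : V ⊆ zeroOneVectors α) :
    ∃ t, ∀ a b, σ a = 1 → σ b = -1 → HasRayScale g V (Pi.single a 1 + Pi.single b 1) t := by
  obtain ⟨_, _⟩ := h.nontrivial_signs
  have hgen : ∀ (a : {i // σ i = 1}) (b : {i // σ i = -1}),
      Pi.single a.1 1 + Pi.single b.1 1 ∈ balancedGens σ :=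
    fun a b => Or.inr ⟨a, b, a.2, b.2, rfl⟩
  choose t ht using fun a b => h.exists_hasRayScale hfin (hgen a b)
  have hrow : ∀ a a' b, t a b = t a' b := fun a a' b => by
    obtain ⟨b', hb'⟩ := exists_ne b
    refine h.rayScale_eq_of_add_eq hfin hV (ht a b) (ht a' b') (ht a b') (ht a' b) (by abel)
      (hgen a b) (hgen a b') fun heq => hb' ?_
    simpa [Pi.single_apply, Subtype.ext_iff] using congrFun (add_left_cancel heq) b'.1
  have hcol : ∀ a b b', t a b = t a b' := fun a b b' => by
    obtain ⟨a', ha'⟩ := exists_ne a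
    refine h.rayScale_eq_of_add_eq hfin hV (ht a b) (ht a' b') (ht a' b) (ht a b') (by abel)
      (hgen a b) (hgen a' b) fun heq => ha' ?_
    simpa [Pi.single_apply, Subtype.ext_iff] using congrFun (add_right_cancel heq) a'.1
  refine ⟨t (Classical.arbitrary _) (Classical.arbitrary _), fun a b ha hb => ?_⟩
  rw [hrow _ ⟨a, ha⟩, hcol _ _ ⟨b, hb⟩]
  exact ht ⟨a, ha⟩ ⟨b, hb⟩

theorem exists_rescaling (h : IsBalancedFacetSystem (homogenize '' V) g σ) (hfin : V.Finite)
    (hV : V ⊆ zeroOneVectors α) :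
    ∃ r : ι → ℝ, (∀ i, 0 < r i) ∧ (∃ c, ∀ i, σ i ≠ 0 → r i = c) ∧
      ∀ γ ∈ balancedGens σ, HasRayScale (fun i => r i • g i) V γ 1 := by
  obtain ⟨t, hpair⟩ := h.exists_uniform_hasRayScale hfin hV
  choose! u hsingle using fun z (hz : σ z = 0) =>
    h.exists_hasRayScale hfin (Or.inl ⟨z, hz, rfl⟩)
  have ht : 0 < t := by
    obtain ⟨⟨a, -⟩, ⟨b, -⟩⟩ := h.nontrivial_signs
    exact (hpair a b a.2 b.2).1
  refine ⟨fun i => if σ i = 0 then (u i)⁻¹ else t⁻¹, fun i => ?_, ⟨t⁻¹, fun i hi => if_neg hi⟩, ?_⟩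
  · dsimp only
    split_ifs with hi
    exacts [inv_pos.2 (hsingle i hi).1, inv_pos.2 ht]
  · rintro _ (⟨z, hz, rfl⟩ | ⟨a, b, ha, hb, rfl⟩)
    · refine (hsingle z hz).rescale fun i hi => ?_
      obtain rfl : i = z := by simpa [Pi.single_apply] using hi
      exact if_pos hz
    · refine (hpair a b ha hb).rescale fun i hi => if_neg ?_
      obtain rfl | rfl : i = a ∨ i = b := by
        by_contra! hab
        simp [hab] at hi
      exacts [by simp [ha], by simp [hb]]

theorem exists_isBalancedChart (h : IsBalancedFacetSystem (homogenize '' V) g σ)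
    (hfin : V.Finite) (hV : V ⊆ zeroOneVectors α) :
    ∃ φ, IsBalancedChart φ (homogenize '' V) σ := by
  obtain ⟨r, hr, ⟨c, hc⟩, hgens⟩ := h.exists_rescaling hfin hV
  refine ⟨_, (h.toIsFacetSystem.smul hr).isBalancedChart hfin hV (fun v hv => ?_) hgens⟩
  have hb := h.balance_eq_zero (Submodule.subset_span ⟨v, hv, rfl⟩)
  have hscale : balance ℝ σ (LinearMap.pi (fun i => r i • g i) (homogenize v)) =
      c * balance ℝ σ (LinearMap.pi g (homogenize v)) := by
    rw [balance_apply, balance_apply, Finset.mul_sum]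
    refine Finset.sum_congr rfl fun i _ => ?_
    by_cases hi : σ i = 0
    · simp [hi]
    · simp [hc i hi, mul_left_comm]
  rw [hscale, hb, mul_zero]

end IsBalancedFacetSystem

end ZeroOneCones

section RankOnePolytopes

universe u

variable {α ι : Type*}

theorem prodCast_image_latticeA_latticePts {V : Set (α → ℤ)}
    (hV : ∀ v ∈ V, ∀ i, v i = 0 ∨ v i = 1) :
    prodCast '' latticeA (latticePts (convexHull ℝ (intCast '' V))) =
      homogenize '' (intCast '' V) := by
  rw [latticePts_convexHull_of_zero_one hV, latticeA, Set.image_image, Set.image_image]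
  exact Set.image_congr fun v _ => Prod.ext rfl Int.cast_one

theorem exists_isBalancedChart_of_rank_eq_one {α : Type u} [Fintype α] {V : Set (α → ℝ)}
    (hfin : V.Finite) (hV : V ⊆ zeroOneVectors α)
    (hrank : {F | IsFacet (convexHull ℝ V) F}.ncard =
      Module.finrank ℝ (affineSpan ℝ (convexHull ℝ V)).direction + 2) :
    ∃ (ι : Type u) (_ : Fintype ι) (_ : DecidableEq ι) (σ : ι → SignType)
      (φ : (α → ℝ) × ℝ →ₗ[ℝ] ι → ℝ), IsBalancedChart φ (homogenize '' V) σ ∧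
        Nontrivial {i // σ i = 1} ∧ Nontrivial {i // σ i = -1} := by
  classical
  have hpos : 0 < {F | IsFacet (convexHull ℝ V) F}.ncard := by omega
  have : Fintype {F // IsFacet (convexHull ℝ V) F} := (Set.finite_of_ncard_pos hpos).fintype
  obtain ⟨F, hF⟩ := Set.nonempty_of_ncard_ne_zero hpos.ne'
  have hVne : V.Nonempty := convexHull_nonempty_iff.1 (hF.2.1.mono hF.1.subset)
  obtain ⟨g, hg⟩ := exists_isFacetSystem ⟨F, hF⟩
  obtain ⟨r, σ, h⟩ := hg.exists_isBalancedFacetSystem (hfin.image _)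
    snd_pos_of_mem_image_homogenize <| by
      rw [finrank_span_homogenize_eq_dim_add_one hVne, ← Nat.card_eq_fintype_card, add_assoc]
      exact hrank.symm
  obtain ⟨φ, hφ⟩ := h.exists_isBalancedChart hfin hV
  exact ⟨_, inferInstance, inferInstance, σ, φ, hφ, h.nontrivial_signs⟩

theorem IsBalancedChart.exists_addEquiv_prod_simplexProd [Finite ι] [DecidableEq ι]
    {L : Set (α → ℤ)} {σ : ι → SignType} {φ : (α → ℝ) × ℝ →ₗ[ℝ] ι → ℝ}
    (h : IsBalancedChart φ (prodCast '' latticeA L) σ) (hpos : Nontrivial {i // σ i = 1})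
    (hneg : Nontrivial {i // σ i = -1}) :
    ∃ k n m : ℕ, 0 < n ∧ 0 < m ∧ Nonempty (AddSubmonoid.closure (latticeA L) ≃+
      (Fin k →₀ ℕ) × AddSubmonoid.closure (latticeA (latticePts (simplexProd n m)))) := by
  cases nonempty_fintype ι
  obtain ⟨k, n, m, hn, hm, e, he, hsign⟩ := exists_equiv_segreSign hpos hneg
  obtain ⟨ψ⟩ := h.nonempty_closure_latticeA_addEquiv
  obtain ⟨ψ'⟩ := (isBalancedChart_simplexProd n m).nonempty_closure_latticeA_addEquiv
  refine ⟨k, n, m, hn, hm, ⟨(ψ.trans (balancedMonoidEquivProd e he)).trans ?_⟩⟩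
  rw [hsign]
  exact (AddEquiv.refl _).prodCongr ψ'.symm

end RankOnePolytopes

theorem stmt_10 (𝕜 : Type*) [Field 𝕜] (d e : ℕ)
    (V : Finset (Fin d → ℤ)) (hVne : V.Nonempty)
    (h01 : ∀ v ∈ V, ∀ i, v i = 0 ∨ v i = 1)
    (P : Set (Fin d → ℝ)) (hP : P = convexHull ℝ (intCast '' (V : Set (Fin d → ℤ))))
    (hdim : Module.finrank ℝ (affineSpan ℝ P).direction = e)
    (hfacets : {F : Set (Fin d → ℝ) | IsFacet P F}.ncard = e + 2) :
    IsNormalPolytope (latticePts P) ∧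
      ∃ n m l : ℕ, 0 < n ∧ 0 < m ∧ 0 < l ∧
        Nonempty (toricRing 𝕜 (latticePts P) ≃ₐ[𝕜]
          MvPolynomial (Fin (l - 1)) (toricRing 𝕜 (latticePts (simplexProd n m)))) := by
  subst hP hdim
  have hV : intCast '' (V : Set (Fin d → ℤ)) ⊆ zeroOneVectors (Fin d) :=
    Set.image_subset_iff.2 fun v hv => intCast_mem_zeroOneVectors (h01 v hv)
  obtain ⟨ι, _, _, σ, φ, hφ, hpos, hneg⟩ :=
    exists_isBalancedChart_of_rank_eq_one (V.finite_toSet.image _) hV hfacets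
  rw [← prodCast_image_latticeA_latticePts h01] at hφ
  obtain ⟨k, n, m, hn, hm, ⟨ψ⟩⟩ := hφ.exists_addEquiv_prod_simplexProd hpos hneg
  exact ⟨hφ.isNormalPolytope, n, m, k + 1, hn, hm, k.succ_pos,
    ⟨(AddMonoidAlgebra.domCongr 𝕜 𝕜 ψ).trans (AddMonoidAlgebra.curryAlgEquiv 𝕜)⟩⟩

end
end
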